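/- arXiv:1403.1473 — 3 statements merged into one kernel-verified Lean document; each statement's English description precedes it below -/
import Mathlib

section
/- For every integer N ≥ 2 and every convex potential W : {1,…,N} → ℝ, the fundamental gap of the path Schrödinger operator satisfies Γ(H_W(P_N)) = λ_2 − λ_1 ≥ 2(1 − cos(π/N)). -/
/-- The path Schrödinger operator `H_W(P_N)`: an `N × N` real symmetric matrix.
Vertex `i : Fin N` corresponds to the label `i + 1 ∈ {1, …, N}`. -/
noncomputable def pathH (N : ℕ) (W : ℕ → ℝ) : Matrix (Fin N) (Fin N) ℝ :=
  Matrix.of fun i j =>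
    if i = j then
      (if (i : ℕ) = 0 ∨ (i : ℕ) = N - 1 then (1 : ℝ) else 2) + W ((i : ℕ) + 1)
    else if (i : ℕ) + 1 = (j : ℕ) ∨ (j : ℕ) + 1 = (i : ℕ) then -1 else 0

/-- `μ` is an eigenvalue of the real matrix `A`. -/
def IsEigen {n : ℕ} (A : Matrix (Fin n) (Fin n) ℝ) (μ : ℝ) : Prop :=
  ∃ v : Fin n → ℝ, v ≠ 0 ∧ A.mulVec v = μ • v

/-- `l1 < l2` are the two smallest eigenvalues of `A`. -/
def TwoSmallest {n : ℕ} (A : Matrix (Fin n) (Fin n) ℝ) (l1 l2 : ℝ) : Prop :=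
  IsEigen A l1 ∧ IsEigen A l2 ∧ l1 < l2 ∧
    ∀ μ, IsEigen A μ → l1 ≤ μ ∧ (μ ≠ l1 → l2 ≤ μ)



/-- data of the logarithmic ratio of a ground state for a linear potential -/
structure RData (N : ℕ) (r : ℕ → ℝ) (al a : ℝ) : Prop where
  hN : 2 ≤ N
  ha : 0 ≤ a
  pos : ∀ i, i ≤ N → 0 < r i
  r0 : r 0 = 1
  rN : r N = 1
  hrec : ∀ i, i < N → r (i+1) + 1 / r i = al + a * (i+1)

namespace RData
variable {N : ℕ} {r : ℕ → ℝ} {al a : ℝ}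

theorem le_one (h : RData N r al a) : ∀ i, i ≤ N → r i ≤ 1 := by
  by_contra hcon
  push Not at hcon
  classical
  have hex : ∃ i, i ≤ N ∧ 1 < r i := hcon
  set i := Nat.find hex with hi
  obtain ⟨hiN, hri⟩ := Nat.find_spec hex
  rw [← hi] at hiN hri
  have hi0 : i ≠ 0 := by
    intro h0; rw [h0, h.r0] at hri; exact lt_irrefl _ hri
  obtain ⟨k, hk⟩ := Nat.exists_eq_succ_of_ne_zero hi0
  have hkm : ¬ (k ≤ N ∧ 1 < r k) := Nat.find_min hex (by omega)
  have hk1 : r k ≤ 1 := by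
    by_contra hh; exact hkm ⟨by omega, by linarith⟩
  have hkp := h.pos k (by omega)
  have e1 := h.hrec k (by omega)
  rw [hk] at hri
  have hinv : 1 ≤ 1 / r k := by rw [le_div_iff₀ hkp]; linarith
  have key : ∀ j, i ≤ j → j ≤ N → 1 < r j := by
    intro j hj
    induction j, hj using Nat.le_induction with
    | base => intro _; rw [hk]; exact hri
    | succ j hj ih =>
      intro hjN
      have hr := ih (by omega)
      have e2 := h.hrec j (by omega)
      have : 1 / r j < 1 := by rw [div_lt_one (by linarith)]; exact hr
      have hkj : (k:ℝ) + 1 ≤ j + 1 := by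
        have : k + 1 ≤ j + 1 := by omega
        exact_mod_cast this
      have := mul_le_mul_of_nonneg_left hkj h.ha
      linarith
  have := key N hiN le_rfl
  rw [h.rN] at this
  exact lt_irrefl _ this

theorem cbar (h : RData N r al a) : 2 ≤ al + a * (N+1) / 2 := by
  have key : ∀ n, n ≤ N → 2 * (n:ℝ) + r n - 1 ≤ n * al + a * (n * (n+1)) / 2 := by
    intro n
    induction n with
    | zero => intro _; simp [h.r0]
    | succ n ih =>
      intro hn
      have e := h.hrec n (by omega)
      have p := h.pos n (by omega)
      have h2 : 2 ≤ r n + 1 / r n := by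
        have : r n + 1 / r n - 2 = (r n - 1)^2 / r n := by field_simp; ring
        have : 0 ≤ (r n - 1)^2 / r n := by positivity
        linarith
      have := ih (by omega)
      push_cast
      nlinarith
  have := key N le_rfl
  rw [h.rN] at this
  have hN : (2:ℝ) ≤ N := by exact_mod_cast h.hN
  have : (N:ℝ) * 2 ≤ N * (al + a * (N+1) / 2) := by linarith
  exact le_of_mul_le_mul_left this (by linarith)

theorem root (h : RData N r al a) : ∃ x : ℝ, 0 < x ∧ x ≤ 1 ∧ x + 1 / x = al + a * (N+1) / 2 := by
  have hc := h.cbar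
  set c := al + a * (N+1) / 2 with hcdef
  have h4 : 0 ≤ c^2 - 4 := by nlinarith
  have hs := Real.sq_sqrt h4
  have hs0 := Real.sqrt_nonneg (c^2-4)
  set s := Real.sqrt (c^2-4)
  have hsc : s < c := by nlinarith
  refine ⟨(c - s)/2, by linarith, ?_, ?_⟩
  · nlinarith
  · have : c - s ≠ 0 := by linarith
    field_simp
    nlinarith

/-- reflection comparison -/
theorem refl_le (h : RData N r al a) : ∀ i, 2 * i ≤ N → r (N - i) ≤ r i := by
  by_contra hcon
  push Not at hcon
  classical
  have hex : ∃ i, 2 * i ≤ N ∧ r i < r (N - i) := hcon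
  set i := Nat.find hex with hi
  obtain ⟨hiN, hri⟩ := Nat.find_spec hex
  rw [← hi] at hiN hri
  have hi0 : i ≠ 0 := by
    intro h0; rw [h0] at hri; simp [h.r0, h.rN] at hri
  obtain ⟨k, hk⟩ := Nat.exists_eq_succ_of_ne_zero hi0
  have hkm : ¬ (2 * k ≤ N ∧ r k < r (N - k)) := Nat.find_min hex (by omega)
  have hk1 : r (N - k) ≤ r k := by
    by_contra hh; exact hkm ⟨by omega, by linarith⟩
  obtain ⟨xh, xp, x1, xc⟩ := h.root
  set c := al + a * (N+1) / 2 with hcdef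
  have hdec : ∀ s t : ℝ, 0 < s → s ≤ t → t ≤ 1 → t + 1/t ≤ s + 1/s := by
    intro s t hs hst ht
    have ht0 : 0 < t := by linarith
    have : s + 1/s - (t + 1/t) = (t - s) * (1 - s*t) / (s*t) := by field_simp; ring
    have h2 : 0 ≤ (t - s) * (1 - s*t) / (s*t) := by
      apply div_nonneg
      · apply mul_nonneg (by linarith); nlinarith
      · positivity
    linarith
  -- generic step facts
  have e1 : ∀ j, 2 * (j+1) ≤ N + 1 → r (j+1) + 1 / r j ≤ c ∧
      r (j+1) + 1 / r j + (r (N - j) + 1 / r (N - (j+1))) = 2 * c := by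
    intro j hj
    have a1 := h.hrec j (by omega)
    have a2 := h.hrec (N - (j+1)) (by omega)
    rw [show N - (j+1) + 1 = N - j by omega] at a2
    rw [Nat.cast_sub (by omega)] at a2
    push_cast at a2
    have hj' : 2 * ((j:ℝ) + 1) ≤ N + 1 := by exact_mod_cast hj
    have := mul_le_mul_of_nonneg_left hj' h.ha
    constructor
    · rw [a1, hcdef]; linarith
    · rw [a1, a2, hcdef]; ring
  by_cases hx : r i ≤ xh
  · have key : ∀ j, i ≤ j → 2 * j ≤ N + 1 → r j ≤ xh ∧ r j < r (N - j) := by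
      intro j hj
      induction j, hj using Nat.le_induction with
      | base => intro _; exact ⟨hx, hri⟩
      | succ j hj ih =>
        intro hjN
        obtain ⟨i1, i2⟩ := ih (by omega)
        obtain ⟨b1, b2⟩ := e1 j hjN
        have p1 := h.pos j (by omega)
        have p2 := h.pos (j+1) (by omega)
        have p3 := h.pos (N - (j+1)) (by omega)
        have o1 := h.le_one j (by omega)
        have hxx : 1 / xh ≤ 1 / r j := one_div_le_one_div_of_le p1 i1
        refine ⟨by linarith, ?_⟩
        have hcx : c ≤ r j + 1 / r j := by
          rw [← xc]; exact hdec _ _ p1 i1 x1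
        have hb : r j * (1 / r j) = 1 := by field_simp
        have hb1 : 1 ≤ 1 / r j := by rw [le_div_iff₀ p1]; linarith
        set b := 1 / r j
        set e := c - (r (j+1) + b) with he
        have hA : r (j+1) = c - e - b := by rw [he]; ring
        have hB : 1 / r (N - (j+1)) = c + e - r (N - j) := by rw [he]; linarith
        have hlt : r (j+1) * (1 / r (N - (j+1))) < 1 := by
          have : r (j+1) * (1 / r (N - (j+1))) < r (j+1) * (c + e - r j) := by
            apply mul_lt_mul_of_pos_left _ p2
            linarith
          have h2 : r (j+1) * (c + e - r j) ≤ 1 := by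
            rw [hA]
            have he0 : 0 ≤ e := by rw [he]; linarith
            have c2 : 2 ≤ c := h.cbar
            have h3 : (c - e - b) * (c + e - r j) = r j * b + c * (c - r j - b) - e * (b - r j) - e^2 := by ring
            rw [h3, hb]
            have : 0 ≤ c * (r j + b - c) := mul_nonneg (by linarith) (by linarith)
            have : 0 ≤ e * (b - r j) := mul_nonneg he0 (by linarith)
            nlinarith
          linarith
        rw [mul_one_div, div_lt_one p3] at hlt
        exact hlt
    rcases Nat.even_or_odd' N with ⟨m, hm | hm⟩
    · have := (key m (by omega) (by omega)).2
      rw [show N - m = m by omega] at this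
      exact lt_irrefl _ this
    · have t1 := (key m (by omega) (by omega)).2
      have t2 := (key (m+1) (by omega) (by omega)).2
      rw [show N - m = m + 1 by omega] at t1
      rw [show N - (m+1) = m by omega] at t2
      linarith
  · push Not at hx
    obtain ⟨b1, b2⟩ := e1 k (by omega)
    rw [hk, Nat.succ_eq_add_one] at hri hx
    have p1 := h.pos k (by omega)
    have p2 := h.pos (k+1) (by omega)
    have p3 := h.pos (N - (k+1)) (by omega)
    have o1 := h.le_one k (by omega)
    have o2 := h.le_one (k+1) (by omega)
    have o3 := h.le_one (N-(k+1)) (by omega)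
    have hxk : xh < r k := by
      have : 1 / r k < 1 / xh := by linarith
      exact lt_of_one_div_lt_one_div p1 this
    have q1 := hdec _ _ xp hxk.le o1
    have q2 := hdec _ _ xp (hx.le.trans hri.le) o3
    linarith

theorem persist (h : RData N r al a) (j : ℕ) (hj : j + 2 ≤ N) (hlt : r (j+2) < r (j+1)) :
    r (j+1)^2 ≤ r j * r (j+2) := by
  by_contra hcon
  push Not at hcon
  have key : ∀ i, j ≤ i → i + 2 ≤ N → r (i+2) < r (i+1) ∧ r i * r (i+2) < r (i+1)^2 := by
    intro i hi
    induction i, hi using Nat.le_induction with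
    | base => intro _; exact ⟨hlt, hcon⟩
    | succ i hi ih =>
      intro hiN
      obtain ⟨i1, i2⟩ := ih (by omega)
      have p0 := h.pos i (by omega)
      have p1 := h.pos (i+1) (by omega)
      have p2 := h.pos (i+2) (by omega)
      have p3 := h.pos (i+3) (by omega)
      have e0 := h.hrec i (by omega)
      have e1 := h.hrec (i+1) (by omega)
      have e2 := h.hrec (i+2) (by omega)
      push_cast at e1 e2
      rw [show i + 1 + 1 = i + 2 by ring] at *
      rw [show i + 2 + 1 = i + 3 by ring] at *
      rw [show i + 1 + 2 = i + 3 by ring] at *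
      generalize r i = p at *
      generalize r (i+1) = q at *
      generalize r (i+2) = s at *
      generalize r (i+3) = w at *
      have hw : w = 2 * s + 2 / q - 1 / s - q - 1 / p := by
        have : 2 / q = 2 * (1 / q) := by ring
        linarith
      have hp : s / q^2 < 1 / p := by
        rw [div_lt_div_iff₀ (by positivity) p0]; linarith
      have hwq : q * w < s^2 := by
        have h1 : w < 2 * s + 2 / q - 1 / s - q - s / q^2 := by linarith
        have h2 : q * w < q * (2 * s + 2 / q - 1 / s - q - s / q^2) := mul_lt_mul_of_pos_left h1 p1
        have h3 : q * (2 * s + 2 / q - 1 / s - q - s / q^2) = s^2 - (q-s)^2 - (q-s)^2/(q*s) := by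
          field_simp; ring
        have h4 : 0 ≤ (q-s)^2/(q*s) := by positivity
        nlinarith [sq_nonneg (q-s)]
      refine ⟨?_, hwq⟩
      by_contra hh
      push Not at hh
      nlinarith
  have := (key (N-2) (by omega) (by omega)).1
  rw [show N - 2 + 2 = N by omega, h.rN] at this
  have := h.le_one (N-2+1) (by omega)
  linarith

theorem down (h : RData N r al a) (j : ℕ) (hj : j + 1 ≤ N) (hlt : r (j+1) < r j) :
    ∀ i, i ≤ j → r (i+1) < r i ∧ r (i+1) * r j ≤ r i * r (j+1) := by
  intro i hi
  induction hi using Nat.decreasingInduction with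
  | self => exact ⟨hlt, by linarith⟩
  | of_succ k hk ih =>
    obtain ⟨i1, i2⟩ := ih
    have := h.persist k (by omega) i1
    have p0 := h.pos k (by omega)
    have p1 := h.pos (k+1) (by omega)
    have p2 := h.pos (k+2) (by omega)
    have p3 := h.pos j (by omega)
    have p4 := h.pos (j+1) (by omega)
    rw [show k + 1 + 1 = k + 2 by ring] at *
    constructor
    · by_contra hh
      push Not at hh
      nlinarith
    · have h1 : r (k+1)^2 * r j ≤ (r k * r (k+2)) * r j := mul_le_mul_of_nonneg_right this p3.le
      have h2 : r k * (r (k+2) * r j) ≤ r k * (r (k+1) * r (j+1)) := mul_le_mul_of_nonneg_left i2 p0.le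
      have : r (k+1) * (r (k+1) * r j) ≤ r (k+1) * (r k * r (j+1)) := by nlinarith
      exact le_of_mul_le_mul_left this p1

theorem dec_left (h : RData N r al a) (i : ℕ) (hi : 2 * i + 1 ≤ N) : r (i+1) ≤ r i := by
  by_contra hcon
  push Not at hcon
  have key : ∀ j, i + 1 ≤ j → j ≤ N → r (i+1) ≤ r j := by
    intro j hj
    induction j, hj using Nat.le_induction with
    | base => intro _; exact le_rfl
    | succ j hj ih =>
      intro hjN
      refine (ih (by omega)).trans ?_
      by_contra hh
      push Not at hh
      have := (h.down j hjN hh i (by omega)).1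
      linarith
  have h1 := key (N - i) (by omega) (by omega)
  have h2 := h.refl_le i (by omega)
  linarith

theorem omega_dec (h : RData N r al a) (i : ℕ) (hi : 2 * i + 1 ≤ N) :
    r (i+1) * r (N - (i+1)) ≤ r i * r (N - i) := by
  by_cases h2 : 2 * i + 2 ≤ N
  · have d := h.dec_left i hi
    have p3 := h.pos (N - (i+1)) (by omega)
    have p0 := h.pos i (by omega)
    by_cases hc : r (N - (i+1) + 1) < r (N - (i+1))
    · have := (h.down (N - (i+1)) (by omega) hc i (by omega)).2
      rwa [show N - (i+1) + 1 = N - i by omega] at this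
    · push Not at hc
      rw [show N - (i+1) + 1 = N - i by omega] at hc
      exact mul_le_mul d hc p3.le p0.le
  · rw [show N - (i+1) = i by omega, show N - i = i + 1 by omega]; linarith

end RData


structure SData (N : ℕ) (S : ℕ → ℝ) (m : ℝ) : Prop where
  s0 : S 0 = 0
  sN : S N = 0
  pos : ∀ i, 1 ≤ i → i < N → 0 < S i
  hrec : ∀ i, S (i+2) + S i = (2 - m) * S (i+1)
  symm : ∀ i, i ≤ N → S (N - i) = S i
  mono : ∀ i, 2 * i + 1 ≤ N → S i ≤ S (i+1)
  mnn : 0 ≤ m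

theorem sdata_exists (N : ℕ) (hN : 2 ≤ N) :
    ∃ S, SData N S (2 * (1 - Real.cos (Real.pi / N))) := by
  have hN0 : (0:ℝ) < N := by exact_mod_cast (by omega : 0 < N)
  have hpi := Real.pi_pos
  refine ⟨fun i => Real.sin (Real.pi * i / N), ?_, ?_, ?_, ?_, ?_, ?_, ?_⟩
  · simp
  · rw [mul_div_assoc, div_self hN0.ne', mul_one, Real.sin_pi]
  · intro i h1 h2
    apply Real.sin_pos_of_pos_of_lt_pi
    · have : (0:ℝ) < i := by exact_mod_cast h1
      positivity
    · rw [div_lt_iff₀ hN0]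
      have : (i:ℝ) < N := by exact_mod_cast h2
      exact mul_lt_mul_of_pos_left this hpi
  · intro i
    push_cast
    have e1 : Real.pi * ((i:ℝ)+2) / N = Real.pi * (i+1) / N + Real.pi / N := by ring
    have e2 : Real.pi * (i:ℝ) / N = Real.pi * (i+1) / N - Real.pi / N := by ring
    rw [e1, e2, Real.sin_add, Real.sin_sub]
    ring
  · intro i hi
    rw [Nat.cast_sub hi]
    have : Real.pi * ((N:ℝ) - i) / N = Real.pi - Real.pi * i / N := by field_simp
    rw [this, Real.sin_pi_sub]
  · intro i hi
    push_cast
    have hi' : 2 * (i:ℝ) + 1 ≤ N := by exact_mod_cast hi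
    have hi0 : (0:ℝ) ≤ i := by positivity
    by_cases hc : 2 * i + 2 ≤ N
    · have hc' : 2 * (i:ℝ) + 2 ≤ N := by exact_mod_cast hc
      apply Real.sin_le_sin_of_le_of_le_pi_div_two
      · have : 0 ≤ Real.pi * (i:ℝ) / N := by positivity
        linarith
      · rw [div_le_iff₀ hN0]; nlinarith
      · gcongr; linarith
    · have hc' : (N:ℝ) = 2 * i + 1 := by
        have : N = 2 * i + 1 := by omega
        exact_mod_cast this
      have : Real.pi * ((i:ℝ) + 1) / N = Real.pi - Real.pi * i / N := by
        field_simp; rw [hc']; ring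
      rw [this, Real.sin_pi_sub]
  · have := Real.cos_le_one (Real.pi / N)
    linarith

structure FData (N : ℕ) (r : ℕ → ℝ) (al a : ℝ) (F : ℕ → ℝ) (G : ℝ) : Prop where
  hR : RData N r al a
  f0 : F 0 = 0
  fN : F N = 0
  pos : ∀ i, 1 ≤ i → i < N → 0 < F i
  heq : ∀ i, i + 1 < N → r (i+2) * F (i+2) + F i / r i = (r (i+1) + 1 / r (i+1) - G) * F (i+1)

namespace FData
variable {N : ℕ} {r : ℕ → ℝ} {al a : ℝ} {F : ℕ → ℝ} {G : ℝ} {S : ℕ → ℝ} {m : ℝ}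

theorem nn (h : FData N r al a F G) (i : ℕ) (hi : i ≤ N) : 0 ≤ F i := by
  rcases Nat.eq_zero_or_pos i with h0 | h0
  · rw [h0, h.f0]
  · rcases Nat.eq_or_lt_of_le hi with h1 | h1
    · rw [h1, h.fN]
    · exact (h.pos i h0 h1).le

theorem claimS (h : FData N r al a F G) (hS : SData N S m) (hG : G ≤ m) :
    ∀ i, 2 * i + 1 ≤ N → (r i * F i) * S (i+1) ≤ (r (i+1) * F (i+1)) * S i := by
  intro i
  induction i with
  | zero => intro _; simp [h.f0, hS.s0]
  | succ k ih =>
    intro hk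
    have ih := ih (by omega)
    have e := h.heq k (by omega)
    have hs := hS.hrec k
    have d := h.hR.dec_left k (by omega)
    have p0 := h.hR.pos k (by omega)
    have p1 := h.hR.pos (k+1) (by omega)
    have o1 := h.hR.le_one (k+1) (by omega)
    have mo := hS.mono (k+1) hk
    have s1 := hS.pos (k+1) (by omega) (by omega)
    have f1 := h.pos (k+1) (by omega) (by omega)
    have f0 := h.nn k (by omega)
    rw [show k + 1 + 1 = k + 2 by ring] at *
    set b := 1 / r (k+1) with hb
    have hb1 : 1 ≤ b := by rw [hb, le_div_iff₀ p1]; linarith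
    have hrb : r (k+1) * b = 1 := by rw [hb]; field_simp
    have hbb : 1 / r k ≤ b := one_div_le_one_div_of_le p1 d
    have hQ : F k / r k ≤ b^2 * (r k * F k) := by
      have : F k / r k = (1 / r k)^2 * (r k * F k) := by field_simp
      rw [this]
      have : 0 ≤ 1 / r k := by positivity
      gcongr
    have hP : 0 ≤ r (k+1) * F (k+1) := by positivity
    have hF : F (k+1) = b * (r (k+1) * F (k+1)) := by rw [← mul_assoc, mul_comm b, hrb, one_mul]
    have e2 : r (k+2) * F (k+2) = r (k+1) * F (k+1) + b * F (k+1) - G * F (k+1) - F k / r k := by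
      linarith
    rw [hF] at e2
    rw [← hF] at e2
    generalize r (k+2) * F (k+2) = P2 at *
    have e3 : P2 ≥ r (k+1) * F (k+1) + b * (b * (r (k+1) * F (k+1))) - G * (b * (r (k+1) * F (k+1)))
        - b^2 * (r k * F k) := by rw [← hF]; linarith
    generalize r (k+1) * F (k+1) = P1 at *
    generalize r k * F k = P0 at *
    have t1 : S (k+1) * P2 ≥ S (k+1) * (P1 + b * (b * P1) - G * (b * P1) - b^2 * P0) :=
      mul_le_mul_of_nonneg_left e3 s1.le
    have t2 : b^2 * (P0 * S (k+1)) ≤ b^2 * (P1 * S k) := mul_le_mul_of_nonneg_left ih (by positivity)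
    have hbP : 0 ≤ b * P1 := by positivity
    have hd : 0 ≤ S (k+1) - S k := by have := hS.mono k (by omega); linarith
    have t3 : 0 ≤ b * P1 * ((b - 1) * (S (k+1) - S k)) :=
      mul_nonneg hbP (mul_nonneg (by linarith) hd)
    have t4 : 0 ≤ b * P1 * ((m - G) * S (k+1)) := 
      mul_nonneg hbP (mul_nonneg (by linarith) s1.le)
    have t5 : 0 ≤ (b - 1) * P1 * (S (k+2) - S (k+1)) :=
      mul_nonneg (mul_nonneg (by linarith) hP) (by linarith)
    have hs' : S (k+2) = (2 - m) * S (k+1) - S k := by linarith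
    rw [hs'] at t5 ⊢
    nlinarith

theorem P_mono (h : FData N r al a F G) (hS : SData N S m) (hG : G ≤ m)
    (i : ℕ) (hi : 2 * i + 1 ≤ N) : r i * F i ≤ r (i+1) * F (i+1) := by
  rcases Nat.eq_zero_or_pos i with h0 | h0
  · subst h0
    rw [h.f0, mul_zero]
    exact mul_nonneg (h.hR.pos _ (by omega)).le (h.nn _ (by omega))
  · have c := h.claimS hS hG i hi
    have s := hS.pos i h0 (by omega)
    have : 0 ≤ r i * F i := mul_nonneg (h.hR.pos _ (by omega)).le (h.nn _ (by omega))
    have := mul_le_mul_of_nonneg_left (hS.mono i hi) this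
    exact le_of_mul_le_mul_right (by linarith) s

theorem Q_mono (h : FData N r al a F G) (hS : SData N S m) (hG : G ≤ m)
    (i : ℕ) (hi : 2 * i + 1 ≤ N) : F i / r i ≤ F (i+1) / r (i+1) := by
  have c := h.P_mono hS hG i hi
  have p0 := h.hR.pos i (by omega)
  have p1 := h.hR.pos (i+1) (by omega)
  have f1 := h.nn (i+1) (by omega)
  have d := h.hR.dec_left i hi
  rw [div_le_div_iff₀ p0 p1]
  have : F i * r i ≤ r (i+1) * F (i+1) := by linarith
  -- F i * r(i+1) ≤ F i * r i ≤ r(i+1) F(i+1) ≤ r i F (i+1)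
  have f0 := h.nn i (by omega)
  nlinarith

/-- `F` is a supersolution of the reflected equation -/
theorem super (h : FData N r al a F G) (hS : SData N S m) (hG : G ≤ m)
    (i : ℕ) (hi : 2 * (i+1) + 1 ≤ N) :
    (r (N-(i+1)) + 1 / r (N-(i+1)) - G) * F (i+1) ≤
      F (i+2) / r (N-(i+2)) + r (N-i) * F i := by
  have e := h.heq i (by omega)
  have P1 := h.P_mono hS hG (i+1) hi
  have Q1 := h.Q_mono hS hG i (by omega)
  have w1 := h.hR.omega_dec (i+1) hi
  have w0 := h.hR.omega_dec i (by omega)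
  have a0 := h.hR.pos i (by omega)
  have a1 := h.hR.pos (i+1) (by omega)
  have a2 := h.hR.pos (i+2) (by omega)
  have b0 := h.hR.pos (N-i) (by omega)
  have b1 := h.hR.pos (N-(i+1)) (by omega)
  have b2 := h.hR.pos (N-(i+2)) (by omega)
  have l0 := h.hR.le_one i (by omega)
  have l1 := h.hR.le_one (i+1) (by omega)
  have m0 := h.hR.le_one (N-i) (by omega)
  have m1 := h.hR.le_one (N-(i+1)) (by omega)
  have f0 := h.nn i (by omega)
  have f1 := h.nn (i+1) (by omega)
  have f2 := h.nn (i+2) (by omega)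
  rw [show i + 1 + 1 = i + 2 by ring] at *
  generalize r i = r0 at *
  generalize r (i+1) = r1 at *
  generalize r (i+2) = r2 at *
  generalize r (N-i) = R0 at *
  generalize r (N-(i+1)) = R1 at *
  generalize r (N-(i+2)) = R2 at *
  generalize F i = F0 at *
  generalize F (i+1) = F1 at *
  generalize F (i+2) = F2 at *
  have A : (1/R1 - r1) * F1 ≤ (1/R2 - r2) * F2 := by
    have x1 : (1/R1 - r1) * F1 = (1/(r1*R1) - 1) * (r1 * F1) := by field_simp
    have x2 : (1/R2 - r2) * F2 = (1/(r2*R2) - 1) * (r2 * F2) := by field_simp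
    rw [x1, x2]
    have y : 1/(r1*R1) ≤ 1/(r2*R2) := one_div_le_one_div_of_le (by positivity) w1
    have z : 1 ≤ 1/(r1*R1) := by rw [le_div_iff₀ (by positivity)]; nlinarith
    apply mul_le_mul (by linarith) P1 (by positivity) (by linarith)
  have B : (1/r0 - R0) * F0 ≤ (1/r1 - R1) * F1 := by
    have x1 : (1/r1 - R1) * F1 = (1 - r1*R1) * (F1/r1) := by field_simp
    have x2 : (1/r0 - R0) * F0 = (1 - r0*R0) * (F0/r0) := by field_simp
    rw [x1, x2]
    apply mul_le_mul (by linarith) Q1 (by positivity) (by nlinarith)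
  have k0 : F0 / r0 = 1/r0 * F0 := by ring
  have k2 : F2 / R2 = 1/R2 * F2 := by ring
  rw [k0] at e
  rw [k2]
  nlinarith

/-- reflected equation -/
theorem heq' (h : FData N r al a F G) (i : ℕ) (hi : i + 2 ≤ N) :
    F (N-(i+2)) / r (N-(i+2)) + r (N-i) * F (N-i) = (r (N-(i+1)) + 1 / r (N-(i+1)) - G) * F (N-(i+1)) := by
  have e := h.heq (N-(i+2)) (by omega)
  rw [show N-(i+2)+2 = N - i by omega, show N-(i+2)+1 = N-(i+1) by omega] at e
  linarith

theorem V (h : FData N r al a F G) (hS : SData N S m) (hG : G ≤ m) :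
    ∀ i, 2 * i + 1 ≤ N → F (N-(i+1)) * F i ≤ F (i+1) * F (N-i) := by
  intro i
  induction i with
  | zero => intro _; simp [h.f0, h.fN]
  | succ k ih =>
    intro hk
    have ih := ih (by omega)
    have s := h.super hS hG k hk
    have e := h.heq' k (by omega)
    have b0 := h.hR.pos (N-k) (by omega)
    have b2 := h.hR.pos (N-(k+2)) (by omega)
    have g1 := h.nn (N-(k+1)) (by omega)
    rw [show k + 1 + 1 = k + 2 by ring] at *
    have s2 := mul_le_mul_of_nonneg_right s g1
    have e2 := congrArg (fun z => z * F (k+1)) e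
    have ih2 := mul_le_mul_of_nonneg_left ih b0.le
    have : (F (N-(k+2)) * F (k+1)) / r (N-(k+2)) ≤ (F (k+2) * F (N-(k+1))) / r (N-(k+2)) := by
      have x1 : (F (N-(k+2)) * F (k+1)) / r (N-(k+2)) = F (N-(k+2)) / r (N-(k+2)) * F (k+1) := by ring
      have x2 : (F (k+2) * F (N-(k+1))) / r (N-(k+2)) = F (k+2) / r (N-(k+2)) * F (N-(k+1)) := by ring
      rw [x1, x2]
      nlinarith
    exact (div_le_div_iff_of_pos_right b2).1 this

theorem refl_ge (h : FData N r al a F G) (hS : SData N S m) (hG : G ≤ m) :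
    ∀ i, 2 * i ≤ N → F i ≤ F (N-i) := by
  have hhalf : 2 * (N/2) ≤ N := by omega
  have key : ∀ i, i ≤ N/2 → F i ≤ F (N-i) := by
    intro i hi
    induction hi using Nat.decreasingInduction with
    | self =>
      by_cases hc : 2 * (N/2) = N
      · rw [show N - N/2 = N/2 by omega]
      · have v := h.V hS hG (N/2) (by omega)
        rw [show N - (N/2+1) = N/2 by omega, show N/2+1 = N - N/2 by omega] at v
        have := h.nn (N/2) (by omega)
        have := h.nn (N - N/2) (by omega)
        nlinarith
    | of_succ k hk ih =>
      have v := h.V hS hG k (by omega)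
      have p := h.pos (k+1) (by omega) (by omega)
      have p' := h.pos (N-(k+1)) (by omega) (by omega)
      have q := h.nn k (by omega)
      have q' := h.nn (N-k) (by omega)
      have h1 : F (k+1) * F k ≤ F (k+1) * F (N-k) := by
        refine le_trans ?_ v
        exact mul_le_mul_of_nonneg_right ih q
      exact le_of_mul_le_mul_left h1 p
  intro i hi
  exact key i (by omega)

theorem pair (h : FData N r al a F G) (hS : SData N S m) (hG : G ≤ m) :
    ∀ i, 1 ≤ i → 2 * i ≤ N → 
    0 ≤ F i * ((r i - 1) * (S i - S (i-1)) + (1 - 1/r i) * (S (i+1) - S i)) +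
      F (N-i) * ((r (N-i) - 1) * (S (N-i) - S (N-i-1)) + (1 - 1/r (N-i)) * (S (N-i+1) - S (N-i))) := by
  intro i h1 h2
  have fl := h.refl_ge hS hG i h2
  have rl := h.hR.refl_le i h2
  have p := h.hR.pos i (by omega)
  have p' := h.hR.pos (N-i) (by omega)
  have l := h.hR.le_one i (by omega)
  have l' := h.hR.le_one (N-i) (by omega)
  have f := h.pos i h1 (by omega)
  have s1 : S (N-i) = S i := hS.symm i (by omega)
  have s2 : S (N-i-1) = S (i+1) := by rw [← hS.symm (i+1) (by omega)]; congr 1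
  have s3 : S (N-i+1) = S (i-1) := by
    rw [← hS.symm (i-1) (by omega)]; congr 1; omega
  rw [s1, s2, s3]
  have cm : 0 ≤ S i - S (i-1) := by
    have := hS.mono (i-1) (by omega)
    rw [show i - 1 + 1 = i by omega] at this
    linarith
  have cc : S (i+1) - S i ≤ S i - S (i-1) := by
    have := hS.hrec (i-1)
    rw [show i - 1 + 2 = i + 1 by omega, show i - 1 + 1 = i by omega] at this
    have := mul_nonneg hS.mnn (hS.pos i h1 (by omega)).le
    linarith
  have hinv : 1 / r i ≤ 1 / r (N-i) := one_div_le_one_div_of_le p' rl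
  have hone : 1 ≤ 1 / r i := by rw [le_div_iff₀ p]; linarith
  have hsum : 2 ≤ r i + 1 / r i := by
    have : r i + 1 / r i - 2 = (r i - 1)^2 / r i := by field_simp; ring
    have : 0 ≤ (r i - 1)^2 / r i := by positivity
    linarith
  by_cases hc : 2 * i + 1 ≤ N
  · have cp : 0 ≤ S (i+1) - S i := by linarith [hS.mono i hc]
    generalize 1 / r i = b at *
    generalize 1 / r (N-i) = b' at *
    have hS0 : S (i-1) - S i = - (S i - S (i-1)) := by ring
    generalize S i - S (i-1) = c at *
    have : S i - S (i+1) = - (S (i+1) - S i) := by ring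
    rw [this]
    generalize S (i+1) - S i = d at *
    rw [hS0]
    have k1 : F i * ((1 - r i) * d + (b - 1) * c) ≤ F (N-i) * ((1 - r (N-i)) * d + (b' - 1) * c) := by
      apply mul_le_mul fl _ _ (by linarith)
      · gcongr
      · have := mul_nonneg (by linarith : 0 ≤ 1 - r i) cp
        have := mul_nonneg (by linarith : 0 ≤ b - 1) cm
        linarith
    have k2 : 0 ≤ F i * ((c - d) * (r i + b - 2)) :=
      mul_nonneg f.le (mul_nonneg (by linarith) (by linarith))
    nlinarith
  · have hN : N - i = i := by omega
    have hs : S (i+1) = S (i-1) := by rw [← s2]; congr 1; omega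
    rw [hN, hs]
    have : F i * ((r i - 1) * (S i - S (i-1)) + (1 - 1/r i) * (S (i-1) - S i)) = 
       F i * ((S i - S (i-1)) * (r i + 1/r i - 2)) := by ring
    have k3 : F i * ((r i - 1) * (S i - S (i+1)) + (1 - 1/r i) * (S (i-1) - S i)) = 
       F i * ((S i - S (i-1)) * (r i + 1/r i - 2)) := by rw [hs]; ring
    rw [hs] at k3
    rw [k3]
    have : 0 ≤ F i * ((S i - S (i-1)) * (r i + 1/r i - 2)) :=
      mul_nonneg f.le (mul_nonneg cm (by linarith))
    linarith

theorem main (h : FData N r al a F G) (hS : SData N S m) : m ≤ G := by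
  by_contra hcon
  push Not at hcon
  have hN := h.hR.hN
  set T : ℕ → ℝ := fun i => F i * ((r i - 1) * (S i - S (i-1)) + (1 - 1/r i) * (S (i+1) - S i)) with hT
  have hpair : ∀ i ∈ Finset.Icc 1 (N-1), 0 ≤ T i + T (N-i) := by
    intro i hi
    rw [Finset.mem_Icc] at hi
    by_cases hc : 2 * i ≤ N
    · exact h.pair hS hcon.le i hi.1 hc
    · have := h.pair hS hcon.le (N-i) (by omega) (by omega)
      rw [show N - (N - i) = i by omega] at this
      rw [add_comm]
      exact this
  have hrefl : ∑ i ∈ Finset.Icc 1 (N-1), T (N-i) = ∑ i ∈ Finset.Icc 1 (N-1), T i := by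
    apply Finset.sum_nbij' (fun i => N - i) (fun i => N - i)
    · intro i hi; rw [Finset.mem_Icc] at *; omega
    · intro i hi; rw [Finset.mem_Icc] at *; omega
    · intro i hi; rw [Finset.mem_Icc] at *; omega
    · intro i hi; rw [Finset.mem_Icc] at *; omega
    · intro i hi; rfl
  have hnn : 0 ≤ ∑ i ∈ Finset.Icc 1 (N-1), T i := by
    have := Finset.sum_nonneg hpair
    rw [Finset.sum_add_distrib, hrefl] at this
    linarith
  have hsum : ∀ n, n + 1 ≤ N → ∑ i ∈ Finset.Icc 1 n, ((G - m) * (S i * F i) - T i) =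
      - (S n * (r (n+1) * F (n+1))) + S (n+1) * (F n / r n) := by
    intro n
    induction n with
    | zero => intro _; simp [hS.s0, h.f0]
    | succ k ih =>
      intro hk
      rw [Finset.sum_Icc_succ_top (by omega), ih (by omega)]
      have e := h.heq k (by omega)
      have s := hS.hrec k
      have : S (k+2) = (2-m) * S (k+1) - S k := by linarith
      rw [show k + 1 + 1 = k + 2 by ring]
      have e' : r (k+2) * F (k+2) = (r (k+1) + 1 / r (k+1) - G) * F (k+1) - F k / r k := by linarith
      simp only [hT]
      rw [show k + 1 + 1 = k + 2 by ring, show k + 1 - 1 = k by omega, e', this]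
      ring
  have := hsum (N-1) (by omega)
  rw [show N - 1 + 1 = N by omega, h.fN, hS.sN, Finset.sum_sub_distrib] at this
  have hpos : 0 < ∑ i ∈ Finset.Icc 1 (N-1), (S i * F i) := by
    apply Finset.sum_pos
    · intro i hi
      rw [Finset.mem_Icc] at hi
      exact mul_pos (hS.pos i (by omega) (by omega)) (h.pos i (by omega) (by omega))
    · exact ⟨1, by rw [Finset.mem_Icc]; omega⟩
  rw [← Finset.mul_sum] at this
  nlinarith

end FData


/-- `u` solves the eigenvalue recurrence with reflecting ghosts -/
structure Sol (N : ℕ) (W : ℕ → ℝ) (l : ℝ) (u : ℕ → ℝ) : Prop where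
  g0 : u 0 = u 1
  gN : u (N+1) = u N
  hrec : ∀ i, i < N → u (i+2) + u i = (2 + W (i+1) - l) * u (i+1)

theorem linear_gap_nonneg (N : ℕ) (hN : 2 ≤ N) (W : ℕ → ℝ) (a b l1 l2 : ℝ) (u v : ℕ → ℝ)
    (ha : 0 ≤ a) (hW : ∀ i, 1 ≤ i → i ≤ N → W i = a * i + b)
    (hu : Sol N W l1 u) (hv : Sol N W l2 v)
    (up : ∀ i, 1 ≤ i → i ≤ N → 0 < u i)
    (hg : ∀ i, 1 ≤ i → i < N → 0 < u i * v (i+1) - u (i+1) * v i) :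
    2 * (1 - Real.cos (Real.pi / N)) ≤ l2 - l1 := by
  have up' : ∀ i, i ≤ N + 1 → 0 < u i := by
    intro i hi
    rcases Nat.eq_zero_or_pos i with h0 | h0
    · rw [h0, hu.g0]; exact up 1 le_rfl (by omega)
    · rcases Nat.lt_or_ge i (N+1) with h1 | h1
      · exact up i h0 (by omega)
      · rw [show i = N + 1 by omega, hu.gN]; exact up N (by omega) le_rfl
  obtain ⟨S, hS⟩ := sdata_exists N hN
  set r : ℕ → ℝ := fun i => u (i+1) / u i with hr
  set F : ℕ → ℝ := fun i => v (i+1) / u (i+1) - v i / u i with hF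
  have hR : RData N r (2 + b - l1) a := by
    refine ⟨hN, ha, ?_, ?_, ?_, ?_⟩
    · intro i hi
      exact div_pos (up' _ (by omega)) (up' _ (by omega))
    · simp only [hr]; rw [hu.g0]; exact div_self (up' 1 (by omega)).ne'
    · simp only [hr]; rw [hu.gN]; exact div_self (up' N (by omega)).ne'
    · intro i hi
      have e := hu.hrec i hi
      have p0 := up' i (by omega)
      have p1 := up' (i+1) (by omega)
      rw [hW (i+1) (by omega) (by omega)] at e
      simp only [hr]
      rw [show i + 1 + 1 = i + 2 by ring, one_div_div, ← add_div, e, mul_div_assoc, div_self p1.ne']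
      push_cast; ring
  have step : ∀ i, i < N → r (i+1) * F (i+1) - F i / r i = - (l2 - l1) * (v (i+1) / u (i+1)) := by
    intro i hi
    have e := hu.hrec i hi
    have e' := hv.hrec i hi
    have p0 := up' i (by omega)
    have p1 := up' (i+1) (by omega)
    have p2 := up' (i+2) (by omega)
    simp only [hr, hF]
    rw [show i + 1 + 1 = i + 2 by ring]
    have ev : v (i+2) = (2 + W (i+1) - l2) * v (i+1) - v i := by linarith
    have x1 : u (i+2) / u (i+1) * (v (i+2) / u (i+2) - v (i+1) / u (i+1)) - 
      (v (i+1) / u (i+1) - v i / u i) / (u (i+1) / u i) = 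
      ((v (i+2) + v i) * u (i+1) - (u (i+2) + u i) * v (i+1)) / u (i+1)^2 := by
      field_simp; ring
    rw [x1, e, e']
    field_simp
    ring
  have hFD : FData N r (2 + b - l1) a F (l2 - l1) := by
    refine ⟨hR, ?_, ?_, ?_, ?_⟩
    · simp only [hF]; rw [hu.g0, hv.g0]; simp
    · simp only [hF]; rw [hu.gN, hv.gN]; simp
    · intro i h1 h2
      have p0 := up' i (by omega)
      have p1 := up' (i+1) (by omega)
      have g := hg i h1 h2
      simp only [hF]
      rw [sub_pos, div_lt_div_iff₀ p0 p1]
      linarith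
    · intro i hi
      have s1 := step i (by omega)
      have s2 := step (i+1) (by omega)
      rw [show i + 1 + 1 = i + 2 by ring] at s2
      have : F (i+1) = v (i+2) / u (i+2) - v (i+1) / u (i+1) := rfl
      have e : 1 / r (i+1) * F (i+1) = F (i+1) / r (i+1) := by ring
      have : (l2 - l1) * F (i+1) = (l2 - l1) * (v (i+2) / u (i+2)) - (l2 - l1) * (v (i+1) / u (i+1)) := by
        rw [this]; ring
      nlinarith
  exact hFD.main hS

theorem linear_gap (N : ℕ) (hN : 2 ≤ N) (W : ℕ → ℝ) (a b l1 l2 : ℝ) (u v : ℕ → ℝ)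
    (hW : ∀ i, 1 ≤ i → i ≤ N → W i = a * i + b)
    (hu : Sol N W l1 u) (hv : Sol N W l2 v)
    (up : ∀ i, 1 ≤ i → i ≤ N → 0 < u i)
    (hg : ∀ i, 1 ≤ i → i < N → 0 < u i * v (i+1) - u (i+1) * v i) :
    2 * (1 - Real.cos (Real.pi / N)) ≤ l2 - l1 := by
  rcases le_total 0 a with ha | ha
  · exact linear_gap_nonneg N hN W a b l1 l2 u v ha hW hu hv up hg
  · have refl : ∀ l w, Sol N W l w → Sol N (fun i => W (N+1-i)) l (fun i => w (N+1-i)) := by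
      intro l w hw
      refine ⟨?_, ?_, ?_⟩
      · simp [hw.gN]
      · simp [hw.g0]
      · intro i hi
        have e := hw.hrec (N-1-i) (by omega)
        show w (N+1-(i+2)) + w (N+1-i) = (2 + W (N+1-(i+1)) - l) * w (N+1-(i+1))
        rw [show N+1-(i+2) = N-1-i by omega, show N+1-i = N-1-i+2 by omega,
          show N+1-(i+1) = N-1-i+1 by omega]
        linarith
    have hv' := refl l2 v hv
    refine linear_gap_nonneg N hN (fun i => W (N+1-i)) (-a) (a * (N+1) + b) l1 l2
      (fun i => u (N+1-i)) (fun i => - v (N+1-i)) (by linarith) ?_ (refl l1 u hu) ?_ ?_ ?_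
    · intro i h1 h2
      rw [hW _ (by omega) (by omega), Nat.cast_sub (by omega)]
      push_cast; ring
    · refine ⟨by simpa using hv'.g0, by simpa using hv'.gN, ?_⟩
      intro i hi
      have := hv'.hrec i hi
      linarith
    · intro i h1 h2
      exact up _ (by omega) (by omega)
    · intro i h1 h2
      have := hg (N-i) (by omega) (by omega)
      show 0 < u (N+1-i) * - v (N+1-(i+1)) - u (N+1-(i+1)) * - v (N+1-i)
      rw [show N+1-(i+1) = N-i by omega, show N+1-i = N-i+1 by omega]
      linarith


noncomputable def ipN (N : ℕ) (x y : ℕ → ℝ) : ℝ := ∑ i ∈ Finset.range N, x (i+1) * y (i+1)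

noncomputable def enN (N : ℕ) (x y : ℕ → ℝ) : ℝ :=
  ∑ i ∈ Finset.range (N-1), (x (i+2) - x (i+1)) * (y (i+2) - y (i+1))

noncomputable def poN (N : ℕ) (W x y : ℕ → ℝ) : ℝ :=
  ∑ i ∈ Finset.range N, W (i+1) * (x (i+1) * y (i+1))

noncomputable def qB (N : ℕ) (W x y : ℕ → ℝ) : ℝ := enN N x y + poN N W x y

section bil
variable {N : ℕ} {W : ℕ → ℝ}

theorem ip_comb (a b : ℝ) (x y z : ℕ → ℝ) :
    ipN N (fun i => a * x i + b * y i) z = a * ipN N x z + b * ipN N y z := by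
  simp only [ipN, Finset.mul_sum, ← Finset.sum_add_distrib]
  exact Finset.sum_congr rfl fun i _ => by ring

theorem ip_comm (x y : ℕ → ℝ) : ipN N x y = ipN N y x :=
  Finset.sum_congr rfl fun i _ => by ring

theorem ip_comb' (a b : ℝ) (x y z : ℕ → ℝ) :
    ipN N z (fun i => a * x i + b * y i) = a * ipN N z x + b * ipN N z y := by
  rw [ip_comm, ip_comb, ip_comm x, ip_comm y]

theorem qB_comb (a b : ℝ) (x y z : ℕ → ℝ) :
    qB N W (fun i => a * x i + b * y i) z = a * qB N W x z + b * qB N W y z := by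
  have h1 : enN N (fun i => a * x i + b * y i) z = a * enN N x z + b * enN N y z := by
    simp only [enN, Finset.mul_sum, ← Finset.sum_add_distrib]
    exact Finset.sum_congr rfl fun i _ => by ring
  have h2 : poN N W (fun i => a * x i + b * y i) z = a * poN N W x z + b * poN N W y z := by
    simp only [poN, Finset.mul_sum, ← Finset.sum_add_distrib]
    exact Finset.sum_congr rfl fun i _ => by ring
  simp only [qB, h1, h2]; ring

theorem qB_comm (x y : ℕ → ℝ) : qB N W x y = qB N W y x := by
  have h1 : enN N x y = enN N y x := Finset.sum_congr rfl fun i _ => by ring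
  have h2 : poN N W x y = poN N W y x := Finset.sum_congr rfl fun i _ => by ring
  simp only [qB, h1, h2]

theorem qB_comb' (a b : ℝ) (x y z : ℕ → ℝ) :
    qB N W z (fun i => a * x i + b * y i) = a * qB N W z x + b * qB N W z y := by
  rw [qB_comm, qB_comb, qB_comm x, qB_comm y]

theorem ip_congr {x x' y y' : ℕ → ℝ} (h : ∀ i, 1 ≤ i → i ≤ N → x i = x' i)
    (h' : ∀ i, 1 ≤ i → i ≤ N → y i = y' i) : ipN N x y = ipN N x' y' := by
  apply Finset.sum_congr rfl
  intro i hi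
  rw [Finset.mem_range] at hi
  rw [h _ (by omega) (by omega), h' _ (by omega) (by omega)]

theorem qB_congr {x x' y y' : ℕ → ℝ} (h : ∀ i, 1 ≤ i → i ≤ N → x i = x' i)
    (h' : ∀ i, 1 ≤ i → i ≤ N → y i = y' i) : qB N W x y = qB N W x' y' := by
  have h1 : enN N x y = enN N x' y' := by
    apply Finset.sum_congr rfl
    intro i hi
    rw [Finset.mem_range] at hi
    rw [h _ (by omega) (by omega), h' _ (by omega) (by omega), h (i+1) (by omega) (by omega), h' (i+1) (by omega) (by omega)]
  have h2 : poN N W x y = poN N W x' y' := by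
    apply Finset.sum_congr rfl
    intro i hi
    rw [Finset.mem_range] at hi
    rw [h _ (by omega) (by omega), h' _ (by omega) (by omega)]
  simp only [qB, h1, h2]

theorem ip_self_nonneg (x : ℕ → ℝ) : 0 ≤ ipN N x x :=
  Finset.sum_nonneg fun i _ => mul_self_nonneg _

theorem ip_self_zero {x : ℕ → ℝ} (h : ipN N x x = 0) : ∀ i, 1 ≤ i → i ≤ N → x i = 0 := by
  intro i h1 h2
  have := (Finset.sum_eq_zero_iff_of_nonneg (fun i _ => mul_self_nonneg (x (i+1)))).1 h (i-1)
    (by rw [Finset.mem_range]; omega)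
  rw [show i - 1 + 1 = i by omega] at this
  exact mul_self_eq_zero.1 this

theorem sbp (u y : ℕ → ℝ) (n : ℕ) :
    ∑ i ∈ Finset.range (n+1), (2 * u (i+1) - u (i+2) - u i) * y (i+1) =
    ∑ i ∈ Finset.range n, (u (i+2) - u (i+1)) * (y (i+2) - y (i+1)) + (u 1 - u 0) * y 1
      - (u (n+2) - u (n+1)) * y (n+1) := by
  induction n with
  | zero => simp; ring
  | succ n ih => 
    rw [Finset.sum_range_succ, ih, Finset.sum_range_succ _ n]
    rw [show n + 1 + 2 = n + 3 by ring, show n + 1 + 1 = n + 2 by ring]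
    ring

theorem qB_sbp (hN : 1 ≤ N) (u y : ℕ → ℝ) (h0 : u 0 = u 1) (h1 : u (N+1) = u N) :
    qB N W u y = ∑ i ∈ Finset.range N, (2 * u (i+1) - u (i+2) - u i + W (i+1) * u (i+1)) * y (i+1) := by
  obtain ⟨n, rfl⟩ : ∃ n, N = n + 1 := ⟨N-1, by omega⟩
  have s := sbp u y n
  rw [h0, show n + 2 = n + 1 + 1 by ring, h1] at s
  simp only [sub_self, zero_mul, add_zero, sub_zero] at s
  simp only [qB, enN, poN]
  rw [show n + 1 - 1 = n by omega, ← s, ← Finset.sum_add_distrib]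
  exact Finset.sum_congr rfl fun i _ => by ring

theorem Sol.qB (hN : 1 ≤ N) {l : ℝ} {u : ℕ → ℝ} (h : Sol N W l u) (x : ℕ → ℝ) :
    qB N W u x = l * ipN N u x := by
  rw [qB_sbp hN u x h.g0 h.gN, ipN, Finset.mul_sum]
  apply Finset.sum_congr rfl
  intro i hi
  rw [Finset.mem_range] at hi
  have := h.hrec i hi
  have : u (i+2) = (2 + W (i+1) - l) * u (i+1) - u i := by linarith
  rw [this]; ring

theorem sol_of_qB (hN : 1 ≤ N) {l : ℝ} {u : ℕ → ℝ} (h0 : u 0 = u 1) (h1 : u (N+1) = u N)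
    (h : ∀ x, _root_.qB N W u x = l * ipN N u x) : Sol N W l u := by
  refine ⟨h0, h1, ?_⟩
  intro i hi
  have := h (Pi.single (i+1) 1)
  rw [qB_sbp hN u _ h0 h1, ipN, Finset.sum_eq_single i, Finset.sum_eq_single i] at this
  · simp at this; linarith
  · intro j _ hj; simp [hj]
  · intro hh; simp at hh; omega
  · intro j _ hj; simp [hj]
  · intro hh; simp at hh; omega

/-- clamp extension -/
noncomputable def clampN (N : ℕ) (x : ℕ → ℝ) : ℕ → ℝ := fun i => x (max 1 (min i N))

theorem clamp_eq (x : ℕ → ℝ) (i : ℕ) (h1 : 1 ≤ i) (h2 : i ≤ N) : clampN N x i = x i := by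
  simp only [clampN]; congr 1; omega

theorem clamp_0 (hN : 1 ≤ N) (x : ℕ → ℝ) : clampN N x 0 = clampN N x 1 := by
  simp only [clampN]; congr 1; omega

theorem clamp_N (hN : 1 ≤ N) (x : ℕ → ℝ) : clampN N x (N+1) = clampN N x N := by
  simp only [clampN]; congr 1; omega

theorem abs_le_one_of_ip {x : ℕ → ℝ} (h : ipN N x x = 1) (i : ℕ) (h1 : 1 ≤ i) (h2 : i ≤ N) :
    |x i| ≤ 1 := by
  rw [abs_le_one_iff_mul_self_le_one, ← h]
  have := Finset.single_le_sum (f := fun i => x (i+1) * x (i+1)) (fun i _ => mul_self_nonneg _)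
    (show i - 1 ∈ Finset.range N by rw [Finset.mem_range]; omega)
  rwa [show i - 1 + 1 = i by omega] at this

theorem clamp_abs_le (hN : 1 ≤ N) {x : ℕ → ℝ} (h : ipN N x x = 1) (i : ℕ) : |clampN N x i| ≤ 1 :=
  abs_le_one_of_ip h _ (by omega) (by omega)

theorem normalizeN (hN : 1 ≤ N) (x : ℕ → ℝ) (h : 0 < ipN N x x) :
    ∃ c : ℝ, 0 < c ∧ ∃ y : ℕ → ℝ, (∀ i, 1 ≤ i → i ≤ N → y i = c * x i) ∧ ipN N y y = 1 ∧
      (∀ i, |y i| ≤ 1) ∧ y 0 = y 1 ∧ y (N+1) = y N := by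
  have hs := Real.mul_self_sqrt h.le
  have hsp := Real.sqrt_pos.2 h
  set s := Real.sqrt (ipN N x x)
  have key : ipN N (fun i => 1 / s * x i) (fun i => 1 / s * x i) = 1 := by
    have e : ipN N (fun i => 1 / s * x i) (fun i => 1 / s * x i) = (1/s)^2 * ipN N x x := by
      simp only [ipN, Finset.mul_sum]
      exact Finset.sum_congr rfl fun i _ => by ring
    rw [e, ← hs]; field_simp
  refine ⟨1 / s, by positivity, clampN N (fun i => 1 / s * x i), ?_, ?_, ?_, ?_, ?_⟩
  · intro i h1 h2; rw [clamp_eq _ i h1 h2]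
  · exact (ip_congr (clamp_eq _) (clamp_eq _)).trans key
  · exact clamp_abs_le hN key
  · exact clamp_0 hN _
  · exact clamp_N hN _

theorem qB_scale (c : ℝ) (x y : ℕ → ℝ) (h : ∀ i, 1 ≤ i → i ≤ N → y i = c * x i) :
    qB N W y y = c^2 * qB N W x x := by
  have h' : ∀ i, 1 ≤ i → i ≤ N → y i = c * x i + 0 * x i := by
    intro i h1 h2; rw [h i h1 h2]; ring
  rw [qB_congr h' h', qB_comb, qB_comb']; ring

theorem ip_scale (c : ℝ) (x y : ℕ → ℝ) (h : ∀ i, 1 ≤ i → i ≤ N → y i = c * x i) :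
    ipN N y y = c^2 * ipN N x x := by
  have h' : ∀ i, 1 ≤ i → i ≤ N → y i = c * x i + 0 * x i := by
    intro i h1 h2; rw [h i h1 h2]; ring
  rw [ip_congr h' h', ip_comb, ip_comb']; ring

theorem continuous_ip (z : ℕ → ℝ) : Continuous (fun x : ℕ → ℝ => ipN N z x) := by
  unfold ipN; fun_prop

theorem exists_min (hN : 1 ≤ N) (W z y0 : ℕ → ℝ) (h0 : ipN N z y0 = 0) (h0p : 0 < ipN N y0 y0) :
    ∃ x, ipN N x x = 1 ∧ ipN N z x = 0 ∧
      ∀ y, ipN N z y = 0 → qB N W x x * ipN N y y ≤ qB N W y y := by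
  set K : Set (ℕ → ℝ) := {x | (∀ i, x i ∈ Set.Icc (-1:ℝ) 1) ∧ ipN N x x = 1 ∧ ipN N z x = 0} with hK
  have hto : ∀ y, ipN N z y = 0 → 0 < ipN N y y → ∃ c : ℝ, 0 < c ∧ ∃ x ∈ K, 
      (∀ i, 1 ≤ i → i ≤ N → x i = c * y i) := by
    intro y hy hyp
    obtain ⟨c, cp, x, hx, hx1, hxb, _, _⟩ := normalizeN hN y hyp
    refine ⟨c, cp, x, ⟨fun i => ⟨(abs_le.1 (hxb i)).1, (abs_le.1 (hxb i)).2⟩, hx1, ?_⟩, hx⟩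
    have h' : ∀ i, 1 ≤ i → i ≤ N → x i = c * y i + 0 * y i := by
      intro i h1 h2; rw [hx i h1 h2]; ring
    rw [ip_congr (fun i _ _ => rfl) h', ip_comb', hy]; ring
  have hKc : IsCompact K := by
    have c0 : IsCompact {x : ℕ → ℝ | ∀ i, x i ∈ Set.Icc (-1:ℝ) 1} := 
      isCompact_pi_infinite fun i => isCompact_Icc
    have : K = {x : ℕ → ℝ | ∀ i, x i ∈ Set.Icc (-1:ℝ) 1} ∩ ({x | ipN N x x = 1} ∩ {x | ipN N z x = 0}) := by
      ext x; simp [hK]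
    rw [this]
    apply c0.inter_right
    apply IsClosed.inter
    · apply isClosed_eq _ continuous_const
      unfold ipN; fun_prop
    · exact isClosed_eq (continuous_ip z) continuous_const
  obtain ⟨c, cp, x0, hx0, _⟩ := hto y0 h0 h0p
  obtain ⟨x, hxK, hmin⟩ := hKc.exists_isMinOn ⟨x0, hx0⟩ (f := fun x => qB N W x x)
    (by apply Continuous.continuousOn; unfold qB enN poN; fun_prop)
  refine ⟨x, hxK.2.1, hxK.2.2, ?_⟩
  intro y hy
  rcases (ip_self_nonneg (N := N) y).eq_or_lt with hz | hp
  · rw [← hz, mul_zero]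
    have hz := ip_self_zero hz.symm
    have : qB N W y y = 0 := by
      rw [qB_scale 0 y y (by intro i h1 h2; rw [hz i h1 h2]; simp)]; ring
    rw [this]
  · obtain ⟨c, cp, y', hy', hyc⟩ := hto y hy hp
    have m : qB N W x x ≤ qB N W y' y' := hmin hy'
    have e1 := ip_scale c y y' hyc
    rw [hy'.2.1] at e1
    rw [qB_scale c y y' hyc] at m
    have : qB N W x x * (c^2 * ipN N y y) ≤ c^2 * qB N W y y := by rw [← e1]; linarith
    have : c^2 * (qB N W x x * ipN N y y) ≤ c^2 * qB N W y y := by linarith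
    exact le_of_mul_le_mul_left this (by positivity)

theorem euler_lagrange (z x : ℕ → ℝ) (l : ℝ) (hx : ipN N z x = 0) (hl : qB N W x x = l * ipN N x x)
    (hmin : ∀ y, ipN N z y = 0 → l * ipN N y y ≤ qB N W y y) (y : ℕ → ℝ) (hy : ipN N z y = 0) :
    qB N W x y = l * ipN N x y := by
  have key : ∀ t : ℝ, 0 ≤ (qB N W y y - l * ipN N y y) * (t * t) +
      (2 * (qB N W x y - l * ipN N x y)) * t + 0 := by
    intro t
    have := hmin (fun i => 1 * x i + t * y i) (by rw [ip_comb', hx, hy]; ring)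
    rw [qB_comb, qB_comb', qB_comb', ip_comb, ip_comb', ip_comb', qB_comm y x, ip_comm y x, hl] at this
    nlinarith
  have := discrim_le_zero key
  simp only [discrim] at this
  nlinarith

end bil


structure GState (N : ℕ) (W : ℕ → ℝ) (l1 l2 : ℝ) (u v : ℕ → ℝ) : Prop where
  su : Sol N W l1 u
  sv : Sol N W l2 v
  un : ∀ i, 0 ≤ u i
  uu : ipN N u u = 1
  vv : ipN N v v = 1
  uv : ipN N u v = 0
  g : ∀ i, i + 1 < N → 0 ≤ u (i+1) * v (i+2) - u (i+2) * v (i+1)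
  le : l1 ≤ l2
  var : ∀ x, l1 * (ipN N u x)^2 + l2 * (ipN N x x - (ipN N u x)^2) ≤ qB N W x x
  ub : ∀ i, |u i| ≤ 1
  vb : ∀ i, |v i| ≤ 1

section
variable {N : ℕ} {W : ℕ → ℝ}

theorem Sol.zero {l : ℝ} {u : ℕ → ℝ} (h : Sol N W l u) (j : ℕ) (hj : j ≤ N) (h0 : u j = 0)
    (h1 : u (j+1) = 0) : ∀ i, i ≤ N + 1 → u i = 0 := by
  have up : ∀ k, j ≤ k → k ≤ N → u k = 0 ∧ u (k+1) = 0 := by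
    intro k hk
    induction k, hk using Nat.le_induction with
    | base => intro _; exact ⟨h0, h1⟩
    | succ k hk ih =>
      intro hkN
      obtain ⟨a, b⟩ := ih (by omega)
      have := h.hrec k (by omega)
      rw [a, b] at this
      exact ⟨b, by linarith⟩
  have dn : ∀ k, k ≤ j → u k = 0 ∧ u (k+1) = 0 := by
    intro k hk
    induction hk using Nat.decreasingInduction with
    | self => exact ⟨h0, h1⟩
    | of_succ k hk ih =>
      obtain ⟨a, b⟩ := ih
      have := h.hrec k (by omega)
      rw [show k + 1 + 1 = k + 2 by ring] at b
      rw [a, b] at this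
      exact ⟨by linarith, a⟩
  intro i hi
  rcases le_total i j with hij | hij
  · exact (dn i hij).1
  · rcases Nat.eq_or_lt_of_le hi with e | e
    · rw [e]; exact (up N hj le_rfl).2
    · exact (up i hij (by omega)).1

theorem Sol.pos {l : ℝ} {u : ℕ → ℝ} (h : Sol N W l u) (hn : ∀ i, 0 ≤ u i)
    (hu : ipN N u u ≠ 0) : ∀ i, i ≤ N + 1 → 0 < u i := by
  have key : ∀ i, 1 ≤ i → i ≤ N → 0 < u i := by
    intro i h1 h2
    refine lt_of_le_of_ne (hn i) ?_
    intro h0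
    apply hu
    have e := h.hrec (i-1) (by omega)
    rw [show i - 1 + 1 = i by omega, ← h0, show i - 1 + 2 = i + 1 by omega] at e
    have := hn (i+1)
    have := hn (i-1)
    have z := h.zero i h2 h0.symm (by linarith)
    apply Finset.sum_eq_zero
    intro k hk
    rw [Finset.mem_range] at hk
    rw [z (k+1) (by omega)]; simp
  intro i hi
  have hN : 1 ≤ N := by
    by_contra hh
    apply hu
    rw [show N = 0 by omega]; simp [ipN]
  rcases Nat.eq_zero_or_pos i with h0 | h0
  · rw [h0, h.g0]; exact key 1 le_rfl hN
  · rcases Nat.lt_or_ge i (N+1) with h1 | h1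
    · exact key i h0 (by omega)
    · rw [show i = N + 1 by omega, h.gN]; exact key N hN le_rfl

theorem ground_exists (hN : 1 ≤ N) (W : ℕ → ℝ) : ∃ l u, Sol N W l u ∧ (∀ i, 0 ≤ u i) ∧
    ipN N u u = 1 ∧ (∀ i, |u i| ≤ 1) ∧ (∀ y, l * ipN N y y ≤ qB N W y y) := by
  have z0 : ∀ y, ipN N (fun _ => 0) y = 0 := by intro y; simp [ipN]
  obtain ⟨x, hx1, _, hmin⟩ := exists_min hN W (fun _ => 0) (Pi.single 1 1) (z0 _) (by
    apply Finset.sum_pos'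
    · intro i _; exact mul_self_nonneg _
    · exact ⟨0, by simp; omega, by simp⟩)
  set l := qB N W x x with hl
  have hmin' : ∀ y, l * ipN N y y ≤ qB N W y y := fun y => hmin y (z0 y)
  set u := clampN N (fun i => |x i|) with hu
  have ex : ∀ i, 1 ≤ i → i ≤ N → u i = |x i| := clamp_eq _
  have hx1' : ipN N (fun i => |x i|) (fun i => |x i|) = 1 := by
    rw [← hx1]
    exact Finset.sum_congr rfl fun i _ => abs_mul_abs_self _
  have huu : ipN N u u = 1 := by
    rw [ip_congr ex ex]; exact hx1'
  have hle : qB N W u u ≤ l := by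
    rw [qB_congr ex ex, hl]
    simp only [qB, enN, poN]
    apply add_le_add
    · apply Finset.sum_le_sum
      intro i _
      have := abs_abs_sub_abs_le_abs_sub (x (i+2)) (x (i+1))
      have := mul_self_le_mul_self (abs_nonneg _) this
      rwa [abs_mul_abs_self, abs_mul_abs_self] at this
    · apply Finset.sum_le_sum
      intro i _
      rw [abs_mul_abs_self]
  have heq : qB N W u u = l * ipN N u u := by
    apply le_antisymm
    · rw [huu, mul_one]; exact hle
    · exact hmin' u
  have g0 := clamp_0 hN (fun i => |x i|)
  have gN := clamp_N hN (fun i => |x i|)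
  refine ⟨l, u, sol_of_qB hN g0 gN ?_, ?_, huu, clamp_abs_le hN hx1', hmin'⟩
  · intro y
    exact euler_lagrange (fun _ => 0) u l (z0 _) heq (fun y _ => hmin' y) y (z0 _)
  · intro i; exact abs_nonneg _

/-- ground state representation -/
theorem gsr (hN : 1 ≤ N) {l : ℝ} {u : ℕ → ℝ} (h : Sol N W l u) (f : ℕ → ℝ) :
    qB N W (fun i => u i * f i) (fun i => u i * f i) - l * ipN N (fun i => u i * f i) (fun i => u i * f i)
    = ∑ i ∈ Finset.range (N-1), u (i+1) * u (i+2) * (f (i+2) - f (i+1))^2 := by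
  have e := h.qB hN (fun i => u i * f i^2)
  have e1 : ipN N (fun i => u i * f i) (fun i => u i * f i) = ipN N u (fun i => u i * f i^2) :=
    Finset.sum_congr rfl fun i _ => by ring
  have e2 : poN N W (fun i => u i * f i) (fun i => u i * f i) = poN N W u (fun i => u i * f i^2) :=
    Finset.sum_congr rfl fun i _ => by ring
  rw [e1, ← e]
  simp only [qB]
  rw [e2, add_sub_add_right_eq_sub]
  simp only [enN, ← Finset.sum_sub_distrib]
  exact Finset.sum_congr rfl fun i _ => by ring

theorem lagrange_id (u p : ℕ → ℝ) :
    ∑ i ∈ Finset.range N, ∑ j ∈ Finset.range N, (u (i+1) * p (j+1) - u (j+1) * p (i+1))^2 =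
    2 * (ipN N u u * ipN N p p - (ipN N u p)^2) := by
  have e : ∀ i j, (u (i+1) * p (j+1) - u (j+1) * p (i+1))^2 =
     (u (i+1) * u (i+1)) * (p (j+1) * p (j+1)) + (p (i+1) * p (i+1)) * (u (j+1) * u (j+1))
      - 2 * ((u (i+1) * p (i+1)) * (u (j+1) * p (j+1))) := by intro i j; ring
  simp only [e, Finset.sum_sub_distrib, Finset.sum_add_distrib, ← Finset.mul_sum, ← Finset.sum_mul]
  simp only [ipN]
  ring

theorem state_exists (hN : 2 ≤ N) (W : ℕ → ℝ) : ∃ l1 l2 u v, GState N W l1 l2 u v := by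
  have hN1 : 1 ≤ N := by omega
  obtain ⟨l1, u, su, un, uu, ub, umin⟩ := ground_exists hN1 W
  have up := su.pos un (by rw [uu]; exact one_ne_zero)
  obtain ⟨x, xx, ux, xmin⟩ := exists_min hN1 W u
    (fun i => if i = 1 then u 2 else if i = 2 then - u 1 else 0) (by
      obtain ⟨n, rfl⟩ : ∃ n, N = n + 2 := ⟨N-2, by omega⟩
      simp [ipN, Finset.sum_range_succ']; ring) (by
      apply Finset.sum_pos'
      · intro i _; exact mul_self_nonneg _
      · refine ⟨0, by simp; omega, ?_⟩
        simp
        exact (up 2 (by omega)).ne')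
  set l2 := qB N W x x with hl2
  have hle : l1 ≤ l2 := by
    have := umin x
    rw [xx, mul_one] at this
    exact this
  have var : ∀ y, l1 * (ipN N u y)^2 + l2 * (ipN N y y - (ipN N u y)^2) ≤ qB N W y y := by
    intro y
    set c := ipN N u y with hc
    have h1 := xmin (fun i => 1 * y i + (-c) * u i) (by
      rw [ip_comb', uu, ← hc]; ring)
    rw [ip_comb, ip_comb', ip_comb', qB_comb, qB_comb', qB_comb', qB_comm y u, ip_comm y u, su.qB hN1,
      su.qB hN1, uu, ← hc] at h1
    nlinarith
  set f : ℕ → ℝ := fun i => x i / u i with hf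
  set h : ℕ → ℝ := fun i => ∑ j ∈ Finset.range i, |f (j+1) - f j| with hh
  have hfx : ∀ i, 1 ≤ i → i ≤ N → x i = u i * f i := by
    intro i h1 h2
    have := up i (by omega)
    simp only [hf]; field_simp
  have hstep : ∀ i, h (i+1) - h i = |f (i+1) - f i| := by
    intro i; simp only [hh]; rw [Finset.sum_range_succ]; ring
  have hdom0 : ∀ i j, i ≤ j → |f j - f i| ≤ h j - h i := by
    intro i j hij
    induction j, hij using Nat.le_induction with
    | base => simp
    | succ j hj ih =>
      have := hstep j
      have t := abs_add_le (f (j+1) - f j) (f j - f i)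
      rw [show f (j+1) - f j + (f j - f i) = f (j+1) - f i by ring] at t
      linarith
  have hdom : ∀ i j, (f j - f i)^2 ≤ (h j - h i)^2 := by
    intro i j
    rcases le_total i j with hij | hij
    · have := hdom0 i j hij
      rw [← sq_abs (f j - f i)]
      have := abs_nonneg (f j - f i)
      gcongr
    · have := hdom0 j i hij
      rw [← sq_abs (f j - f i), abs_sub_comm]
      have h0 := abs_nonneg (f i - f j)
      have : |f i - f j|^2 ≤ (h i - h j)^2 := by gcongr
      linarith [show (h i - h j)^2 = (h j - h i)^2 by ring]
  set p : ℕ → ℝ := fun i => u i * h i with hp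
  have energy : qB N W p p - l1 * ipN N p p = l2 - l1 := by
    have e1 := gsr hN1 su h
    have e2 := gsr hN1 su f
    have : ipN N (fun i => u i * f i) (fun i => u i * f i) = ipN N x x := 
      (ip_congr hfx hfx).symm
    rw [this, xx] at e2
    have : qB N W (fun i => u i * f i) (fun i => u i * f i) = qB N W x x := 
      (qB_congr hfx hfx).symm
    rw [this, mul_one] at e2
    rw [e1, e2]
    apply Finset.sum_congr rfl
    intro i _
    rw [hstep (i+1), sq_abs]
  set c := ipN N u p with hc
  have hvar : 1 ≤ ipN N p p - c^2 := by
    have e1 := lagrange_id (N := N) u p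
    have e2 := lagrange_id (N := N) u x
    rw [uu, ← hc] at e1
    rw [uu, ux, xx] at e2
    have : ∑ i ∈ Finset.range N, ∑ j ∈ Finset.range N, (u (i+1) * x (j+1) - u (j+1) * x (i+1))^2 ≤
       ∑ i ∈ Finset.range N, ∑ j ∈ Finset.range N, (u (i+1) * p (j+1) - u (j+1) * p (i+1))^2 := by
      apply Finset.sum_le_sum
      intro i hi
      apply Finset.sum_le_sum
      intro j hj
      rw [Finset.mem_range] at hi hj
      rw [hfx (i+1) (by omega) (by omega), hfx (j+1) (by omega) (by omega)]
      have a1 : (u (i+1) * (u (j+1) * f (j+1)) - u (j+1) * (u (i+1) * f (i+1)))^2 =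
        (u (i+1) * u (j+1))^2 * (f (j+1) - f (i+1))^2 := by ring
      have a2 : (u (i+1) * p (j+1) - u (j+1) * p (i+1))^2 =
        (u (i+1) * u (j+1))^2 * (h (j+1) - h (i+1))^2 := by simp only [hp]; ring
      rw [a1, a2]
      have := hdom (i+1) (j+1)
      gcongr
    linarith
  set w : ℕ → ℝ := fun i => 1 * p i + (-c) * u i with hw
  have hww : ipN N w w = ipN N p p - c^2 := by
    simp only [hw]
    rw [ip_comb, ip_comb', ip_comb', ip_comm p u, uu, ← hc]; ring
  have hqw : qB N W w w = qB N W p p - l1 * c^2 := by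
    simp only [hw]
    rw [qB_comb, qB_comb', qB_comb', qB_comm p u, su.qB hN1, su.qB hN1, uu, ← hc]; ring
  have huw : ipN N u w = 0 := by
    simp only [hw]
    rw [ip_comb', uu, ← hc]; ring
  have hql : qB N W w w = l2 * ipN N w w := by
    have m := xmin w huw
    apply le_antisymm _ m
    rw [hqw, hww]
    nlinarith
  obtain ⟨k, kp, v, hv, vv, vb, v0, vN⟩ := normalizeN hN1 w (by rw [hww]; linarith)
  have hv' : ∀ i, 1 ≤ i → i ≤ N → v i = k * w i + 0 * w i := by
    intro i h1 h2; rw [hv i h1 h2]; ring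
  have huv : ipN N u v = 0 := by
    rw [ip_congr (fun i _ _ => rfl) hv', ip_comb', huw]; ring
  have hqv : qB N W v v = l2 * ipN N v v := by
    rw [qB_scale k w v hv, ip_scale k w v hv, hql]; ring
  have sv : Sol N W l2 v := by
    apply sol_of_qB hN1 v0 vN
    intro y
    have el := euler_lagrange u v l2 huv hqv xmin (fun i => 1 * y i + (-(ipN N u y)) * u i) (by
      rw [ip_comb', uu]; ring)
    rw [qB_comb', ip_comb', qB_comm v u, su.qB hN1, ip_comm v u, huv] at el
    linarith
  refine ⟨l1, l2, u, v, su, sv, un, uu, vv, huv, ?_, hle, var, ub, vb⟩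
  intro i hi
  rw [hv (i+1) (by omega) (by omega), hv (i+2) (by omega) (by omega)]
  have : u (i+1) * (k * w (i+2)) - u (i+2) * (k * w (i+1)) = k * (u (i+1) * u (i+2) * (h (i+2) - h (i+1))) := by
    simp only [hw, hp]; ring
  rw [this, hstep (i+1)]
  have := un (i+1)
  have := un (i+2)
  positivity

end


section
variable {N : ℕ} {W : ℕ → ℝ}

theorem Sol.comb {l : ℝ} {x y : ℕ → ℝ} (hx : Sol N W l x) (hy : Sol N W l y) (a b : ℝ) :
    Sol N W l (fun i => a * x i + b * y i) := by
  refine ⟨?_, ?_, ?_⟩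
  · show a * x 0 + b * y 0 = a * x 1 + b * y 1
    rw [hx.g0, hy.g0]
  · show a * x (N+1) + b * y (N+1) = a * x N + b * y N
    rw [hx.gN, hy.gN]
  · intro i hi
    have e1 := hx.hrec i hi
    have e2 := hy.hrec i hi
    show a * x (i+2) + b * y (i+2) + (a * x i + b * y i) = _ * (a * x (i+1) + b * y (i+1))
    linear_combination a * e1 + b * e2

theorem Sol.prop {l : ℝ} {x y : ℕ → ℝ} (hx : Sol N W l x) (hy : Sol N W l y) :
    ∀ i, i ≤ N + 1 → y 1 * x i = x 1 * y i := by
  have h := (hx.comb hy (y 1) (-(x 1))).zero 0 (by omega) (by rw [hx.g0, hy.g0]; ring) (by ring)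
  intro i hi
  have := h i hi
  linarith

theorem Sol.ext_of {l : ℝ} {x y : ℕ → ℝ} (hx : Sol N W l x) (hy : Sol N W l y)
    (xx : ipN N x x = 1) (yy : ipN N y y = 1) (hp : 0 < x 1 * y 1) :
    ∀ i, i ≤ N + 1 → x i = y i := by
  have hpr := hx.prop hy
  have hy1 : y 1 ≠ 0 := by rintro h; rw [h] at hp; simp at hp
  have hc : ∀ i, i ≤ N + 1 → x i = (x 1 / y 1) * y i := by
    intro i hi
    have := hpr i hi
    field_simp
    linarith
  have hs := ip_scale (N := N) (x 1 / y 1) y x (fun i _ h2 => hc i (by omega))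
  rw [xx, yy, mul_one] at hs
  have hpos : 0 < x 1 / y 1 := by
    have : x 1 / y 1 = x 1 * y 1 / (y 1)^2 := by field_simp
    rw [this]; positivity
  have h1 : x 1 / y 1 = 1 := by nlinarith
  intro i hi
  rw [hc i hi, h1, one_mul]

namespace GState
variable {l1 l2 : ℝ} {u v : ℕ → ℝ}

theorem upos (h : GState N W l1 l2 u v) : ∀ i, i ≤ N + 1 → 0 < u i :=
  h.su.pos h.un (by rw [h.uu]; exact one_ne_zero)

theorem vne (h : GState N W l1 l2 u v) (j : ℕ) (hj : j ≤ N) (h0 : v j = 0) : v (j+1) ≠ 0 := by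
  intro h1
  have z := h.sv.zero j hj h0 h1
  have := h.vv
  have e : ipN N v v = 0 := by
    apply Finset.sum_eq_zero
    intro k hk
    rw [Finset.mem_range] at hk
    rw [z (k+1) (by omega)]; simp
  rw [e] at this
  exact zero_ne_one this

theorem lt (h : GState N W l1 l2 u v) (hN : 1 ≤ N) : l1 < l2 := by
  refine lt_of_le_of_ne h.le ?_
  intro he
  have sv := h.sv
  rw [← he] at sv
  have u1 := h.upos 1 (by omega)
  have hv : ∀ i, 1 ≤ i → i ≤ N → v i = (v 1 / u 1) * u i + 0 * u i := by
    intro i _ h2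
    have := sv.prop h.su i (by omega)
    field_simp; linarith
  have := h.uv
  rw [ip_congr (fun i _ _ => rfl) hv, ip_comb', h.uu] at this
  have h0 : v 1 / u 1 = 0 := by linarith
  have vv := h.vv
  rw [ip_scale (v 1 / u 1) u v (fun i h1 h2 => by rw [hv i h1 h2]; ring), h0] at vv
  simp at vv

theorem wstep (h : GState N W l1 l2 u v) (j : ℕ) (hj : j < N) :
    u (j+1) * v (j+2) - u (j+2) * v (j+1) = u j * v (j+1) - u (j+1) * v j - (l2 - l1) * (u (j+1) * v (j+1)) := by
  have e1 := h.su.hrec j hj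
  have e2 := h.sv.hrec j hj
  linear_combination u (j+1) * e2 - v (j+1) * e1

theorem w0 (h : GState N W l1 l2 u v) : u 0 * v 1 - u 1 * v 0 = 0 := by
  rw [h.su.g0, h.sv.g0]; ring

theorem wN (h : GState N W l1 l2 u v) : u N * v (N+1) - u (N+1) * v N = 0 := by
  rw [h.su.gN, h.sv.gN]; ring

theorem wnn (h : GState N W l1 l2 u v) (j : ℕ) (hj : j ≤ N) : 0 ≤ u j * v (j+1) - u (j+1) * v j := by
  rcases Nat.eq_zero_or_pos j with h0 | h0
  · rw [h0, h.w0]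
  · rcases Nat.eq_or_lt_of_le hj with h1 | h1
    · rw [h1, h.wN]
    · have := h.g (j-1) (by omega)
      rwa [show j - 1 + 1 = j by omega, show j - 1 + 2 = j + 1 by omega] at this

theorem wpos (h : GState N W l1 l2 u v) (j : ℕ) (h1 : 1 ≤ j) (h2 : j < N) :
    0 < u j * v (j+1) - u (j+1) * v j := by
  refine lt_of_le_of_ne (h.wnn j h2.le) ?_
  intro h0
  have G := h.lt (by omega)
  have uj := h.upos j (by omega)
  have uj1 := h.upos (j+1) (by omega)
  have s1 := h.wstep j h2
  have n1 := h.wnn (j+1) (by omega)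
  rw [show j + 1 + 1 = j + 2 by ring, s1, ← h0] at n1
  have s0 := h.wstep (j-1) (by omega)
  have n0 := h.wnn (j-1) (by omega)
  rw [show j - 1 + 1 = j by omega] at s0 n0
  rw [show j - 1 + 2 = j + 1 by omega, ← h0] at s0
  have v1 : v (j+1) ≤ 0 := by
    by_contra hh; push Not at hh
    have : 0 < (l2 - l1) * (u (j+1) * v (j+1)) := mul_pos (by linarith) (mul_pos uj1 hh)
    linarith
  have v0 : 0 ≤ v j := by
    by_contra hh; push Not at hh
    have : 0 < (l2 - l1) * (u j * (- v j)) := mul_pos (by linarith) (mul_pos uj (by linarith))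
    linarith
  have a1 : u j * v (j+1) ≤ 0 := mul_nonpos_of_nonneg_of_nonpos uj.le v1
  have a2 : 0 ≤ u (j+1) * v j := mul_nonneg uj1.le v0
  have b1 : u j * v (j+1) = 0 := by linarith
  have b2 : u (j+1) * v j = 0 := by linarith
  have c1 : v (j+1) = 0 := by rcases mul_eq_zero.1 b1 with hh | hh; linarith; exact hh
  have c2 : v j = 0 := by rcases mul_eq_zero.1 b2 with hh | hh; linarith; exact hh
  exact h.vne j h2.le c2 c1

theorem v1neg (h : GState N W l1 l2 u v) (hN : 2 ≤ N) : v 1 < 0 := by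
  have G := h.lt (by omega)
  have s := h.wstep 0 (by omega)
  have p := h.wpos 1 le_rfl (by omega)
  have w := h.w0
  have u1 := h.upos 1 (by omega)
  simp only [zero_add] at s
  rw [show 1 + 1 = 2 by norm_num] at p
  by_contra hh; push Not at hh
  have : 0 ≤ (l2 - l1) * (u 1 * v 1) := mul_nonneg (by linarith) (mul_nonneg u1.le hh)
  linarith

theorem vNpos (h : GState N W l1 l2 u v) (hN : 2 ≤ N) : 0 < v N := by
  have G := h.lt (by omega)
  have s := h.wstep (N-1) (by omega)
  have p := h.wpos (N-1) (by omega) (by omega)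
  have w := h.wN
  have u1 := h.upos N (by omega)
  rw [show N - 1 + 1 = N by omega] at s p
  rw [show N - 1 + 2 = N + 1 by omega] at s
  by_contra hh; push Not at hh
  have : 0 ≤ (l2 - l1) * (u N * (-v N)) := mul_nonneg (by linarith) (mul_nonneg u1.le (by linarith))
  linarith

theorem uniq (hN : 2 ≤ N) (h : GState N W l1 l2 u v) {l1' l2' : ℝ} {u' v' : ℕ → ℝ}
    (h' : GState N W l1' l2' u' v') : l1 = l1' ∧ l2 = l2' ∧
    (∀ i, 1 ≤ i → i ≤ N → u i = u' i) ∧ (∀ i, 1 ≤ i → i ≤ N → v i = v' i) := by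
  have hN1 : 1 ≤ N := by omega
  have e1 : l1 = l1' := by
    have a := h.su.qB hN1 u'
    have b := h'.su.qB hN1 u
    rw [qB_comm, ip_comm] at b
    have : 0 < ipN N u u' := by
      apply Finset.sum_pos
      · intro i hi
        rw [Finset.mem_range] at hi
        exact mul_pos (h.upos _ (by omega)) (h'.upos _ (by omega))
      · exact ⟨0, by simp; omega⟩
    have : l1 * ipN N u u' = l1' * ipN N u u' := by linarith
    exact mul_right_cancel₀ (by positivity) this
  subst e1
  have eu : ∀ i, 1 ≤ i → i ≤ N → u i = u' i := by
    intro i _ h2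
    exact h.su.ext_of h'.su h.uu h'.uu (mul_pos (h.upos 1 (by omega)) (h'.upos 1 (by omega))) i (by omega)
  have e2 : l2 = l2' := by
    apply le_antisymm
    · have a := h.var v'
      rw [h'.vv, ip_congr eu (fun i _ _ => rfl), h'.uv, h'.sv.qB hN1, h'.vv] at a
      linarith
    · have a := h'.var v
      rw [h.vv, ip_congr (fun i h1 h2 => (eu i h1 h2).symm) (fun i _ _ => rfl), h.uv, h.sv.qB hN1, h.vv] at a
      linarith
  subst e2
  refine ⟨rfl, rfl, eu, ?_⟩
  intro i _ h2
  exact h.sv.ext_of h'.sv h.vv h'.vv (mul_pos_of_neg_of_neg (h.v1neg hN) (h'.v1neg hN)) i (by omega)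

end GState

/-- convexity: three chords -/
theorem convex3 (D : ℕ → ℝ) (hD : ∀ i : ℕ, 2 ≤ i → i < N → 0 ≤ D (i - 1) - 2 * D i + D (i + 1))
    (a b c : ℕ) (ha : 1 ≤ a) (hab : a < b) (hbc : b < c) (hc : c ≤ N) :
    ((c:ℝ) - b) * (D b - D a) ≤ ((b:ℝ) - a) * (D c - D b) := by
  have inc : ∀ i j, 1 ≤ i → i ≤ j → j < N → D (i+1) - D i ≤ D (j+1) - D j := by
    intro i j hi hij
    induction j, hij using Nat.le_induction with
    | base => intro _; exact le_rfl
    | succ j hj ih =>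
      intro hjN
      have := ih (by omega)
      have h2 := hD (j+1) (by omega) hjN
      rw [show j + 1 - 1 = j by omega] at h2
      linarith
  have up : ∀ c, b ≤ c → c ≤ N → ((c:ℝ) - b) * (D (b+1) - D b) ≤ D c - D b := by
    intro c hc
    induction c, hc using Nat.le_induction with
    | base => intro _; simp
    | succ c hc ih =>
      intro hcN
      have := ih (by omega)
      have := inc b c (by omega) hc (by omega)
      push_cast
      linarith
  have dn : ∀ a, a ≤ b → 1 ≤ a → D b - D a ≤ ((b:ℝ) - a) * (D (b+1) - D b) := by
    intro a ha
    induction ha using Nat.decreasingInduction with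
    | self => intro _; simp
    | of_succ k hk ih =>
      intro h1
      have := ih (by omega)
      have := inc k b h1 (by omega) (by omega)
      push_cast at *
      linarith
  have h1 := up c hbc.le hc
  have h2 := dn a hab.le ha
  have p1 : (0:ℝ) ≤ c - b := by
    have : (b:ℝ) ≤ c := by exact_mod_cast hbc.le
    linarith
  have p2 : (0:ℝ) ≤ b - a := by
    have : (a:ℝ) ≤ b := by exact_mod_cast hab.le
    linarith
  have h3 := mul_le_mul_of_nonneg_left h2 p1
  have h4 := mul_le_mul_of_nonneg_left h1 p2
  linarith

theorem chord (hN : 2 ≤ N) (M : ℝ) (f : ℕ → ℝ) 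
    (hW : ∀ i : ℕ, 2 ≤ i → i < N → 0 ≤ W (i - 1) - 2 * W i + W (i + 1))
    (hM : ∀ i, 1 ≤ i → i < N → |W (i+1) - W i| ≤ M)
    (hf : ∀ i j, 1 ≤ i → i < j → j ≤ N → f i < f j) (hfN : 0 < f N) :
    ∃ s c : ℝ, |s| ≤ M ∧ ∀ i, 1 ≤ i → i ≤ N → 0 ≤ (W i - (s * i + c)) * (f i^2 - 1) ∧ 
      ((W i - (s * i + c)) * (f i^2 - 1) = 0 → W i - (s * i + c) = 0) := by
  classical
  have exk : ∃ k, 1 ≤ k ∧ (k = N - 1 ∨ -1 < f (k+1)) := ⟨N-1, by omega, Or.inl rfl⟩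
  obtain ⟨k, hk1, hkN, kl, kr⟩ : ∃ k, 1 ≤ k ∧ k < N ∧ (∀ i, 1 ≤ i → i < k → f i < -1) ∧
      (∀ i, k < i → i ≤ N → -1 < f i) := by
    have hs := Nat.find_spec exk
    have hm : ∀ j, j < Nat.find exk → ¬ _ := fun j hj => Nat.find_min exk hj
    have hle : Nat.find exk ≤ N - 1 := Nat.find_min' exk ⟨by omega, Or.inl rfl⟩
    generalize Nat.find exk = k at *
    refine ⟨k, hs.1, by omega, ?_, ?_⟩
    · intro i h1 h2
      have := hm i h2
      push Not at this
      have := (this h1).2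
      have := hf i (i+1) h1 (by omega) (by omega)
      linarith
    · intro i h1 h2
      rcases hs.2 with e | e
      · rw [show i = N by omega]; linarith
      · rcases Nat.eq_or_lt_of_le (show k + 1 ≤ i by omega) with e2 | e2
        · rw [← e2]; exact e
        · have := hf (k+1) i (by omega) e2 h2
          linarith
  have exm : ∃ m, k < m ∧ (m = N ∨ 1 ≤ f m) := ⟨N, hkN, Or.inl rfl⟩
  obtain ⟨m, hkm, hmN, ml, mr⟩ : ∃ m, k < m ∧ m ≤ N ∧ (∀ i, k < i → i < m → f i < 1) ∧
      (∀ i, m < i → i ≤ N → 1 < f i) := by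
    have hs := Nat.find_spec exm
    have hm : ∀ j, j < Nat.find exm → ¬ _ := fun j hj => Nat.find_min exm hj
    have hle : Nat.find exm ≤ N := Nat.find_min' exm ⟨by omega, Or.inl rfl⟩
    generalize Nat.find exm = m at *
    refine ⟨m, hs.1, by omega, ?_, ?_⟩
    · intro i h1 h2
      have := hm i h2
      push Not at this
      exact (this h1).2
    · intro i h1 h2
      rcases hs.2 with e | e
      · omega
      · have := hf m i (by omega) h1 h2
        linarith
  have hkm' : (0:ℝ) < m - k := by
    have : (k:ℝ) < m := by exact_mod_cast hkm
    linarith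
  set s := (W m - W k) / (m - k) with hs
  have hsm : s * (m - k) = W m - W k := by rw [hs]; field_simp
  refine ⟨s, W k - s * k, ?_, ?_⟩
  · have key : ∀ m, k ≤ m → m ≤ N → |W m - W k| ≤ M * (m - k) := by
      intro m hm
      induction m, hm using Nat.le_induction with
      | base => intro _; simp
      | succ m hm ih =>
        intro hmN
        have a1 := ih (by omega)
        have a2 := hM m (by omega) (by omega)
        have := abs_add_le (W (m+1) - W m) (W m - W k)
        rw [show W (m+1) - W m + (W m - W k) = W (m+1) - W k by ring] at this
        push_cast
        linarith
    have := key m hkm.le hmN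
    rw [hs, abs_div, abs_of_pos hkm', div_le_iff₀ hkm']
    exact this
  · set D : ℕ → ℝ := fun i => W i - (s * i + (W k - s * k)) with hDdef
    have hDc : ∀ i : ℕ, 2 ≤ i → i < N → 0 ≤ D (i - 1) - 2 * D i + D (i + 1) := by
      intro i h1 h2
      have := hW i h1 h2
      simp only [hDdef]
      rw [Nat.cast_sub (by omega)]
      push_cast
      linarith
    have Dk : D k = 0 := by simp only [hDdef]; ring
    have Dm : D m = 0 := by simp only [hDdef]; linarith
    intro i h1 h2
    show 0 ≤ D i * _ ∧ (D i * _ = 0 → D i = 0)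
    have c3 := convex3 D hDc
    rcases lt_trichotomy i k with hik | hik | hik
    · have := c3 i k m h1 hik hkm hmN
      rw [Dk, Dm] at this
      have hD : 0 ≤ D i := by
        by_contra hh; push Not at hh
        have : 0 < ((m:ℝ) - k) * (- D i) := mul_pos hkm' (by linarith)
        linarith
      have hd : 0 < f i^2 - 1 := by have := kl i h1 hik; nlinarith
      exact ⟨mul_nonneg hD hd.le, fun h => (mul_eq_zero.1 h).resolve_right hd.ne'⟩
    · rw [hik, Dk]; simp
    · rcases lt_trichotomy i m with him | him | him
      · have := c3 k i m hk1 hik him hmN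
        rw [Dk, Dm] at this
        have hD : D i ≤ 0 := by
          by_contra hh; push Not at hh
          have : 0 < ((m:ℝ) - k) * (D i) := mul_pos hkm' (by linarith)
          linarith
        have hd : f i^2 - 1 < 0 := by 
          have := kr i hik h2
          have := ml i hik him
          nlinarith
        exact ⟨mul_nonneg_of_nonpos_of_nonpos hD hd.le, fun h => (mul_eq_zero.1 h).resolve_right hd.ne⟩
      · rw [him, Dm]; simp
      · have := c3 k m i hk1 hkm him h2
        rw [Dk, Dm] at this
        have hD : 0 ≤ D i := by
          by_contra hh; push Not at hh
          have : 0 < ((m:ℝ) - k) * (- D i) := mul_pos hkm' (by linarith)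
          linarith
        have hd : 0 < f i^2 - 1 := by have := mr i him h2; nlinarith
        exact ⟨mul_nonneg hD hd.le, fun h => (mul_eq_zero.1 h).resolve_right hd.ne'⟩

end


structure Adm (N : ℕ) (Wb : ℕ → ℝ) (M : ℝ) (W : ℕ → ℝ) : Prop where
  base : ∀ i, (i ≤ 1 ∨ N < i) → W i = Wb i
  conv : ∀ i : ℕ, 2 ≤ i → i < N → 0 ≤ W (i - 1) - 2 * W i + W (i + 1)
  slope : ∀ i, 1 ≤ i → i < N → |W (i+1) - W i| ≤ M

abbrev XSp := (ℕ → ℝ) × ℝ × ℝ × (ℕ → ℝ) × (ℕ → ℝ)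

def KSet (N : ℕ) (Wb : ℕ → ℝ) (M : ℝ) : Set XSp :=
  {p | Adm N Wb M p.1 ∧ GState N p.1 p.2.1 p.2.2.1 p.2.2.2.1 p.2.2.2.2}

section
variable {N : ℕ} {Wb : ℕ → ℝ} {M : ℝ}

theorem sol_iff {W : ℕ → ℝ} {l : ℝ} {u : ℕ → ℝ} : Sol N W l u ↔ 
    (u 0 = u 1 ∧ u (N+1) = u N ∧ ∀ i, i < N → u (i+2) + u i = (2 + W (i+1) - l) * u (i+1)) :=
  ⟨fun h => ⟨h.g0, h.gN, h.hrec⟩, fun ⟨a, b, c⟩ => ⟨a, b, c⟩⟩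

theorem adm_iff {W : ℕ → ℝ} : Adm N Wb M W ↔ 
    ((∀ i, (i ≤ 1 ∨ N < i) → W i = Wb i) ∧
     (∀ i : ℕ, 2 ≤ i → i < N → 0 ≤ W (i - 1) - 2 * W i + W (i + 1)) ∧
     (∀ i, 1 ≤ i → i < N → |W (i+1) - W i| ≤ M)) :=
  ⟨fun h => ⟨h.base, h.conv, h.slope⟩, fun ⟨a, b, c⟩ => ⟨a, b, c⟩⟩

theorem gstate_iff {W : ℕ → ℝ} {l1 l2 : ℝ} {u v : ℕ → ℝ} : GState N W l1 l2 u v ↔ 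
  (Sol N W l1 u ∧ Sol N W l2 v ∧ (∀ i, 0 ≤ u i) ∧ ipN N u u = 1 ∧ ipN N v v = 1 ∧ ipN N u v = 0 ∧
  (∀ i, i + 1 < N → 0 ≤ u (i+1) * v (i+2) - u (i+2) * v (i+1)) ∧
  l1 ≤ l2 ∧
  (∀ x, l1 * (ipN N u x)^2 + l2 * (ipN N x x - (ipN N u x)^2) ≤ qB N W x x) ∧
  (∀ i, |u i| ≤ 1) ∧
  (∀ i, |v i| ≤ 1)) :=
  ⟨fun h => ⟨h.su, h.sv, h.un, h.uu, h.vv, h.uv, h.g, h.le, h.var, h.ub, h.vb⟩,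
   fun ⟨a, b, c, d, e, f, g, h, i, j, k⟩ => ⟨a, b, c, d, e, f, g, h, i, j, k⟩⟩

theorem KSet_closed : IsClosed (KSet N Wb M) := by
  unfold KSet
  simp only [gstate_iff, adm_iff, sol_iff, Set.ofPred_and, Set.ofPred_forall, ipN, qB, enN, poN]
  repeat' apply IsClosed.inter
  all_goals repeat' (refine isClosed_iInter fun _ => ?_)
  all_goals first
    | (apply isClosed_eq <;> fun_prop)
    | (apply isClosed_le <;> fun_prop)

theorem Adm.bound (hM : 0 ≤ M) {W : ℕ → ℝ} (h : Adm N Wb M W) (i : ℕ) :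
    |W i| ≤ |Wb i| + |Wb 1| + M * i := by
  by_cases hi : i ≤ 1 ∨ N < i
  · rw [h.base i hi]
    have := abs_nonneg (Wb 1)
    have : 0 ≤ M * i := by positivity
    linarith
  · push Not at hi
    have key : ∀ j, 1 ≤ j → j ≤ N → |W j| ≤ |Wb 1| + M * j := by
      intro j hj
      induction j, hj using Nat.le_induction with
      | base => 
        intro _; rw [h.base 1 (by simp)]; push_cast; linarith
      | succ j hj ih =>
        intro hjN
        have a := ih (by omega)
        have b := h.slope j hj (by omega)
        have := abs_add_le (W (j+1) - W j) (W j)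
        rw [sub_add_cancel] at this
        push_cast
        linarith
    have := key i (by omega) hi.2
    have := abs_nonneg (Wb i)
    linarith

theorem eig_bound (hN : 1 ≤ N) {W C : ℕ → ℝ} (hC : ∀ i, |W i| ≤ C i) {l : ℝ} {u : ℕ → ℝ} (h : Sol N W l u)
    (uu : ipN N u u = 1) (ub : ∀ i, |u i| ≤ 1) : 
    |l| ≤ ∑ _i ∈ Finset.range (N-1), (4:ℝ) + ∑ i ∈ Finset.range N, C (i+1) := by
  have e := h.qB hN u
  rw [uu, mul_one] at e
  rw [← e]
  simp only [qB, enN, poN]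
  refine (abs_add_le _ _).trans (add_le_add ?_ ?_)
  · refine (Finset.abs_sum_le_sum_abs _ _).trans (Finset.sum_le_sum ?_)
    intro i _
    rw [abs_mul]
    have t : |u (i+2) - u (i+1)| ≤ 2 := by
      have a := abs_le.1 (ub (i+2))
      have b := abs_le.1 (ub (i+1))
      rw [abs_le]; constructor <;> linarith
    nlinarith [abs_nonneg (u (i+2) - u (i+1))]
  · refine (Finset.abs_sum_le_sum_abs _ _).trans (Finset.sum_le_sum ?_)
    intro i _
    rw [abs_mul, abs_mul]
    have a := ub (i+1)
    have b := hC (i+1)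
    have c := abs_nonneg (u (i+1))
    have d := abs_nonneg (W (i+1))
    nlinarith [mul_le_one₀ a c a, mul_nonneg c c]

theorem KSet_compact (hN : 1 ≤ N) (hM : 0 ≤ M) : IsCompact (KSet N Wb M) := by
  set C : ℕ → ℝ := fun i => |Wb i| + |Wb 1| + M * i with hC
  set B : ℝ := ∑ _i ∈ Finset.range (N-1), (4:ℝ) + ∑ i ∈ Finset.range N, C (i+1) with hB
  have c1 : IsCompact {x : ℕ → ℝ | ∀ i, x i ∈ Set.Icc (-C i) (C i)} :=
    isCompact_pi_infinite fun i => isCompact_Icc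
  have c2 : IsCompact {x : ℕ → ℝ | ∀ i, x i ∈ Set.Icc (-1:ℝ) 1} :=
    isCompact_pi_infinite fun i => isCompact_Icc
  have c3 : IsCompact (Set.Icc (-B) B) := isCompact_Icc
  have cc := c1.prod (c3.prod (c3.prod (c2.prod c2)))
  refine cc.of_isClosed_subset KSet_closed ?_
  rintro ⟨W, l1, l2, u, v⟩ ⟨ha, hs⟩
  have hb := ha.bound hM
  refine ⟨fun i => abs_le.1 (hb i), abs_le.1 (eig_bound hN hb hs.su hs.uu hs.ub),
    abs_le.1 (eig_bound hN hb hs.sv hs.vv hs.vb), fun i => abs_le.1 (hs.ub i), fun i => abs_le.1 (hs.vb i)⟩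

theorem poN_qB (W Y : ℕ → ℝ) (t : ℝ) (x y : ℕ → ℝ) :
    qB N (fun i => W i + t * Y i) x y = qB N W x y + t * poN N Y x y := by
  simp only [qB, poN, Finset.mul_sum]
  rw [add_assoc, ← Finset.sum_add_distrib]
  congr 1
  exact Finset.sum_congr rfl fun i _ => by ring

theorem Adm.perturb (hN : 2 ≤ N) {W : ℕ → ℝ} (h : Adm N Wb M W) (s : ℝ) (hs : |s| ≤ M) (Y : ℕ → ℝ)
    (hY : ∀ i, 1 ≤ i → i ≤ N → Y i = W 1 + s * (i - 1) - W i)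
    (hY' : ∀ i, (i ≤ 1 ∨ N < i) → Y i = 0) (t : ℝ) (t0 : 0 ≤ t) (t1 : t ≤ 1) :
    Adm N Wb M (fun i => W i + t * Y i) := by
  refine ⟨?_, ?_, ?_⟩
  · intro i hi
    show W i + t * Y i = _
    rw [hY' i hi, h.base i hi]; ring
  · intro i h1 h2
    show 0 ≤ W (i-1) + t * Y (i-1) - 2 * (W i + t * Y i) + (W (i+1) + t * Y (i+1))
    rw [hY i (by omega) (by omega), hY (i-1) (by omega) (by omega), hY (i+1) (by omega) (by omega),
      Nat.cast_sub (by omega)]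
    have := mul_nonneg (by linarith : 0 ≤ 1 - t) (h.conv i h1 h2)
    push_cast
    linarith
  · intro i h1 h2
    show |W (i+1) + t * Y (i+1) - (W i + t * Y i)| ≤ M
    rw [hY i h1 (by omega), hY (i+1) (by omega) (by omega)]
    have e : W (i+1) + t * (W 1 + s * ((i+1:ℕ) - 1) - W (i+1)) - (W i + t * (W 1 + s * (i - 1) - W i))
      = (1 - t) * (W (i+1) - W i) + t * s := by push_cast; ring
    rw [e]
    have a := abs_le.1 (h.slope i h1 h2)
    have b := abs_le.1 hs
    rw [abs_le]
    constructor <;> nlinarith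

theorem tendsto_ip {x : ℕ → ℕ → ℝ} {y z : ℕ → ℝ} (h : ∀ i, 1 ≤ i → i ≤ N → Filter.Tendsto (fun n => x n i) Filter.atTop (nhds (y i))) :
    Filter.Tendsto (fun n => ipN N z (x n)) Filter.atTop (nhds (ipN N z y)) := by
  simp only [ipN]
  apply tendsto_finsetSum
  intro i hi
  rw [Finset.mem_range] at hi
  exact (h (i+1) (by omega) (by omega)).const_mul _

theorem tendsto_po {Y : ℕ → ℝ} {x : ℕ → ℕ → ℝ} {y z : ℕ → ℝ} (h : ∀ i, 1 ≤ i → i ≤ N → Filter.Tendsto (fun n => x n i) Filter.atTop (nhds (y i))) :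
    Filter.Tendsto (fun n => poN N Y z (x n)) Filter.atTop (nhds (poN N Y z y)) := by
  simp only [poN]
  apply tendsto_finsetSum
  intro i hi
  rw [Finset.mem_range] at hi
  exact ((h (i+1) (by omega) (by omega)).const_mul _).const_mul _

theorem first_var (hN : 2 ≤ N) (hM : 0 ≤ M) (W : ℕ → ℝ) (l1 l2 : ℝ) (u v : ℕ → ℝ)
    (ha : Adm N Wb M W) (hs : GState N W l1 l2 u v)
    (hmin : ∀ W' l1' l2' u' v', Adm N Wb M W' → GState N W' l1' l2' u' v' → l2 - l1 ≤ l2' - l1')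
    (s : ℝ) (hsM : |s| ≤ M) :
    0 ≤ ∑ i ∈ Finset.range N, (W 1 + s * i - W (i+1)) * (v (i+1)^2 - u (i+1)^2) := by
  have hN1 : 1 ≤ N := by omega
  classical
  set Y : ℕ → ℝ := fun i => if 1 ≤ i ∧ i ≤ N then W 1 + s * (i - 1) - W i else 0 with hYd
  have hY : ∀ i, 1 ≤ i → i ≤ N → Y i = W 1 + s * (i - 1) - W i := by
    intro i h1 h2; simp [hYd, h1, h2]
  have hY' : ∀ i, (i ≤ 1 ∨ N < i) → Y i = 0 := by
    intro i hi
    by_cases h1 : i = 1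
    · rw [h1, hY 1 le_rfl hN1]; simp
    · simp only [hYd]; rw [if_neg (by omega)]
  set t : ℕ → ℝ := fun n => 1 / ((n:ℝ) + 1) with ht
  have tpos : ∀ n, 0 < t n := by intro n; simp only [ht]; positivity
  have tle : ∀ n, t n ≤ 1 := by
    intro n; simp only [ht]; rw [div_le_one (by positivity)]
    have : (0:ℝ) ≤ n := by positivity
    linarith
  have tlim : Filter.Tendsto t Filter.atTop (nhds 0) := tendsto_one_div_add_atTop_nhds_zero_nat
  have hadm : ∀ n, Adm N Wb M (fun i => W i + t n * Y i) := fun n =>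
    ha.perturb hN s hsM Y hY hY' (t n) (tpos n).le (tle n)
  choose L1 L2 U V hst using fun n => state_exists hN (fun i => W i + t n * Y i)
  set σ : ℕ → XSp := fun n => (fun i => W i + t n * Y i, L1 n, L2 n, U n, V n) with hσ
  obtain ⟨⟨W', l1', l2', u', v'⟩, hK, φ, hφ, hlim⟩ := (KSet_compact (N := N) (Wb := Wb) hN1 hM).tendsto_subseq
    (x := σ) (fun n => ⟨hadm n, hst n⟩)
  have tφ : Filter.Tendsto (fun n => t (φ n)) Filter.atTop (nhds 0) := tlim.comp hφ.tendsto_atTop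
  have lW := (Prod.tendsto_iff _ _).1 hlim
  have lU := ((Prod.tendsto_iff _ _).1 ((Prod.tendsto_iff _ _).1 ((Prod.tendsto_iff _ _).1 lW.2).2).2)
  have lU1 := lU.1
  have lV1 := lU.2
  have lW1 := lW.1
  rw [tendsto_pi_nhds] at lU1 lV1 lW1
  have hWW : W' = W := by
    funext i
    refine tendsto_nhds_unique (lW1 i) ?_
    have := (tφ.mul_const (Y i)).const_add (W i)
    rw [zero_mul, add_zero] at this
    exact this
  have hs' : GState N W l1' l2' u' v' := hWW ▸ hK.2
  obtain ⟨_, _, eu, ev⟩ := hs.uniq hN hs'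
  have lU2 : ∀ i, 1 ≤ i → i ≤ N → Filter.Tendsto (fun n => U (φ n) i) Filter.atTop (nhds (u i)) := by
    intro i h1 h2; rw [eu i h1 h2]; exact lU1 i
  have lV2 : ∀ i, 1 ≤ i → i ≤ N → Filter.Tendsto (fun n => V (φ n) i) Filter.atTop (nhds (v i)) := by
    intro i h1 h2; rw [ev i h1 h2]; exact lV1 i
  have iu := tendsto_ip (z := u) lU2
  have iv := tendsto_ip (z := v) lV2
  rw [hs.uu] at iu
  rw [hs.vv] at iv
  have pu := tendsto_po (Y := Y) (z := u) lU2
  have pv := tendsto_po (Y := Y) (z := v) lV2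
  have lim1 := (pv.div iv one_ne_zero).sub (pu.div iu one_ne_zero)
  have hge : 0 ≤ poN N Y v v / 1 - poN N Y u u / 1 := by
    apply ge_of_tendsto lim1
    filter_upwards [iu.eventually (lt_mem_nhds (show (0:ℝ) < 1 by norm_num)),
      iv.eventually (lt_mem_nhds (show (0:ℝ) < 1 by norm_num))] with n hu0 hv0
    have su := (hst (φ n)).su.qB hN1 u
    have sv := (hst (φ n)).sv.qB hN1 v
    rw [poN_qB, qB_comm, hs.su.qB hN1, ip_comm (U (φ n)) u] at su
    rw [poN_qB, qB_comm, hs.sv.qB hN1, ip_comm (V (φ n)) v] at sv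
    have cu : poN N Y (U (φ n)) u = poN N Y u (U (φ n)) := Finset.sum_congr rfl fun i _ => by ring
    have cv : poN N Y (V (φ n)) v = poN N Y v (V (φ n)) := Finset.sum_congr rfl fun i _ => by ring
    rw [cu] at su
    rw [cv] at sv
    have gap := hmin _ _ _ _ _ (hadm (φ n)) (hst (φ n))
    have tp := tpos (φ n)
    have au : poN N Y u (U (φ n)) / ipN N u (U (φ n)) = (L1 (φ n) - l1) / t (φ n) := by
      rw [div_eq_div_iff hu0.ne' tp.ne']; linarith
    have av : poN N Y v (V (φ n)) / ipN N v (V (φ n)) = (L2 (φ n) - l2) / t (φ n) := by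
      rw [div_eq_div_iff hv0.ne' tp.ne']; linarith
    show 0 ≤ poN N Y v (V (φ n)) / ipN N v (V (φ n)) - poN N Y u (U (φ n)) / ipN N u (U (φ n))
    rw [au, av, ← sub_div]
    apply div_nonneg _ tp.le
    linarith
  have e : poN N Y v v / 1 - poN N Y u u / 1 = 
      ∑ i ∈ Finset.range N, (W 1 + s * i - W (i+1)) * (v (i+1)^2 - u (i+1)^2) := by
    rw [div_one, div_one]
    simp only [poN, ← Finset.sum_sub_distrib]
    apply Finset.sum_congr rfl
    intro i hi
    rw [Finset.mem_range] at hi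
    rw [hY (i+1) (by omega) (by omega)]
    push_cast; ring
  rw [← e]; exact hge

theorem convex_gap (hN : 2 ≤ N) (W : ℕ → ℝ)
    (hW : ∀ i : ℕ, 2 ≤ i → i < N → 0 ≤ W (i - 1) - 2 * W i + W (i + 1)) 
    (l1 l2 : ℝ) (u v : ℕ → ℝ) (hst : GState N W l1 l2 u v) :
    2 * (1 - Real.cos (Real.pi / N)) ≤ l2 - l1 := by
  have hN1 : 1 ≤ N := by omega
  set M := ∑ i ∈ Finset.range N, |W (i+1) - W i| with hM
  have hM0 : 0 ≤ M := Finset.sum_nonneg fun i _ => abs_nonneg _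
  have hadm : Adm N W M W := by
    refine ⟨fun _ _ => rfl, hW, ?_⟩
    intro i _ h2
    exact Finset.single_le_sum (f := fun i => |W (i+1) - W i|) (fun i _ => abs_nonneg _) (by rwa [Finset.mem_range])
  obtain ⟨⟨W0, a1, a2, x, y⟩, hK, hmin⟩ := (KSet_compact (N := N) (Wb := W) hN1 hM0).exists_isMinOn
    ⟨(W, l1, l2, u, v), hadm, hst⟩ (f := fun p : XSp => p.2.2.1 - p.2.1) (by fun_prop)
  have hmin' : ∀ W' l1' l2' u' v', Adm N W M W' → GState N W' l1' l2' u' v' → a2 - a1 ≤ l2' - l1' := by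
    intro W' l1' l2' u' v' h1 h2
    exact hmin (show (W', l1', l2', u', v') ∈ KSet N W M from ⟨h1, h2⟩)
  refine le_trans ?_ (hmin' _ _ _ _ _ hadm hst)
  obtain ⟨ha, hs⟩ := hK
  simp only at ha hs
  have xp := hs.upos
  have hf : ∀ i j, 1 ≤ i → i < j → j ≤ N → y i / x i < y j / x j := by
    intro i j h1 hij
    induction j, (show i + 1 ≤ j from hij) using Nat.le_induction with
    | base => 
      intro h2
      have := hs.wpos i h1 (by omega)
      rw [div_lt_div_iff₀ (xp _ (by omega)) (xp _ (by omega))]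
      linarith
    | succ j hj ih =>
      intro h2
      refine (ih (by omega) (by omega)).trans ?_
      have := hs.wpos j (by omega) (by omega)
      rw [div_lt_div_iff₀ (xp _ (by omega)) (xp _ (by omega))]
      linarith
  obtain ⟨s, c, hsM, hsc⟩ := chord (W := W0) hN M (fun i => y i / x i) ha.conv ha.slope hf
    (div_pos (hs.vNpos hN) (xp N (by omega)))
  have fv := first_var hN hM0 W0 a1 a2 x y ha hs hmin' s hsM
  have hd : ∀ i, i ≤ N → y i^2 - x i^2 = x i^2 * ((y i / x i)^2 - 1) := by
    intro i hi
    have := xp i (by omega)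
    field_simp
  have hsum0 : ∑ i ∈ Finset.range N, (y (i+1)^2 - x (i+1)^2) = 0 := by
    have h1 := hs.uu
    have h2 := hs.vv
    simp only [ipN] at h1 h2
    rw [Finset.sum_sub_distrib]
    simp only [pow_two]
    rw [h1, h2]; ring
  have hnn : ∀ i ∈ Finset.range N, 0 ≤ (W0 (i+1) - (s * ((i+1:ℕ):ℝ) + c)) * (y (i+1)^2 - x (i+1)^2) := by
    intro i hi
    rw [Finset.mem_range] at hi
    rw [hd (i+1) (by omega)]
    have := (hsc (i+1) (by omega) (by omega)).1
    have := mul_nonneg (sq_nonneg (x (i+1))) this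
    linarith
  have hle : ∑ i ∈ Finset.range N, (W0 (i+1) - (s * ((i+1:ℕ):ℝ) + c)) * (y (i+1)^2 - x (i+1)^2) = 0 := by
    apply le_antisymm _ (Finset.sum_nonneg hnn)
    have e : ∑ i ∈ Finset.range N, (W0 (i+1) - (s * ((i+1:ℕ):ℝ) + c)) * (y (i+1)^2 - x (i+1)^2)
      = (W0 1 - s - c) * ∑ i ∈ Finset.range N, (y (i+1)^2 - x (i+1)^2) - 
      ∑ i ∈ Finset.range N, (W0 1 + s * i - W0 (i+1)) * (y (i+1)^2 - x (i+1)^2) := by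
      rw [Finset.mul_sum, ← Finset.sum_sub_distrib]
      apply Finset.sum_congr rfl
      intro i _
      push_cast; ring
    rw [e, hsum0]; linarith
  have hz := (Finset.sum_eq_zero_iff_of_nonneg hnn).1 hle
  have hlin : ∀ i, 1 ≤ i → i ≤ N → W0 i = s * i + c := by
    intro i h1 h2
    have z := hz (i-1) (by rw [Finset.mem_range]; omega)
    rw [show i - 1 + 1 = i by omega, hd i h2] at z
    have p : x i^2 ≠ 0 := by have := xp i (by omega); positivity
    have : (W0 i - (s * i + c)) * ((y i / x i)^2 - 1) = 0 := by
      have : x i^2 * ((W0 i - (s * i + c)) * ((y i / x i)^2 - 1)) = 0 := by linarith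
      exact (mul_eq_zero.1 this).resolve_left p
    have := (hsc i h1 h2).2 this
    linarith
  exact linear_gap N hN W0 s c a1 a2 x y hlin hs.su hs.sv (fun i _ h2 => xp i (by omega)) hs.wpos

end


theorem pathH_mulVec (N : ℕ) (hN : 2 ≤ N) (W u : ℕ → ℝ) (h0 : u 0 = u 1) (h1 : u (N+1) = u N) (i : Fin N) :
    (pathH N W).mulVec (fun j => u ((j:ℕ)+1)) i =
      2 * u ((i:ℕ)+1) - u ((i:ℕ)+2) - u (i:ℕ) + W ((i:ℕ)+1) * u ((i:ℕ)+1) := by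
  obtain ⟨i, hi⟩ := i
  set D : ℝ := (if i = 0 ∨ i = N - 1 then (1 : ℝ) else 2) + W (i + 1) with hD
  have e : (pathH N W).mulVec (fun j => u ((j:ℕ)+1)) ⟨i, hi⟩ = 
     ∑ j ∈ Finset.range N, ((if j = i then D * u (i+1) else 0) + (if j = i + 1 then - u (i+2) else 0) + 
      (if j + 1 = i then - u i else 0)) := by
    rw [Finset.sum_range]
    simp only [Matrix.mulVec, dotProduct, pathH, Matrix.of_apply]
    apply Finset.sum_congr rfl
    rintro ⟨j, hj⟩ _
    simp only [Fin.mk.injEq]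
    rcases eq_or_ne i j with rfl | hij
    · simp [hD]
    · rw [if_neg hij, if_neg hij.symm]
      by_cases ha : j = i + 1
      · subst ha
        rw [if_pos (Or.inl rfl), if_pos rfl, if_neg (by omega)]
        ring
      · by_cases hb : j + 1 = i
        · subst hb
          rw [if_pos (Or.inr rfl), if_neg ha, if_pos rfl]
          ring
        · rw [if_neg (by omega), if_neg ha, if_neg hb]; ring
  rw [e, Finset.sum_add_distrib, Finset.sum_add_distrib]
  have s1 : ∑ j ∈ Finset.range N, (if j = i then D * u (i+1) else 0) = D * u (i+1) := by
    rw [Finset.sum_ite_eq', if_pos (by simpa using hi)]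
  have s2 : ∑ j ∈ Finset.range N, (if j = i + 1 then - u (i+2) else 0) = if i + 1 < N then - u (i+2) else 0 := by
    rw [Finset.sum_ite_eq']; simp
  have s3 : ∑ j ∈ Finset.range N, (if j + 1 = i then - u i else 0) = if 0 < i then - u i else 0 := by
    rcases Nat.eq_zero_or_pos i with hz | hz
    · subst hz; simp
    · rw [if_pos hz, Finset.sum_eq_single (i-1)]
      · rw [if_pos (by omega)]
      · intro j _ hj; rw [if_neg (by omega)]
      · intro hh; simp at hh; omega
  rw [s1, s2, s3, hD]
  show _ = 2 * u (i+1) - u (i+2) - u i + W (i+1) * u (i+1)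
  rcases Nat.eq_zero_or_pos i with hz | hz
  · subst hz
    rw [if_pos (Or.inl rfl), if_pos (by omega), if_neg (by omega), h0]; ring_nf
  · by_cases hl : i = N - 1
    · rw [if_pos (Or.inr hl), if_neg (by omega), if_pos hz]
      have : u (i+2) = u (i+1) := by
        rw [show i + 2 = N + 1 by omega, show i + 1 = N by omega, h1]
      rw [this]; ring
    · rw [if_neg (by omega), if_pos (by omega), if_pos hz]; ring

theorem isEigen_of_sol (N : ℕ) (hN : 2 ≤ N) (W u : ℕ → ℝ) (l : ℝ) (h : Sol N W l u) (hu : 0 < u 1) :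
    IsEigen (pathH N W) l := by
  refine ⟨fun j => u ((j:ℕ)+1), ?_, ?_⟩
  · intro hz
    have := congrFun hz ⟨0, by omega⟩
    simp at this
    linarith
  · funext i
    rw [pathH_mulVec N hN W u h.g0 h.gN]
    have := h.hrec i i.2
    simp only [Pi.smul_apply, smul_eq_mul]
    linarith

theorem sol_of_isEigen (N : ℕ) (hN : 2 ≤ N) (W : ℕ → ℝ) (l : ℝ) (h : IsEigen (pathH N W) l) :
    ∃ x, Sol N W l x ∧ 0 < ipN N x x := by
  obtain ⟨w, hw0, hw⟩ := h
  set x0 : ℕ → ℝ := fun i => if h : i - 1 < N then w ⟨i-1, h⟩ else 0 with hx0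
  set x := clampN N x0 with hx
  have hwx : w = fun j : Fin N => x ((j:ℕ)+1) := by
    funext j
    rw [hx, clamp_eq x0 _ (by omega) (by omega)]
    simp [hx0]
  have g0 := clamp_0 (N := N) (by omega) x0
  have gN := clamp_N (N := N) (by omega) x0
  refine ⟨x, ⟨g0, gN, ?_⟩, ?_⟩
  · intro i hi
    have e := congrFun hw ⟨i, hi⟩
    rw [hwx, pathH_mulVec N hN W x g0 gN] at e
    simp only [Pi.smul_apply, smul_eq_mul] at e
    linarith
  · refine lt_of_le_of_ne (ip_self_nonneg x) ?_
    intro hz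
    apply hw0
    have := ip_self_zero hz.symm
    rw [hwx]
    funext j
    exact this _ (by omega) (by omega)

/-- for every `N ≥ 2` and convex potential `W` on `{1,…,N}`, the fundamental
gap of `H_W(P_N)` is at least `2(1 - cos(π/N))`. -/
theorem path_gap_convex (N : ℕ) (hN : 2 ≤ N) (W : ℕ → ℝ)
    (hW : ∀ i : ℕ, 2 ≤ i → i < N → 0 ≤ W (i - 1) - 2 * W i + W (i + 1))
    (l1 l2 : ℝ) (h : TwoSmallest (pathH N W) l1 l2) :
    l2 - l1 ≥ 2 * (1 - Real.cos (Real.pi / N)) := by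
  obtain ⟨a1, a2, u, v, hst⟩ := state_exists hN W
  have hN1 : 1 ≤ N := by omega
  have gap := convex_gap hN W hW a1 a2 u v hst
  obtain ⟨e1, e2, hlt, hmin⟩ := h
  obtain ⟨x, sx, xx⟩ := sol_of_isEigen N hN W l1 e1
  obtain ⟨y, sy, yy⟩ := sol_of_isEigen N hN W l2 e2
  have b1 : l1 ≤ a1 := (hmin a1 (isEigen_of_sol N hN W u a1 hst.su (hst.upos 1 (by omega)))).1
  have hle := hst.le
  have cs : ∀ z, (ipN N u z)^2 ≤ ipN N z z := by
    intro z
    have := lagrange_id (N := N) u z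
    rw [hst.uu] at this
    have p : 0 ≤ ∑ i ∈ Finset.range N, ∑ j ∈ Finset.range N, (u (i+1) * z (j+1) - u (j+1) * z (i+1))^2 :=
      Finset.sum_nonneg fun i _ => Finset.sum_nonneg fun j _ => sq_nonneg _
    linarith
  have b2 : a1 ≤ l1 := by
    have q := hst.var x
    rw [sx.qB hN1] at q
    have := mul_nonneg (sub_nonneg.2 hle) (sub_nonneg.2 (cs x))
    have : a1 * ipN N x x ≤ l1 * ipN N x x := by linarith
    exact le_of_mul_le_mul_right this xx
  have huy : ipN N u y = 0 := by
    have p := hst.su.qB hN1 y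
    have q := sy.qB hN1 u
    rw [qB_comm, ip_comm] at q
    have : (l2 - a1) * ipN N u y = 0 := by linarith
    exact (mul_eq_zero.1 this).resolve_left (by linarith)
  have b3 : a2 ≤ l2 := by
    have q := hst.var y
    rw [sy.qB hN1, huy] at q
    have : a2 * ipN N y y ≤ l2 * ipN N y y := by linarith
    exact le_of_mul_le_mul_right this yy
  linarith
end

section
/- For every integer N ≥ 2 and every convex potential W : {1,…,N} → ℝ there exists a linear potential L : {1,…,N} → ℝ (L_i = a·i + b for some a, b ∈ ℝ) such that Γ(H_W(P_N)) ≥ Γ(H_L(P_N)). -/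
open Matrix Filter Topology

lemma pathH_off (N : ℕ) (W : ℕ → ℝ) {i j : Fin N} (h : i ≠ j) : pathH N W i j ≤ 0 := by
  simp only [pathH, Matrix.of_apply, if_neg h]
  split_ifs <;> norm_num

lemma pathH_adj (N : ℕ) (W : ℕ → ℝ) {i j : Fin N} (h : (i : ℕ) + 1 = j) :
    pathH N W i j = -1 := by
  have : i ≠ j := by rintro rfl; omega
  simp [pathH, this, h]

lemma pathH_symm (N : ℕ) (W : ℕ → ℝ) (i j : Fin N) : pathH N W i j = pathH N W j i := by
  by_cases h : i = j
  · rw [h]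
  · simp only [pathH, Matrix.of_apply, if_neg h, if_neg (Ne.symm h)]
    congr 1
    exact propext or_comm

lemma pathH_nonadj (N : ℕ) (W : ℕ → ℝ) {i j : Fin N} (h : i ≠ j)
    (h1 : (i : ℕ) + 1 ≠ j) (h2 : (j : ℕ) + 1 ≠ i) : pathH N W i j = 0 := by
  simp [pathH, h, h1, h2]

lemma pathH_isSymm (N : ℕ) (W : ℕ → ℝ) : (pathH N W)ᵀ = pathH N W := by
  ext i j; exact pathH_symm N W j i

lemma pathH_herm (N : ℕ) (W : ℕ → ℝ) : (pathH N W).IsHermitian := by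
  ext i j; simpa using pathH_symm N W j i

lemma pathH_dec (N : ℕ) (W : ℕ → ℝ) :
    pathH N W = pathH N 0 + Matrix.diagonal (fun i : Fin N => W ((i : ℕ) + 1)) := by
  ext i j
  by_cases h : i = j
  · subst h; simp [pathH]
  · simp [pathH, h]

lemma pathH_add_smul (N : ℕ) (W D : ℕ → ℝ) (t : ℝ) :
    pathH N (fun k => W k + t * D k) =
      pathH N W + t • Matrix.diagonal (fun i : Fin N => D ((i : ℕ) + 1)) := by
  ext i j
  by_cases h : i = j
  · subst h; simp [pathH]; ring
  · simp [pathH, h]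

lemma pathH_congr (N : ℕ) (W W' : ℕ → ℝ) (h : ∀ k, 1 ≤ k → k ≤ N → W k = W' k) :
    pathH N W = pathH N W' := by
  rw [pathH_dec N W, pathH_dec N W']
  congr 2
  funext i
  exact h _ (by omega) (by omega)

lemma pathH_cont (N : ℕ) : Continuous (fun W : ℕ → ℝ => pathH N W) := by
  have : (fun W : ℕ → ℝ => pathH N W) =
    fun W => pathH N 0 + Matrix.diagonal (fun i : Fin N => W ((i : ℕ) + 1)) := by
      funext W; exact pathH_dec N W
  rw [this]
  refine continuous_const.add ?_
  apply Continuous.matrix_diagonal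
  fun_prop

lemma dot_symm (N : ℕ) (W : ℕ → ℝ) (u v : Fin N → ℝ) :
    u ⬝ᵥ (pathH N W *ᵥ v) = (pathH N W *ᵥ u) ⬝ᵥ v := by
  rw [Matrix.dotProduct_mulVec, ← Matrix.mulVec_transpose, pathH_isSymm]

lemma eig_zero (N : ℕ) (hN : 0 < N) (W : ℕ → ℝ) (v : Fin N → ℝ) (l : ℝ)
    (hv : pathH N W *ᵥ v = l • v) (h0 : v ⟨0, hN⟩ = 0) : v = 0 := by
  have key : ∀ k : ℕ, ∀ i : Fin N, (i : ℕ) ≤ k → v i = 0 := by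
    intro k
    induction k with
    | zero => 
      intro i hi
      have : i = ⟨0, hN⟩ := Fin.ext (by simpa using hi)
      rw [this, h0]
    | succ k ih =>
      intro i hi
      by_cases hik : (i : ℕ) ≤ k
      · exact ih i hik
      have hik' : (i : ℕ) = k + 1 := by omega
      have hk : k < N := by omega
      have hrow := congrFun hv ⟨k, hk⟩
      rw [Matrix.mulVec, dotProduct, Finset.sum_eq_single i] at hrow
      · rw [pathH_adj N W (by simpa using hik'.symm)] at hrow
        rw [Pi.smul_apply, ih ⟨k, hk⟩ le_rfl] at hrow
        simpa using hrow
      · intro j _ hj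
        by_cases hjk : (j : ℕ) ≤ k
        · rw [ih j hjk, mul_zero]
        · rw [pathH_nonadj, zero_mul]
          · intro h; apply hjk; rw [← h]
          · intro h; apply hj; apply Fin.ext; simp at h; omega
          · simp; omega
      · simp
  funext i
  exact key i i le_rfl

lemma eig_unique (N : ℕ) (hN : 0 < N) (W : ℕ → ℝ) (v w : Fin N → ℝ) (l : ℝ)
    (hv : pathH N W *ᵥ v = l • v) (hw : pathH N W *ᵥ w = l • w)
    (hv1 : v ⬝ᵥ v = 1) (hw1 : w ⬝ᵥ w = 1) : w = v ∨ w = -v := by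
  set a := v ⟨0, hN⟩ with ha
  set b := w ⟨0, hN⟩ with hb
  have h := eig_zero N hN W (b • v - a • w) l (by
    rw [Matrix.mulVec_sub, Matrix.mulVec_smul, Matrix.mulVec_smul, hv, hw, smul_sub,
      smul_comm l, smul_comm l]) (by simp [← ha, ← hb]; ring)
  have hbv : b • v = a • w := sub_eq_zero.1 h
  have ha0 : a ≠ 0 := by
    intro h0
    have := eig_zero N hN W v l hv h0
    rw [this] at hv1; simp at hv1
  have hsq : b ^ 2 = a ^ 2 := by
    have h1 : (b • v) ⬝ᵥ (b • v) = b ^ 2 := by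
      rw [smul_dotProduct, dotProduct_smul, hv1]; simp; ring
    have h2 : (a • w) ⬝ᵥ (a • w) = a ^ 2 := by
      rw [smul_dotProduct, dotProduct_smul, hw1]; simp; ring
    rw [← h1, ← h2, hbv]
  rcases sq_eq_sq_iff_eq_or_eq_neg.1 hsq with h | h
  · left
    rw [h] at hbv
    exact (smul_right_injective _ ha0 hbv).symm
  · right
    rw [h] at hbv
    apply smul_right_injective _ ha0
    simp only [← hbv, smul_neg, neg_smul]

/-- quadratic form -/
noncomputable def qf (N : ℕ) (W : ℕ → ℝ) (v : Fin N → ℝ) : ℝ := v ⬝ᵥ (pathH N W *ᵥ v)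

/-- ground state and first excited state -/
structure GG (N : ℕ) (W : ℕ → ℝ) (x y : Fin N → ℝ) : Prop where
  xx : x ⬝ᵥ x = 1
  yy : y ⬝ᵥ y = 1
  xy : x ⬝ᵥ y = 0
  ex : pathH N W *ᵥ x = qf N W x • x
  ey : pathH N W *ᵥ y = qf N W y • y
  mx : ∀ z : Fin N → ℝ, qf N W x * (z ⬝ᵥ z) ≤ qf N W z
  my : ∀ z : Fin N → ℝ, qf N W y * (z ⬝ᵥ z) + (qf N W x - qf N W y) * (z ⬝ᵥ x) ^ 2 ≤ qf N W z

lemma GG_exists (N : ℕ) (hN : 2 ≤ N) (W : ℕ → ℝ) : ∃ x y, GG N W x y := by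
  have hA := pathH_herm N W
  set e := hA.eigenvectorBasis with he
  set ev := hA.eigenvalues with hev
  let E : Fin N → Fin N → ℝ := fun k => (e k).ofLp
  have hE : ∀ k, pathH N W *ᵥ E k = ev k • E k := fun k => hA.mulVec_eigenvectorBasis k
  have horth : ∀ k l, E k ⬝ᵥ E l = if k = l then 1 else 0 := by
    intro k l
    have := orthonormal_iff_ite.1 e.orthonormal l k
    simp only [EuclideanSpace.inner_eq_star_dotProduct] at this
    simp only [star_trivial] at this
    rw [show E k ⬝ᵥ E l = _ from this]
    simp [eq_comm]
  have hpars : ∀ z w : Fin N → ℝ, ∑ k, (z ⬝ᵥ E k) * (w ⬝ᵥ E k) = z ⬝ᵥ w := by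
    intro z w
    have := e.sum_inner_mul_inner (WithLp.toLp 2 z) (WithLp.toLp 2 w)
    simp only [EuclideanSpace.inner_eq_star_dotProduct, star_trivial] at this
    rw [dotProduct_comm z w, ← this]
    apply Finset.sum_congr rfl
    intro k _
    rw [dotProduct_comm z]
  have hq : ∀ z, qf N W z = ∑ k, ev k * (z ⬝ᵥ E k) ^ 2 := by
    intro z
    rw [qf, ← hpars]
    apply Finset.sum_congr rfl
    intro k _
    rw [← dot_symm, hE, dotProduct_smul]
    simp; ring
  have hqE : ∀ k, qf N W (E k) = ev k := by
    intro k
    rw [qf, hE, dotProduct_smul, horth]; simp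
  have : Nonempty (Fin N) := ⟨⟨0, by omega⟩⟩
  obtain ⟨i, hi⟩ := Finite.exists_min ev
  obtain ⟨j, hj, hjm⟩ := Finset.exists_min_image (Finset.univ.erase i) ev (by
    rw [← Finset.card_pos, Finset.card_erase_of_mem (Finset.mem_univ _)]
    simp; omega)
  have hji : j ≠ i := Finset.ne_of_mem_erase hj
  refine ⟨E i, E j, ?_, ?_, ?_, ?_, ?_, ?_, ?_⟩
  · simp [horth]
  · simp [horth]
  · simp [horth, hji.symm]
  · rw [hqE, hE]
  · rw [hqE, hE]
  · intro z
    rw [hqE, hq, ← hpars z z, Finset.mul_sum]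
    apply Finset.sum_le_sum
    intro k _
    nlinarith [hi k, sq_nonneg (z ⬝ᵥ E k)]
  · intro z
    rw [hqE, hqE, hq, ← hpars z z, ← Finset.add_sum_erase _ _ (Finset.mem_univ i),
      ← Finset.add_sum_erase (a := i) Finset.univ (fun k => ev k * (z ⬝ᵥ E k) ^ 2) (Finset.mem_univ i)]
    have : ev j * ∑ k ∈ Finset.univ.erase i, (z ⬝ᵥ E k) * (z ⬝ᵥ E k) ≤
        ∑ k ∈ Finset.univ.erase i, ev k * (z ⬝ᵥ E k) ^ 2 := by
      rw [Finset.mul_sum]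
      apply Finset.sum_le_sum
      intro k hk
      nlinarith [hjm k hk, sq_nonneg (z ⬝ᵥ E k)]
    nlinarith

lemma GG_lt {N : ℕ} (hN : 2 ≤ N) {W : ℕ → ℝ} {x y : Fin N → ℝ} (h : GG N W x y) :
    qf N W x < qf N W y := by
  have h1 := h.mx y
  rw [h.yy, mul_one] at h1
  refine lt_of_le_of_ne h1 ?_
  intro he
  have hy := h.ey
  rw [← he] at hy
  have hxy := h.xy
  rcases eig_unique N (by omega) W x y _ h.ex hy h.xx h.yy with h2 | h2
  · rw [h2, h.xx] at hxy; norm_num at hxy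
  · rw [h2, dotProduct_neg, h.xx] at hxy; norm_num at hxy

lemma GG_unique {N : ℕ} (hN : 2 ≤ N) {W : ℕ → ℝ} {x y x' y' : Fin N → ℝ} (h : GG N W x y)
    (h' : GG N W x' y') : qf N W x' = qf N W x ∧ qf N W y' = qf N W y ∧
      (x' = x ∨ x' = -x) ∧ (y' = y ∨ y' = -y) := by
  have e1 : qf N W x' = qf N W x := by
    have h1 := h.mx x'
    have h2 := h'.mx x
    rw [h'.xx, mul_one] at h1
    rw [h.xx, mul_one] at h2
    exact le_antisymm h2 h1
  have ex' := h'.ex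
  rw [e1] at ex'
  have hx := eig_unique N (by omega) W x x' _ h.ex ex' h.xx h'.xx
  have d1 : y' ⬝ᵥ x = 0 := by
    have := h'.xy
    rw [dotProduct_comm]
    rcases hx with rfl | rfl
    · exact this
    · simpa using this
  have d2 : y ⬝ᵥ x' = 0 := by
    have := h.xy
    rw [dotProduct_comm]
    rcases hx with rfl | rfl
    · exact this
    · simpa using this
  have e2 : qf N W y' = qf N W y := by
    have h1 := h.my y'
    have h2 := h'.my y
    rw [h'.yy, d1] at h1
    rw [h.yy, d2] at h2
    linarith
  have ey' := h'.ey
  rw [e2] at ey'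
  exact ⟨e1, e2, hx, eig_unique N (by omega) W y y' _ h.ey ey' h.yy h'.yy⟩

lemma min_eig (N : ℕ) (W : ℕ → ℝ) (l : ℝ) (hl : ∀ z : Fin N → ℝ, l * (z ⬝ᵥ z) ≤ qf N W z)
    (a : Fin N → ℝ) (ha : qf N W a = l * (a ⬝ᵥ a)) : pathH N W *ᵥ a = l • a := by
  have hq : ∀ z : Fin N → ℝ, z ⬝ᵥ ((pathH N W - l • (1 : Matrix (Fin N) (Fin N) ℝ)) *ᵥ z)
      = qf N W z - l * (z ⬝ᵥ z) := by
    intro z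
    rw [Matrix.sub_mulVec, dotProduct_sub, Matrix.smul_mulVec, Matrix.one_mulVec,
      dotProduct_smul]; rfl
  have hps : (pathH N W - l • (1 : Matrix (Fin N) (Fin N) ℝ)).PosSemidef := by
    apply Matrix.PosSemidef.of_dotProduct_mulVec_nonneg
    · apply (pathH_herm N W).sub
      ext i j; simp [Matrix.one_apply, eq_comm]
    · intro z
      rw [star_trivial, hq]
      linarith [hl z]
  have := (hps.dotProduct_mulVec_zero_iff a).1 (by rw [star_trivial, hq, ha, sub_self])
  rw [Matrix.sub_mulVec, Matrix.smul_mulVec, Matrix.one_mulVec] at this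
  exact sub_eq_zero.1 this

lemma GG_abs {N : ℕ} (hN : 2 ≤ N) {W : ℕ → ℝ} {x y : Fin N → ℝ} (h : GG N W x y) :
    ∃ x', GG N W x' y ∧ (∀ i, 0 < x' i) ∧ (x' = x ∨ x' = -x) := by
  set a : Fin N → ℝ := fun i => |x i| with ha
  have haa : a ⬝ᵥ a = 1 := by
    rw [← h.xx]; simp [dotProduct, ha]
  have hqa : qf N W a ≤ qf N W x := by
    simp only [qf, dotProduct, Matrix.mulVec, Finset.mul_sum]
    apply Finset.sum_le_sum; intro i _
    apply Finset.sum_le_sum; intro j _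
    by_cases hij : i = j
    · subst hij
      simp only [ha]
      have h3 := abs_mul_abs_self (x i)
      apply le_of_eq
      linear_combination (pathH N W i i) * h3
    · have h1 := pathH_off N W hij
      have h2 : x i * x j ≤ |x i| * |x j| := by rw [← abs_mul]; exact le_abs_self _
      simp only [ha]
      nlinarith
  have hqa' : qf N W a = qf N W x := by
    have := h.mx a
    rw [haa, mul_one] at this
    exact le_antisymm hqa this
  have hea := min_eig N W _ h.mx a (by rw [haa, mul_one, hqa'])
  have hor := eig_unique N (by omega) W x a _ h.ex hea h.xx haa
  refine ⟨a, ?_, ?_, hor⟩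
  · refine ⟨haa, h.yy, ?_, ?_, h.ey, ?_, ?_⟩
    · rcases hor with h1 | h1 <;> rw [h1] <;> simp [h.xy]
    · rw [hqa', hea]
    · rw [hqa']; exact h.mx
    · rw [hqa']
      rcases hor with h1 | h1 <;> rw [h1] <;> simpa using h.my
  · have ha0 : ∀ i, 0 ≤ a i := fun i => abs_nonneg _
    have hnb : ∀ i j : Fin N, (j : ℕ) + 1 = i → a i = 0 → a j = 0 := by
      intro i j hij hi
      have hrow := congrFun hea i
      rw [Pi.smul_apply, hi, smul_zero, Matrix.mulVec, dotProduct] at hrow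
      have := (Finset.sum_eq_zero_iff_of_nonpos (fun k _ => by
        by_cases hik : i = k
        · rw [← hik, hi, mul_zero]
        · exact mul_nonpos_of_nonpos_of_nonneg (pathH_off N W hik) (ha0 k))).1 hrow j
          (Finset.mem_univ _)
      rw [pathH_symm, pathH_adj N W hij] at this
      linarith
    have hz : ∀ k : ℕ, ∀ i : Fin N, (i : ℕ) = k → a i ≠ 0 := by
      intro k
      induction k with
      | zero =>
        intro i hi h0
        have : i = ⟨0, by omega⟩ := Fin.ext hi
        rw [this] at h0
        have := eig_zero N (by omega) W a _ hea h0
        rw [this] at haa; simp at haa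
      | succ k ih =>
        intro i hi h0
        exact ih ⟨k, by omega⟩ rfl (hnb i ⟨k, by omega⟩ hi.symm h0)
    intro i
    exact lt_of_le_of_ne (ha0 i) (Ne.symm (hz i i rfl))

lemma energy_id (N : ℕ) (W : ℕ → ℝ) (x : Fin N → ℝ) (l : ℝ) (hx : pathH N W *ᵥ x = l • x)
    (f : Fin N → ℝ) :
    qf N W (fun i => x i * f i) - l * ((fun i => x i * f i) ⬝ᵥ (fun i => x i * f i)) =
      -(1/2) * ∑ i, ∑ j, pathH N W i j * (x i * x j) * (f i - f j) ^ 2 := by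
  have hA : l * ((fun i => x i * f i) ⬝ᵥ (fun i => x i * f i)) =
      ∑ i, ∑ j, pathH N W i j * (x i * x j) * (f i) ^ 2 := by
    rw [dotProduct, Finset.mul_sum]
    apply Finset.sum_congr rfl
    intro i _
    have h := congrFun hx i
    rw [Pi.smul_apply, smul_eq_mul, Matrix.mulVec, dotProduct] at h
    calc l * (x i * f i * (x i * f i)) = (l * x i) * (x i * f i ^ 2) := by ring
      _ = _ := by
        rw [← h, Finset.sum_mul]
        apply Finset.sum_congr rfl
        intro j _; ring
  have hA' : ∑ i, ∑ j, pathH N W i j * (x i * x j) * (f i) ^ 2 =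
      ∑ i, ∑ j, pathH N W i j * (x i * x j) * (f j) ^ 2 := by
    rw [Finset.sum_comm]
    apply Finset.sum_congr rfl; intro i _
    apply Finset.sum_congr rfl; intro j _
    rw [pathH_symm]; ring
  have hQ : qf N W (fun i => x i * f i) =
      ∑ i, ∑ j, pathH N W i j * (x i * x j) * (f i * f j) := by
    simp only [qf, dotProduct, Matrix.mulVec, Finset.mul_sum]
    apply Finset.sum_congr rfl; intro i _
    apply Finset.sum_congr rfl; intro j _
    ring
  have hS : ∑ i, ∑ j, pathH N W i j * (x i * x j) * (f i - f j) ^ 2 =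
      ∑ i, ∑ j, pathH N W i j * (x i * x j) * (f i) ^ 2
      - 2 * ∑ i, ∑ j, pathH N W i j * (x i * x j) * (f i * f j)
      + ∑ i, ∑ j, pathH N W i j * (x i * x j) * (f j) ^ 2 := by
    simp only [Finset.mul_sum, ← Finset.sum_sub_distrib, ← Finset.sum_add_distrib]
    apply Finset.sum_congr rfl; intro i _
    apply Finset.sum_congr rfl; intro j _
    ring
  rw [hS, hQ, hA, ← hA']; ring

lemma var_id {N : ℕ} (w f : Fin N → ℝ) (hw : ∑ i, w i = 1) :
    ∑ i, ∑ j, w i * w j * (f i - f j) ^ 2 =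
      2 * (∑ i, w i * f i ^ 2 - (∑ i, w i * f i) ^ 2) := by
  have h1 : ∑ i, ∑ j, w i * w j * (f i) ^ 2 = ∑ i, w i * f i ^ 2 := by
    apply Finset.sum_congr rfl; intro i _
    rw [← mul_one (w i * f i ^ 2), ← hw, Finset.mul_sum]
    apply Finset.sum_congr rfl; intro j _
    ring
  have h2 : ∑ i, ∑ j, w i * w j * (f j) ^ 2 = ∑ i, w i * f i ^ 2 := by
    rw [Finset.sum_comm, ← h1]
    apply Finset.sum_congr rfl; intro i _
    apply Finset.sum_congr rfl; intro j _
    ring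
  have h3 : ∑ i, ∑ j, w i * w j * (f i * f j) = (∑ i, w i * f i) ^ 2 := by
    rw [sq, Finset.sum_mul_sum]
    apply Finset.sum_congr rfl; intro i _
    apply Finset.sum_congr rfl; intro j _
    ring
  have hS : ∑ i, ∑ j, w i * w j * (f i - f j) ^ 2 =
      ∑ i, ∑ j, w i * w j * (f i) ^ 2 - 2 * ∑ i, ∑ j, w i * w j * (f i * f j)
      + ∑ i, ∑ j, w i * w j * (f j) ^ 2 := by
    simp only [Finset.mul_sum, ← Finset.sum_sub_distrib, ← Finset.sum_add_distrib]
    apply Finset.sum_congr rfl; intro i _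
    apply Finset.sum_congr rfl; intro j _
    ring
  rw [hS, h1, h2, h3]; ring

lemma exists_rearr (N : ℕ) (f : Fin N → ℝ) : ∃ F : Fin N → ℝ,
    (∀ i j : Fin N, (i : ℕ) + 1 = j → F j - F i = |f j - f i|) ∧
    (∀ i j : Fin N, i ≤ j → |f j - f i| ≤ F j - F i) := by
  let g : ℕ → ℝ := fun k => if h : k < N then f ⟨k, h⟩ else 0
  have hg : ∀ i : Fin N, f i = g i := fun i => by simp [g]
  let G : ℕ → ℝ := fun k => ∑ m ∈ Finset.range k, |g (m + 1) - g m|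
  refine ⟨fun i => G i, ?_, ?_⟩
  · intro i j hij
    simp only [hg, ← hij, G, Finset.sum_range_succ]; ring
  · intro i j hij
    simp only [hg]
    have : ∀ b : ℕ, (i : ℕ) ≤ b → |g b - g i| ≤ G b - G i := by
      intro b hb
      induction b, hb using Nat.le_induction with
      | base => simp
      | succ b hb ih =>
        have : G (b + 1) = G b + |g (b + 1) - g b| := by simp only [G, Finset.sum_range_succ]
        have h2 := abs_add_le (g (b + 1) - g b) (g b - g i)
        rw [show g (b + 1) - g b + (g b - g i) = g (b + 1) - g i by ring] at h2
        linarith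
    exact this j hij

lemma ratio_mono {N : ℕ} (hN : 2 ≤ N) {W : ℕ → ℝ} {x y : Fin N → ℝ} (h : GG N W x y)
    (hx : ∀ i, 0 < x i) (f : Fin N → ℝ) (hf : ∀ i, y i = x i * f i) :
    Monotone f ∨ Antitone f := by
  obtain ⟨F, hF1, hF2⟩ := exists_rearr N f
  have hyf : y = fun i => x i * f i := funext hf
  have hgap := GG_lt hN h
  set l := qf N W x with hl
  set m := qf N W y with hm
  have hw : ∑ i, x i ^ 2 = 1 := by
    rw [← h.xx]; simp [dotProduct, sq]
  obtain ⟨c, hc⟩ : ∃ c, c = ∑ i, x i ^ 2 * F i := ⟨_, rfl⟩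
  have hE1 := energy_id N W x l h.ex f
  have hE2 := energy_id N W x l h.ex (fun i => F i - c)
  have hEE : ∑ i, ∑ j, pathH N W i j * (x i * x j) * (f i - f j) ^ 2 =
      ∑ i, ∑ j, pathH N W i j * (x i * x j) * ((F i - c) - (F j - c)) ^ 2 := by
    apply Finset.sum_congr rfl; intro i _
    apply Finset.sum_congr rfl; intro j _
    by_cases hij : i = j
    · subst hij; simp
    by_cases h1 : (i : ℕ) + 1 = j
    · have := hF1 i j h1
      congr 1
      rw [← sq_abs (f i - f j), abs_sub_comm, ← this]; ring
    by_cases h2 : (j : ℕ) + 1 = i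
    · have := hF1 j i h2
      congr 1
      rw [← sq_abs (f i - f j), ← this]; ring
    · rw [pathH_nonadj N W hij h1 h2]; ring
  rw [← hEE, ← hE1, ← hyf, h.yy, ← hm] at hE2
  set Y : Fin N → ℝ := fun i => x i * (F i - c) with hY
  have hYx : Y ⬝ᵥ x = 0 := by
    have : Y ⬝ᵥ x = ∑ i, x i ^ 2 * F i - c * ∑ i, x i ^ 2 := by
      rw [dotProduct, Finset.mul_sum, ← Finset.sum_sub_distrib]
      apply Finset.sum_congr rfl; intro i _
      simp only [hY]; ring
    rw [this, hw, ← hc]; ring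
  have hYm := h.my Y
  rw [hYx, ← hl, ← hm] at hYm
  have hYY : Y ⬝ᵥ Y ≤ 1 := by nlinarith
  have hVF := var_id (fun i => x i ^ 2) F hw
  have hVf := var_id (fun i => x i ^ 2) f hw
  have e1 : Y ⬝ᵥ Y = ∑ i, x i ^ 2 * F i ^ 2 - (∑ i, x i ^ 2 * F i) ^ 2 := by
    have : Y ⬝ᵥ Y = ∑ i, x i ^ 2 * F i ^ 2 - 2 * c * ∑ i, x i ^ 2 * F i
        + c ^ 2 * ∑ i, x i ^ 2 := by
      rw [dotProduct, Finset.mul_sum, Finset.mul_sum, ← Finset.sum_sub_distrib,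
        ← Finset.sum_add_distrib]
      apply Finset.sum_congr rfl; intro i _
      simp only [hY]; ring
    rw [this, hw, ← hc]; ring
  have e2 : ∑ i, x i ^ 2 * f i ^ 2 = 1 := by
    rw [← h.yy, dotProduct]
    apply Finset.sum_congr rfl; intro i _
    rw [hf]; ring
  have e3 : ∑ i, x i ^ 2 * f i = 0 := by
    rw [← h.xy, dotProduct]
    apply Finset.sum_congr rfl; intro i _
    rw [hf]; ring
  have habs : ∀ i j, |f i - f j| ≤ |F i - F j| := by
    intro i j
    rcases le_total i j with hij | hij
    · rw [abs_sub_comm, abs_sub_comm (F i)]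
      exact (hF2 i j hij).trans (le_abs_self _)
    · exact (hF2 j i hij).trans (le_abs_self _)
  have hle : ∀ i j, x i ^ 2 * x j ^ 2 * (f i - f j) ^ 2 ≤ x i ^ 2 * x j ^ 2 * (F i - F j) ^ 2 := by
    intro i j
    exact mul_le_mul_of_nonneg_left (sq_le_sq.2 (habs i j)) (by positivity)
  have hsum : ∑ i, ∑ j, x i ^ 2 * x j ^ 2 * (F i - F j) ^ 2 ≤
      ∑ i, ∑ j, x i ^ 2 * x j ^ 2 * (f i - f j) ^ 2 := by
    rw [hVF, hVf, e2, e3, ← e1]; linarith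
  have hlast : ∀ i j, |f i - f j| = |F i - F j| := by
    by_contra hcon
    push Not at hcon
    obtain ⟨i, j, hij⟩ := hcon
    have hlt : |f i - f j| < |F i - F j| := lt_of_le_of_ne (habs i j) hij
    refine absurd hsum (not_le.2 ?_)
    apply Finset.sum_lt_sum (fun a _ => Finset.sum_le_sum (fun b _ => hle a b))
    refine ⟨i, Finset.mem_univ _, ?_⟩
    apply Finset.sum_lt_sum (fun b _ => hle i b)
    refine ⟨j, Finset.mem_univ _, ?_⟩
    exact mul_lt_mul_of_pos_left (sq_lt_sq.2 hlt) (by have := hx i; have := hx j; positivity)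
  set p : Fin N := ⟨0, by omega⟩ with hp
  set q : Fin N := ⟨N - 1, by omega⟩ with hq
  have hpi : ∀ i, p ≤ i := fun i => Fin.mk_le_of_le_val (Nat.zero_le _)
  have hiq : ∀ i, i ≤ q := fun i => by
    rw [Fin.le_def]; simp only [hq]; omega
  have hpq := hlast q p
  have hFpq : 0 ≤ F q - F p := (abs_nonneg _).trans (hF2 p q (hpi q))
  rw [abs_of_nonneg hFpq] at hpq
  rcases le_total 0 (f q - f p) with h0 | h0
  · left
    intro i j hij
    rw [abs_of_nonneg h0] at hpq
    have a1 := (abs_le.1 (hF2 p i (hpi i))).2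
    have a2 := (abs_le.1 (hF2 j q (hiq j))).2
    have a3 := (abs_nonneg _).trans (hF2 i j hij)
    linarith
  · right
    intro i j hij
    rw [abs_of_nonpos h0] at hpq
    have a1 := (abs_le.1 (hF2 p i (hpi i))).1
    have a2 := (abs_le.1 (hF2 j q (hiq j))).1
    have a3 := (abs_nonneg _).trans (hF2 i j hij)
    linarith

/-- discrete convexity on `[1,N]` -/
def Cvx (N : ℕ) (W : ℕ → ℝ) : Prop :=
  ∀ i : ℕ, 2 ≤ i → i < N → 0 ≤ W (i - 1) - 2 * W i + W (i + 1)

lemma slope_mono {N : ℕ} {W : ℕ → ℝ} (hW : Cvx N W) {a b : ℕ} (ha : 1 ≤ a) (hab : a ≤ b)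
    (hb : b < N) : W (a + 1) - W a ≤ W (b + 1) - W b := by
  induction b, hab using Nat.le_induction with
  | base => exact le_rfl
  | succ b hab ih =>
    have := hW (b + 1) (by omega) hb
    simp only [Nat.add_sub_cancel] at this
    linarith [ih (by omega)]

lemma three_pt {N : ℕ} {W : ℕ → ℝ} (hW : Cvx N W) {a b c : ℕ} (ha : 1 ≤ a) (hab : a ≤ b)
    (hbc : b ≤ c) (hc : c ≤ N) :
    ((c : ℝ) - a) * W b ≤ ((c : ℝ) - b) * W a + ((b : ℝ) - a) * W c := by
  rcases eq_or_lt_of_le hbc with rfl | hbc'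
  · simp
  set s := W (b + 1) - W b with hs
  have h1 : W b - W a ≤ ((b : ℝ) - a) * s := by
    have : ∀ d : ℕ, a ≤ d → d ≤ b → W d - W a ≤ ((d : ℝ) - a) * s := by
      intro d hd
      induction d, hd using Nat.le_induction with
      | base => simp
      | succ d hd ih =>
        intro hdb
        have h2 := ih (by omega)
        have h3 := slope_mono hW (a := d) (b := b) (by omega) (by omega) (by omega)
        push_cast
        linarith
    exact this b hab le_rfl
  have h2 : ((c : ℝ) - b) * s ≤ W c - W b := by
    have : ∀ d : ℕ, b ≤ d → d ≤ N → ((d : ℝ) - b) * s ≤ W d - W b := by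
      intro d hd
      induction d, hd using Nat.le_induction with
      | base => simp
      | succ d hd ih =>
        intro hdb
        have h2 := ih (by omega)
        have h3 := slope_mono hW (a := b) (b := d) (by omega) (by omega) (by omega)
        push_cast
        linarith
    exact this c hbc hc
  have h3 : (0 : ℝ) ≤ (c : ℝ) - b := by
    have : (b : ℝ) ≤ c := by exact_mod_cast hbc
    linarith
  have h4 : (0 : ℝ) ≤ (b : ℝ) - a := by
    have : (a : ℝ) ≤ b := by exact_mod_cast hab
    linarith
  have h5 := mul_le_mul_of_nonneg_left h1 h3
  have h6 := mul_le_mul_of_nonneg_left h2 h4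
  nlinarith

/-- chord through p, q -/
lemma chord_s3 {N : ℕ} {W : ℕ → ℝ} (hW : Cvx N W) {p q : ℕ} (hp : 1 ≤ p) (hpq : p < q) (hq : q ≤ N) 
    (c : ℝ) (hc : c * ((q : ℝ) - p) = W q - W p) :
    (∀ i, 1 ≤ i → i ≤ p → W p + c * ((i : ℝ) - p) ≤ W i) ∧
    (∀ i, p ≤ i → i ≤ q → W i ≤ W p + c * ((i : ℝ) - p)) ∧
    (∀ i, q ≤ i → i ≤ N → W p + c * ((i : ℝ) - p) ≤ W i) := by
  have hd : (0 : ℝ) < (q : ℝ) - p := by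
    have : (p : ℝ) < q := by exact_mod_cast hpq
    linarith
  have hWq : W q = W p + c * ((q : ℝ) - p) := by linarith
  refine ⟨?_, ?_, ?_⟩
  · intro i hi hip
    have h := three_pt hW hi hip hpq.le hq
    rw [hWq] at h
    refine le_of_mul_le_mul_left ?_ hd
    linarith
  · intro i hi hip
    have h := three_pt hW hp hi hip hq
    rw [hWq] at h
    refine le_of_mul_le_mul_left ?_ hd
    linarith
  · intro i hi hip
    have h := three_pt hW hp hpq.le hi hip
    rw [hWq] at h
    refine le_of_mul_le_mul_left ?_ hd
    linarith

lemma good_line {N : ℕ} (hN : 2 ≤ N) {W : ℕ → ℝ} (hW : Cvx N W) (M : ℝ)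
    (hM : ∀ i, 1 ≤ i → i < N → |W (i + 1) - W i| ≤ M)
    (f : Fin N → ℝ) (hf : Monotone f) (hS : ∃ i, f i ^ 2 ≤ 1) :
    ∃ c d : ℝ, |c| ≤ M ∧ ∀ i : Fin N,
      (c * (((i : ℕ) + 1 : ℕ) : ℝ) + d - W ((i : ℕ) + 1)) * (f i ^ 2 - 1) ≤ 0 := by
  classical
  set S : Finset (Fin N) := Finset.univ.filter (fun i => f i ^ 2 ≤ 1) with hSdef
  have hmemS : ∀ i, i ∈ S ↔ f i ^ 2 ≤ 1 := by
    intro i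
    rw [hSdef, Finset.mem_filter]
    exact and_iff_right (Finset.mem_univ i)
  have hSn : S.Nonempty := by
    obtain ⟨i, hi⟩ := hS
    exact ⟨i, (hmemS i).2 hi⟩
  set p := S.min' hSn with hp
  set q := S.max' hSn with hq
  have hpS : f p ^ 2 ≤ 1 := (hmemS _).1 (S.min'_mem hSn)
  have hqS : f q ^ 2 ≤ 1 := (hmemS _).1 (S.max'_mem hSn)
  have hpq : p ≤ q := S.min'_le _ (S.max'_mem hSn)
  have hlow : ∀ i, i < p → 1 < f i ^ 2 := by
    intro i hi
    by_contra hcon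
    exact absurd (S.min'_le i ((hmemS i).2 (not_lt.1 hcon))) (not_le.2 hi)
  have hhigh : ∀ i, q < i → 1 < f i ^ 2 := by
    intro i hi
    by_contra hcon
    exact absurd (S.le_max' i ((hmemS i).2 (not_lt.1 hcon))) (not_le.2 hi)
  have hmid : ∀ i, p ≤ i → i ≤ q → f i ^ 2 ≤ 1 := by
    intro i h1 h2
    have a1 := hf h1
    have a2 := hf h2
    rw [sq_le_one_iff_abs_le_one, abs_le] at hpS hqS ⊢
    constructor <;> linarith
  -- choose chord endpoints
  obtain ⟨P, Q, hP1, hPQ, hQN, hPp, hqQ, hPp', hqQ'⟩ : ∃ P Q : ℕ, 1 ≤ P ∧ P < Q ∧ Q ≤ N ∧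
      P ≤ (p : ℕ) + 1 ∧ (q : ℕ) + 1 ≤ Q ∧ (P = p + 1 ∨ (P + 1 = Q)) ∧
      (Q = q + 1 ∨ (P + 1 = Q)) := by
    rcases lt_or_eq_of_le hpq with hlt | heq
    · exact ⟨p + 1, q + 1, by omega, by have := Fin.lt_def.1 hlt; omega, by omega, le_rfl, le_rfl,
        Or.inl rfl, Or.inl rfl⟩
    · by_cases hpN : (p : ℕ) + 1 < N
      · exact ⟨p + 1, p + 2, by omega, by omega, by omega, le_rfl, by rw [← heq]; omega,
          Or.inl rfl, Or.inr rfl⟩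
      · exact ⟨p, p + 1, by omega, by omega, by omega, by omega, by rw [← heq],
          Or.inr rfl, Or.inr rfl⟩
  have hd : (0 : ℝ) < (Q : ℝ) - P := by
    have : (P : ℝ) < Q := by exact_mod_cast hPQ
    linarith
  set c := (W Q - W P) / ((Q : ℝ) - P) with hc
  have hcc : c * ((Q : ℝ) - P) = W Q - W P := by rw [hc]; field_simp
  obtain ⟨h1, h2, h3⟩ := chord_s3 hW hP1 hPQ hQN c hcc
  refine ⟨c, W P - c * P, ?_, ?_⟩
  · have : ∀ b, P ≤ b → b ≤ N → |W b - W P| ≤ M * ((b : ℝ) - P) := by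
      intro b hb
      induction b, hb using Nat.le_induction with
      | base => simp
      | succ b hb ih =>
        intro hbN
        have a1 := ih (by omega)
        have a2 := hM b (by omega) (by omega)
        have a3 := abs_add_le (W (b + 1) - W b) (W b - W P)
        rw [show W (b + 1) - W b + (W b - W P) = W (b + 1) - W P by ring] at a3
        push_cast
        linarith
    have hb := this Q hPQ.le hQN
    rw [hc, abs_div, abs_of_pos hd, div_le_iff₀ hd]
    exact hb
  · intro i
    have hrw : c * (((i : ℕ) + 1 : ℕ) : ℝ) + (W P - c * P) - W ((i : ℕ) + 1) =
      (W P + c * ((((i : ℕ) + 1 : ℕ) : ℝ) - P)) - W ((i : ℕ) + 1) := by ring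
    rw [hrw]
    rcases lt_or_ge i p with hip | hip
    · have hi1 := hlow i hip
      have hip' := Fin.lt_def.1 hip
      have := h1 (i + 1) (by omega) (by omega)
      exact mul_nonpos_of_nonpos_of_nonneg (by linarith) (by linarith)
    rcases lt_or_ge q i with hiq | hiq
    · have hi1 := hhigh i hiq
      have hip' := Fin.lt_def.1 hiq
      have := h3 (i + 1) (by omega) (by omega)
      exact mul_nonpos_of_nonpos_of_nonneg (by linarith) (by linarith)
    · have hi1 := hmid i hip hiq
      have hip' := Fin.le_def.1 hip
      have hiq' := Fin.le_def.1 hiq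
      have := h2 (i + 1) (by omega) (by omega)
      exact mul_nonpos_of_nonneg_of_nonpos (by linarith) (by linarith)

/-- compact convex class of potentials -/
def KK (N : ℕ) (M : ℝ) : Set (ℕ → ℝ) :=
  {W | (∀ i : ℕ, 2 ≤ i → i < N → 0 ≤ W (i - 1) - 2 * W i + W (i + 1)) ∧
    (∀ i : ℕ, 1 ≤ i → i < N → |W (i + 1) - W i| ≤ M) ∧
    (∀ k : ℕ, |W k| ≤ M * ((k : ℝ) + 1))}

/-- total curvature -/
noncomputable def QQ (N : ℕ) (W : ℕ → ℝ) : ℝ :=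
  ∑ i ∈ Finset.Ico 2 N, |W (i - 1) - 2 * W i + W (i + 1)|

/-- admissible triples -/
def TT (N : ℕ) (M : ℝ) : Set ((ℕ → ℝ) × (Fin N → ℝ) × (Fin N → ℝ)) :=
  {t | t.1 ∈ KK N M ∧ GG N t.1 t.2.1 t.2.2}

lemma qf_cont {X : Type*} [TopologicalSpace X] {N : ℕ} {f : X → ℕ → ℝ} {g : X → Fin N → ℝ}
    (hf : Continuous f) (hg : Continuous g) : Continuous (fun t => qf N (f t) (g t)) := by
  unfold qf
  exact hg.dotProduct (((pathH_cont N).comp hf).matrix_mulVec hg)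

lemma QQ_cont (N : ℕ) : Continuous (QQ N) := by
  unfold QQ
  fun_prop

lemma KK_closed (N : ℕ) (M : ℝ) : IsClosed (KK N M) := by
  have : KK N M = (⋂ i : ℕ, ⋂ _ : 2 ≤ i, ⋂ _ : i < N,
      {W : ℕ → ℝ | 0 ≤ W (i - 1) - 2 * W i + W (i + 1)}) ∩
    ((⋂ i : ℕ, ⋂ _ : 1 ≤ i, ⋂ _ : i < N, {W : ℕ → ℝ | |W (i + 1) - W i| ≤ M}) ∩
    (⋂ k : ℕ, {W : ℕ → ℝ | |W k| ≤ M * ((k : ℝ) + 1)})) := by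
    ext W
    simp only [KK, Set.mem_ofPred_eq, Set.mem_inter_iff, Set.mem_iInter]
  rw [this]
  refine IsClosed.inter ?_ (IsClosed.inter ?_ ?_)
  · refine isClosed_iInter fun i => isClosed_iInter fun _ => isClosed_iInter fun _ => ?_
    exact isClosed_le (by fun_prop) (by fun_prop)
  · refine isClosed_iInter fun i => isClosed_iInter fun _ => isClosed_iInter fun _ => ?_
    exact isClosed_le (by fun_prop) (by fun_prop)
  · refine isClosed_iInter fun i => ?_
    exact isClosed_le (by fun_prop) (by fun_prop)

lemma GG_closed (N : ℕ) :
    IsClosed {t : (ℕ → ℝ) × (Fin N → ℝ) × (Fin N → ℝ) | GG N t.1 t.2.1 t.2.2} := by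
  have c1 : Continuous (fun t : (ℕ → ℝ) × (Fin N → ℝ) × (Fin N → ℝ) => t.1) := continuous_fst
  have c2 : Continuous (fun t : (ℕ → ℝ) × (Fin N → ℝ) × (Fin N → ℝ) => t.2.1) := by fun_prop
  have c3 : Continuous (fun t : (ℕ → ℝ) × (Fin N → ℝ) × (Fin N → ℝ) => t.2.2) := by fun_prop
  have cH := (pathH_cont N).comp c1
  have q2 := qf_cont c1 c2
  have q3 := qf_cont c1 c3
  have : {t : (ℕ → ℝ) × (Fin N → ℝ) × (Fin N → ℝ) | GG N t.1 t.2.1 t.2.2} =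
    {t | t.2.1 ⬝ᵥ t.2.1 = 1} ∩ ({t | t.2.2 ⬝ᵥ t.2.2 = 1} ∩ ({t | t.2.1 ⬝ᵥ t.2.2 = 0} ∩
    ({t | pathH N t.1 *ᵥ t.2.1 = qf N t.1 t.2.1 • t.2.1} ∩
    ({t | pathH N t.1 *ᵥ t.2.2 = qf N t.1 t.2.2 • t.2.2} ∩
    ((⋂ z : Fin N → ℝ, {t | qf N t.1 t.2.1 * (z ⬝ᵥ z) ≤ qf N t.1 z}) ∩
    (⋂ z : Fin N → ℝ, {t | qf N t.1 t.2.2 * (z ⬝ᵥ z) +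
      (qf N t.1 t.2.1 - qf N t.1 t.2.2) * (z ⬝ᵥ t.2.1) ^ 2 ≤ qf N t.1 z})))))) := by
    ext t
    simp only [Set.mem_ofPred_eq, Set.mem_inter_iff, Set.mem_iInter]
    exact ⟨fun h => ⟨h.1, h.2, h.3, h.4, h.5, h.6, h.7⟩,
      fun ⟨h1, h2, h3, h4, h5, h6, h7⟩ => ⟨h1, h2, h3, h4, h5, h6, h7⟩⟩
  rw [this]
  refine IsClosed.inter ?_ (IsClosed.inter ?_ (IsClosed.inter ?_ (IsClosed.inter ?_
    (IsClosed.inter ?_ (IsClosed.inter ?_ ?_)))))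
  · exact isClosed_eq (c2.dotProduct c2) continuous_const
  · exact isClosed_eq (c3.dotProduct c3) continuous_const
  · exact isClosed_eq (c2.dotProduct c3) continuous_const
  · exact isClosed_eq (cH.matrix_mulVec c2) (q2.smul c2)
  · exact isClosed_eq (cH.matrix_mulVec c3) (q3.smul c3)
  · exact isClosed_iInter fun z => isClosed_le (q2.mul continuous_const)
      (qf_cont c1 continuous_const)
  · exact isClosed_iInter fun z => isClosed_le ((q3.mul continuous_const).add
      ((q2.sub q3).mul ((continuous_const.dotProduct c2).pow 2))) (qf_cont c1 continuous_const)

lemma unit_coord {N : ℕ} {x : Fin N → ℝ} (h : x ⬝ᵥ x = 1) (i : Fin N) : x i ∈ Set.Icc (-1 : ℝ) 1 := by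
  have : x i * x i ≤ 1 := by
    rw [← h, dotProduct]
    exact Finset.single_le_sum (f := fun i => x i * x i) (fun j _ => mul_self_nonneg _)
      (Finset.mem_univ i)
  exact abs_le.1 (sq_le_one_iff_abs_le_one _ |>.1 (by rw [sq]; exact this))

lemma TT_compact (N : ℕ) (M : ℝ) : IsCompact (TT N M) := by
  have hc : IsCompact ((Set.univ.pi fun k : ℕ => Set.Icc (-(M * ((k : ℝ) + 1))) (M * ((k : ℝ) + 1))) ×ˢ
    ((Set.univ.pi fun _ : Fin N => Set.Icc (-1 : ℝ) 1) ×ˢ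
      (Set.univ.pi fun _ : Fin N => Set.Icc (-1 : ℝ) 1))) :=
    (isCompact_univ_pi fun _ => isCompact_Icc).prod
      ((isCompact_univ_pi fun _ => isCompact_Icc).prod (isCompact_univ_pi fun _ => isCompact_Icc))
  refine hc.of_isClosed_subset ?_ ?_
  · exact ((KK_closed N M).preimage continuous_fst).inter (GG_closed N)
  · rintro ⟨W, x, y⟩ ⟨hK, hG⟩
    refine ⟨fun k _ => abs_le.1 (hK.2.2 k), fun i _ => unit_coord hG.xx i,
      fun i _ => unit_coord hG.yy i⟩

lemma pert {N : ℕ} (W D : ℕ → ℝ) (t : ℝ) (u v : Fin N → ℝ) (a b : ℝ)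
    (hu : pathH N (fun k => W k + t * D k) *ᵥ u = a • u) (hv : pathH N W *ᵥ v = b • v) :
    (a - b) * (u ⬝ᵥ v) = t * ∑ i : Fin N, D ((i : ℕ) + 1) * (u i * v i) := by
  have h1 := dot_symm N (fun k => W k + t * D k) u v
  rw [hu, smul_dotProduct, pathH_add_smul, Matrix.add_mulVec, hv, dotProduct_add,
    dotProduct_smul, Matrix.smul_mulVec, dotProduct_smul] at h1
  simp only [smul_eq_mul] at h1
  have h2 : u ⬝ᵥ (Matrix.diagonal (fun i : Fin N => D ((i : ℕ) + 1)) *ᵥ v) =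
      ∑ i : Fin N, D ((i : ℕ) + 1) * (u i * v i) := by
    rw [dotProduct]
    apply Finset.sum_congr rfl; intro i _
    rw [Matrix.mulVec_diagonal]; ring
  rw [h2] at h1
  linarith

lemma good_dir {N : ℕ} (hN : 2 ≤ N) {M : ℝ} {W : ℕ → ℝ} {x y : Fin N → ℝ} (hK : W ∈ KK N M)
    (h : GG N W x y) : ∃ c : ℝ, |c| ≤ M ∧
      ∑ i : Fin N, (c * ((((i : ℕ) + 1 : ℕ) : ℝ) - 1) - W ((i : ℕ) + 1)) * (y i ^ 2 - x i ^ 2) ≤ 0 := by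
  obtain ⟨x', h', hpos, hor⟩ := GG_abs hN h
  have hxx : ∀ i, x i ^ 2 = x' i ^ 2 := by
    intro i
    rcases hor with h1 | h1 <;> rw [h1] <;> simp
  simp only [hxx]
  set f : Fin N → ℝ := fun i => y i / x' i with hfdef
  have hf : ∀ i, y i = x' i * f i := fun i => by
    have := (hpos i).ne'
    simp only [hfdef]; field_simp
  have hsum : ∑ i, (y i ^ 2 - x' i ^ 2) = 0 := by
    have h1 := h'.xx
    have h2 := h'.yy
    simp only [dotProduct, ← sq] at h1 h2
    rw [Finset.sum_sub_distrib, h1, h2, sub_self]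
  have hexp : ∀ i, y i ^ 2 - x' i ^ 2 = x' i ^ 2 * (f i ^ 2 - 1) := fun i => by
    rw [hf i]; ring
  have hS : ∃ i, f i ^ 2 ≤ 1 := by
    by_contra hcon
    push Not at hcon
    have : 0 < ∑ i, (y i ^ 2 - x' i ^ 2) := by
      apply Finset.sum_pos
      · intro i _
        rw [hexp]
        exact mul_pos (pow_pos (hpos i) 2) (by linarith [hcon i])
      · exact ⟨⟨0, by omega⟩, Finset.mem_univ _⟩
    linarith
  have key : ∃ c d : ℝ, |c| ≤ M ∧ ∀ i : Fin N,
      (c * (((i : ℕ) + 1 : ℕ) : ℝ) + d - W ((i : ℕ) + 1)) * (f i ^ 2 - 1) ≤ 0 := by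
    rcases ratio_mono hN h' hpos f hf with hm | hm
    · exact good_line hN hK.1 M hK.2.1 f hm hS
    · have := good_line hN hK.1 M hK.2.1 (fun i => - f i) (fun i j hij => neg_le_neg (hm hij))
        (by simpa only [neg_sq] using hS)
      simpa only [neg_sq] using this
  obtain ⟨c, d, hc, hcd⟩ := key
  refine ⟨c, hc, ?_⟩
  have : ∑ i : Fin N, (c * ((((i : ℕ) + 1 : ℕ) : ℝ) - 1) - W ((i : ℕ) + 1)) * (y i ^ 2 - x' i ^ 2) =
      ∑ i : Fin N, (c * (((i : ℕ) + 1 : ℕ) : ℝ) + d - W ((i : ℕ) + 1)) * (y i ^ 2 - x' i ^ 2)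
        - (c + d) * ∑ i : Fin N, (y i ^ 2 - x' i ^ 2) := by
    rw [Finset.mul_sum, ← Finset.sum_sub_distrib]
    apply Finset.sum_congr rfl; intro i _
    ring
  rw [this, hsum, mul_zero, sub_zero]
  apply Finset.sum_nonpos
  intro i _
  rw [hexp]
  have := mul_nonpos_of_nonneg_of_nonpos (sq_nonneg (x' i)) (hcd i)
  linarith

lemma KK_line (N : ℕ) {M c : ℝ} (hc : |c| ≤ M) : (fun k : ℕ => c * ((k : ℝ) - 1)) ∈ KK N M := by
  refine ⟨?_, ?_, ?_⟩
  · intro i h1 h2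
    have : ((i - 1 : ℕ) : ℝ) = i - 1 := by push_cast [show 1 ≤ i by omega]; ring
    simp only [this]; push_cast
    apply le_of_eq; ring
  · intro i h1 h2
    push_cast
    rw [show c * ((i : ℝ) + 1 - 1) - c * ((i : ℝ) - 1) = c by ring]
    exact hc
  · intro k
    simp only [abs_mul]
    have hk : (0 : ℝ) ≤ k := Nat.cast_nonneg k
    have : |(k : ℝ) - 1| ≤ k + 1 := by rw [abs_le]; constructor <;> linarith
    exact mul_le_mul hc this (abs_nonneg _) ((abs_nonneg c).trans hc)

lemma KK_conv {N : ℕ} {M : ℝ} {W L : ℕ → ℝ} (hW : W ∈ KK N M) (hL : L ∈ KK N M) {t : ℝ}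
    (h0 : 0 ≤ t) (h1 : t ≤ 1) : (fun k => W k + t * (L k - W k)) ∈ KK N M := by
  have h1' : 0 ≤ 1 - t := by linarith
  refine ⟨?_, ?_, ?_⟩
  · intro i hi hiN
    have a := mul_nonneg h1' (hW.1 i hi hiN)
    have b := mul_nonneg h0 (hL.1 i hi hiN)
    simp only
    linarith
  · intro i hi hiN
    have a := abs_le.1 (hW.2.1 i hi hiN)
    have b := abs_le.1 (hL.2.1 i hi hiN)
    rw [abs_le]
    simp only
    constructor <;> nlinarith
  · intro k
    have a := abs_le.1 (hW.2.2 k)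
    have b := abs_le.1 (hL.2.2 k)
    rw [abs_le]
    simp only
    constructor <;> nlinarith

lemma QQ_conv (N : ℕ) (W : ℕ → ℝ) (c t : ℝ) (h1 : t ≤ 1) :
    QQ N (fun k => W k + t * (c * ((k : ℝ) - 1) - W k)) = (1 - t) * QQ N W := by
  unfold QQ
  rw [Finset.mul_sum]
  apply Finset.sum_congr rfl
  intro i hi
  rw [Finset.mem_Ico] at hi
  have : ((i - 1 : ℕ) : ℝ) = i - 1 := by push_cast [show 1 ≤ i by omega]; ring
  simp only [this]; push_cast
  have h2 : |1 - t| = 1 - t := abs_of_nonneg (by linarith)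
  refine Eq.trans ?_ (congrArg (· * |W (i - 1) - 2 * W i + W (i + 1)|) h2)
  rw [← abs_mul]
  congr 1
  ring

lemma min_lin {N : ℕ} (hN : 2 ≤ N) {M e : ℝ} (he : 0 < e) {W : ℕ → ℝ} {x y : Fin N → ℝ}
    (hK : W ∈ KK N M) (h : GG N W x y)
    (hmin : ∀ t ∈ TT N M, qf N W y - qf N W x + e * QQ N W ≤
      qf N t.1 t.2.2 - qf N t.1 t.2.1 + e * QQ N t.1) : QQ N W ≤ 0 := by
  obtain ⟨c, hc, hsum⟩ := good_dir hN hK h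
  set L : ℕ → ℝ := fun k => c * ((k : ℝ) - 1) with hL
  have hLK : L ∈ KK N M := KK_line N hc
  set D : ℕ → ℝ := fun k => L k - W k with hD
  let s : ℕ → ℝ := fun n => 1 / ((n : ℝ) + 1)
  have hs0 : ∀ n, 0 < s n := fun n => Nat.one_div_pos_of_nat
  have hs1 : ∀ n, s n ≤ 1 := fun n => by
    simp only [s]; rw [div_le_one (by positivity)]
    have : (0 : ℝ) ≤ n := Nat.cast_nonneg n
    linarith
  have hst : Tendsto s atTop (𝓝 0) := tendsto_one_div_add_atTop_nhds_zero_nat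
  let Wn : ℕ → ℕ → ℝ := fun n k => W k + s n * D k
  have hWnK : ∀ n, Wn n ∈ KK N M := fun n => KK_conv hK hLK (hs0 n).le (hs1 n)
  have hex : ∀ n, ∃ p : (Fin N → ℝ) × (Fin N → ℝ), GG N (Wn n) p.1 p.2 := fun n => by
    obtain ⟨a, b, hab⟩ := GG_exists N hN (Wn n)
    exact ⟨(a, b), hab⟩
  choose p hp using hex
  obtain ⟨⟨W', x', y'⟩, hmem, φ, hφ, hlim⟩ :=
    (TT_compact N M).tendsto_subseq (x := fun n => (Wn n, p n)) (fun n => ⟨hWnK n, hp n⟩)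
  have hlimW : Tendsto (fun n => Wn (φ n)) atTop (𝓝 W') := (continuous_fst.tendsto _).comp hlim
  have hlimx : Tendsto (fun n => (p (φ n)).1) atTop (𝓝 x') :=
    ((continuous_fst.comp continuous_snd).tendsto _).comp hlim
  have hlimy : Tendsto (fun n => (p (φ n)).2) atTop (𝓝 y') :=
    ((continuous_snd.comp continuous_snd).tendsto _).comp hlim
  have hsφ : Tendsto (fun n => s (φ n)) atTop (𝓝 0) := hst.comp hφ.tendsto_atTop
  have hlimW2 : Tendsto (fun n => Wn (φ n)) atTop (𝓝 W) := by
    rw [tendsto_pi_nhds]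
    intro k
    have : Tendsto (fun n => W k + s (φ n) * D k) atTop (𝓝 (W k + 0 * D k)) :=
      tendsto_const_nhds.add (hsφ.mul_const _)
    simpa using this
  have hWW : W' = W := tendsto_nhds_unique hlimW hlimW2
  subst hWW
  have hG' : GG N W' x' y' := hmem.2
  obtain ⟨eq1, eq2, ox, oy⟩ := GG_unique hN h hG'
  have hxx : ∀ i, x i ^ 2 = x' i ^ 2 := by
    intro i
    rcases ox with h1 | h1 <;> rw [h1] <;> simp
  have hyy : ∀ i, y i ^ 2 = y' i ^ 2 := by
    intro i
    rcases oy with h1 | h1 <;> rw [h1] <;> simp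
  -- limits
  have cD : ∀ v : Fin N → ℝ,
      Continuous (fun u : Fin N → ℝ => ∑ i : Fin N, D ((i : ℕ) + 1) * (u i * v i)) := by
    intro v; fun_prop
  have cd : ∀ v : Fin N → ℝ, Continuous (fun u : Fin N → ℝ => u ⬝ᵥ v) := by
    intro v; exact continuous_id.dotProduct continuous_const
  have lx1 := ((cD x').tendsto x').comp hlimx
  have ly1 := ((cD y').tendsto y').comp hlimy
  have lx2 := ((cd x').tendsto x').comp hlimx
  have ly2 := ((cd y').tendsto y').comp hlimy
  rw [hG'.xx] at lx2
  rw [hG'.yy] at ly2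
  have lx := lx1.div lx2 one_ne_zero
  have ly := ly1.div ly2 one_ne_zero
  have l := ly.sub lx
  have hpx : ∀ᶠ n in atTop, (0 : ℝ) < (p (φ n)).1 ⬝ᵥ x' := lx2.eventually (lt_mem_nhds one_pos)
  have hpy : ∀ᶠ n in atTop, (0 : ℝ) < (p (φ n)).2 ⬝ᵥ y' := ly2.eventually (lt_mem_nhds one_pos)
  have hfin := ge_of_tendsto (b := e * QQ N W') l (by
    filter_upwards [hpx, hpy] with n hnx hny
    have gx := pert W' D (s (φ n)) (p (φ n)).1 x' _ _ (hp (φ n)).ex hG'.ex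
    have gy := pert W' D (s (φ n)) (p (φ n)).2 y' _ _ (hp (φ n)).ey hG'.ey
    have hm := hmin (Wn (φ n), p (φ n)) ⟨hWnK _, hp _⟩
    have hQ : QQ N (Wn (φ n)) = (1 - s (φ n)) * QQ N W' := QQ_conv N W' c (s (φ n)) (hs1 _)
    simp only [hQ] at hm
    rw [eq1] at gx
    rw [eq2] at gy
    have hsp := hs0 (φ n)
    simp only [Function.comp_apply, Pi.sub_apply, Pi.div_apply]
    have dx : (∑ i : Fin N, D ((i : ℕ) + 1) * ((p (φ n)).1 i * x' i)) / ((p (φ n)).1 ⬝ᵥ x') =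
        (qf N (Wn (φ n)) (p (φ n)).1 - qf N W' x) / s (φ n) := by
      rw [div_eq_div_iff hnx.ne' hsp.ne']
      linarith
    have dy : (∑ i : Fin N, D ((i : ℕ) + 1) * ((p (φ n)).2 i * y' i)) / ((p (φ n)).2 ⬝ᵥ y') =
        (qf N (Wn (φ n)) (p (φ n)).2 - qf N W' y) / s (φ n) := by
      rw [div_eq_div_iff hny.ne' hsp.ne']
      linarith
    rw [dx, dy, ← sub_div, le_div_iff₀ hsp]
    linarith)
  have hfin2 : ∑ i : Fin N, (c * ((((i : ℕ) + 1 : ℕ) : ℝ) - 1) - W' ((i : ℕ) + 1)) * (y i ^ 2 - x i ^ 2)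
      = (∑ i : Fin N, D ((i : ℕ) + 1) * (y' i * y' i)) / 1 -
        (∑ i : Fin N, D ((i : ℕ) + 1) * (x' i * x' i)) / 1 := by
    rw [div_one, div_one, ← Finset.sum_sub_distrib]
    apply Finset.sum_congr rfl; intro i _
    rw [hxx, hyy]
    simp only [hD, hL]; ring
  rw [← hfin2] at hfin
  have : e * QQ N W' ≤ 0 := hfin.trans hsum
  by_contra hcon
  push Not at hcon
  nlinarith [mul_pos he hcon]

lemma QQ_zero {N : ℕ} {W : ℕ → ℝ} (h : QQ N W ≤ 0) (k : ℕ) (hk : 1 ≤ k) (hkN : k ≤ N) :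
    W k = (W 2 - W 1) * (k : ℝ) + (W 1 - (W 2 - W 1)) := by
  have h0 : QQ N W = 0 := le_antisymm h (Finset.sum_nonneg fun _ _ => abs_nonneg _)
  have hz := (Finset.sum_eq_zero_iff_of_nonneg (fun _ _ => abs_nonneg _)).1 h0
  have hall : ∀ m : ℕ, (m + 1 ≤ N → W (m + 1) = (W 2 - W 1) * ((m + 1 : ℕ) : ℝ) + (W 1 - (W 2 - W 1)))
      ∧ (m + 2 ≤ N → W (m + 2) = (W 2 - W 1) * ((m + 2 : ℕ) : ℝ) + (W 1 - (W 2 - W 1))) := by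
    intro m
    induction m with
    | zero => 
      constructor
      · intro _; push_cast; ring_nf
      · intro _; push_cast; ring_nf
    | succ m ih =>
      refine ⟨ih.2, ?_⟩
      intro hm
      have a := ih.1 (by omega)
      have b := ih.2 (by omega)
      have := abs_eq_zero.1 (hz (m + 2) (Finset.mem_Ico.2 ⟨by omega, by omega⟩))
      rw [show m + 2 - 1 = m + 1 by omega] at this
      rw [show m + 1 + 2 = m + 2 + 1 by ring]
      push_cast at a b ⊢
      linarith
  obtain ⟨m, rfl⟩ : ∃ m, k = m + 1 := ⟨k - 1, by omega⟩
  exact (hall m).1 hkN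

lemma gap_eq {N : ℕ} (hN : 2 ≤ N) {W : ℕ → ℝ} {x y : Fin N → ℝ} (h : GG N W x y) {l1 l2 : ℝ}
    (ht : TwoSmallest (pathH N W) l1 l2) : qf N W y - qf N W x = l2 - l1 := by
  have hlt := GG_lt hN h
  have nz : ∀ z : Fin N → ℝ, z ⬝ᵥ z = 1 → z ≠ 0 := by
    rintro z hz rfl; simp at hz
  have pz : ∀ z : Fin N → ℝ, z ≠ 0 → 0 < z ⬝ᵥ z := by
    intro z hz
    refine lt_of_le_of_ne (Finset.sum_nonneg fun i _ => mul_self_nonneg _) ?_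
    intro h0
    exact hz (dotProduct_self_eq_zero.1 h0.symm)
  obtain ⟨⟨u, hu, hue⟩, ⟨v, hv, hve⟩, hl, hall⟩ := ht
  have a1 := (hall (qf N W x) ⟨x, nz x h.xx, h.ex⟩).1
  have a2 : qf N W x ≤ l1 := by
    have := h.mx u
    rw [show qf N W u = l1 * (u ⬝ᵥ u) by rw [qf, hue, dotProduct_smul, smul_eq_mul]] at this
    exact le_of_mul_le_mul_right this (pz u hu)
  have e1 : qf N W x = l1 := le_antisymm a2 a1
  have a3 := (hall (qf N W y) ⟨y, nz y h.yy, h.ey⟩).2 (by rw [← e1]; exact hlt.ne')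
  have ho : v ⬝ᵥ x = 0 := by
    have := dot_symm N W v x
    rw [h.ex, hve, dotProduct_smul, smul_dotProduct, e1, smul_eq_mul, smul_eq_mul] at this
    have h2 : (l2 - l1) * (v ⬝ᵥ x) = 0 := by linarith
    rcases mul_eq_zero.1 h2 with h3 | h3
    · linarith
    · exact h3
  have a4 : qf N W y ≤ l2 := by
    have := h.my v
    rw [ho, show qf N W v = l2 * (v ⬝ᵥ v) by rw [qf, hve, dotProduct_smul, smul_eq_mul]] at this
    refine le_of_mul_le_mul_right (?_ : _ * (v ⬝ᵥ v) ≤ _ * (v ⬝ᵥ v)) (pz v hv)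
    linarith
  linarith

lemma two_shift {N : ℕ} {W W0 : ℕ → ℝ} (c : ℝ) (hW : ∀ k, 1 ≤ k → k ≤ N → W0 k = W k - c) {l1 l2 : ℝ}
    (ht : TwoSmallest (pathH N W) l1 l2) : TwoSmallest (pathH N W0) (l1 - c) (l2 - c) := by
  have hm : ∀ v, pathH N W0 *ᵥ v = pathH N W *ᵥ v - c • v := by
    intro v
    rw [pathH_congr N W0 (fun k => W k + (-c) * 1) (fun k h1 h2 => by rw [hW k h1 h2]; ring),
      pathH_add_smul N W (fun _ => 1)]
    rw [Matrix.add_mulVec, Matrix.smul_mulVec]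
    simp [sub_eq_add_neg]
  have hE : ∀ m, IsEigen (pathH N W0) m ↔ IsEigen (pathH N W) (m + c) := by
    intro m
    unfold IsEigen
    refine exists_congr fun v => and_congr_right fun _ => ?_
    rw [hm, sub_eq_iff_eq_add, add_smul]
  obtain ⟨h1, h2, h3, h4⟩ := ht
  refine ⟨?_, ?_, by linarith, ?_⟩
  · rw [hE, sub_add_cancel]; exact h1
  · rw [hE, sub_add_cancel]; exact h2
  · intro m hme
    have := h4 _ ((hE m).1 hme)
    refine ⟨by linarith [this.1], fun hne => ?_⟩
    have := this.2 (fun h => hne (by linarith))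
    linarith

theorem path_convex_ge_linear (N : ℕ) (hN : 2 ≤ N) (W : ℕ → ℝ)
    (hW : ∀ i : ℕ, 2 ≤ i → i < N → 0 ≤ W (i - 1) - 2 * W i + W (i + 1))
    (l1 l2 : ℝ) (h : TwoSmallest (pathH N W) l1 l2) :
    ∃ a b : ℝ, ∀ m1 m2 : ℝ,
      TwoSmallest (pathH N (fun i => a * (i : ℝ) + b)) m1 m2 →
      l2 - l1 ≥ m2 - m1 := by
  set M : ℝ := ∑ k ∈ Finset.range N, |W (k + 1) - W k| with hM
  have hM0 : 0 ≤ M := Finset.sum_nonneg fun _ _ => abs_nonneg _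
  have hMk : ∀ i, i < N → |W (i + 1) - W i| ≤ M := fun i hi =>
    Finset.single_le_sum (f := fun k => |W (k + 1) - W k|) (fun _ _ => abs_nonneg _)
      (Finset.mem_range.2 hi)
  let W0 : ℕ → ℝ := fun k => if 1 ≤ k ∧ k ≤ N then W k - W 1 else 0
  have hW0 : ∀ k, 1 ≤ k → k ≤ N → W0 k = W k - W 1 := fun k h1 h2 => if_pos ⟨h1, h2⟩
  have hbd : ∀ k, 1 ≤ k → k ≤ N → |W k - W 1| ≤ M * ((k : ℝ) - 1) := by
    intro k hk
    induction k, hk using Nat.le_induction with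
    | base => simp
    | succ k hk ih =>
      intro hkN
      have a1 := ih (by omega)
      have a2 := hMk k (by omega)
      have a3 := abs_add_le (W (k + 1) - W k) (W k - W 1)
      rw [show W (k + 1) - W k + (W k - W 1) = W (k + 1) - W 1 by ring] at a3
      push_cast
      linarith
  have hK0 : W0 ∈ KK N M := by
    refine ⟨?_, ?_, ?_⟩
    · intro i h1 h2
      rw [hW0 (i - 1) (by omega) (by omega), hW0 i (by omega) (by omega),
        hW0 (i + 1) (by omega) (by omega)]
      linarith [hW i h1 h2]
    · intro i h1 h2
      rw [hW0 i (by omega) (by omega), hW0 (i + 1) (by omega) (by omega)]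
      rw [show W (i + 1) - W 1 - (W i - W 1) = W (i + 1) - W i by ring]
      exact hMk i h2
    · intro k
      by_cases hk : 1 ≤ k ∧ k ≤ N
      · rw [hW0 k hk.1 hk.2]
        refine (hbd k hk.1 hk.2).trans ?_
        nlinarith
      · rw [show W0 k = 0 from if_neg hk]
        rw [abs_zero]; positivity
  obtain ⟨x0, y0, hG0⟩ := GG_exists N hN W0
  have hgap0 := gap_eq hN hG0 (two_shift (W 1) hW0 h)
  -- minimal linear potential
  have gcont : Continuous (fun t : (ℕ → ℝ) × (Fin N → ℝ) × (Fin N → ℝ) =>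
      qf N t.1 t.2.2 - qf N t.1 t.2.1) :=
    (qf_cont continuous_fst (by fun_prop)).sub (qf_cont continuous_fst (by fun_prop))
  have qcont : Continuous (fun t : (ℕ → ℝ) × (Fin N → ℝ) × (Fin N → ℝ) => QQ N t.1) :=
    (QQ_cont N).comp continuous_fst
  have hcl : IsCompact (TT N M ∩ {t | QQ N t.1 ≤ 0}) :=
    (TT_compact N M).inter_right (isClosed_le qcont continuous_const)
  have hne : (TT N M ∩ {t | QQ N t.1 ≤ 0}).Nonempty := by
    obtain ⟨x, y, hxy⟩ := GG_exists N hN (fun k : ℕ => (0 : ℝ) * ((k : ℝ) - 1))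
    refine ⟨(_, x, y), ⟨KK_line N (by simpa using hM0), hxy⟩, ?_⟩
    simp [QQ]
  obtain ⟨⟨L, xL, yL⟩, ⟨⟨hLK, hLG⟩, hLQ⟩, hLmin⟩ := hcl.exists_isMinOn hne gcont.continuousOn
  have hlin := QQ_zero hLQ
  refine ⟨L 2 - L 1, L 1 - (L 2 - L 1), fun m1 m2 hm => ?_⟩
  rw [← pathH_congr N L _ hlin] at hm
  have hgapL := gap_eq hN hLG hm
  by_contra hcon
  push Not at hcon
  simp only at hgapL hLG hLK
  set δ := (m2 - m1) - (l2 - l1) with hδ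
  have hδ0 : 0 < δ := by linarith
  have hQ0 : 0 ≤ QQ N W0 := Finset.sum_nonneg fun _ _ => abs_nonneg _
  set e := δ / (2 * (QQ N W0 + 1)) with he
  have he0 : 0 < e := by positivity
  have heQ : e * QQ N W0 < δ := by
    have : e * (2 * (QQ N W0 + 1)) = δ := by rw [he]; field_simp
    nlinarith
  obtain ⟨⟨V, x, y⟩, ⟨hVK, hVG⟩, hVmin⟩ := (TT_compact N M).exists_isMinOn
    ⟨(W0, x0, y0), hK0, hG0⟩ (gcont.add (continuous_const.mul qcont : Continuous
      (fun t : (ℕ → ℝ) × (Fin N → ℝ) × (Fin N → ℝ) => e * QQ N t.1))).continuousOn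
  have hVQ := min_lin hN he0 hVK hVG (fun t ht => hVmin ht)
  have b1 : qf N V y - qf N V x + e * QQ N V ≤ qf N W0 y0 - qf N W0 x0 + e * QQ N W0 :=
    hVmin (show (W0, x0, y0) ∈ TT N M from ⟨hK0, hG0⟩)
  have b2 : qf N L yL - qf N L xL ≤ qf N V y - qf N V x :=
    hLmin (show (V, x, y) ∈ TT N M ∩ {t | QQ N t.1 ≤ 0} from ⟨⟨hVK, hVG⟩, hVQ⟩)
  have hVQ0 : 0 ≤ QQ N V := Finset.sum_nonneg fun _ _ => abs_nonneg _
  have hVQ1 := mul_nonneg he0.le hVQ0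
  linarith
end

section
/- For every integer N ≥ 1 and every convex w : {0,…,N} → ℝ there exists a linear potential w′ : {0,…,N} → ℝ (w′_m = a·m + b for some a, b ∈ ℝ) such that Γ(J_w) ≥ Γ(J_{w′}). -/
/-- The hypercube Jacobi matrix `J_w`: the `(N+1) × (N+1)` real symmetric matrix with
diagonal entries `N + w m` and off-diagonal entries `-h(m)` with `h(m) = √((m+1)(N-m))`. -/
noncomputable def hypJ (N : ℕ) (w : ℕ → ℝ) : Matrix (Fin (N + 1)) (Fin (N + 1)) ℝ :=
  Matrix.of fun i j =>
    if i = j then (N : ℝ) + w (i : ℕ)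
    else if (i : ℕ) + 1 = (j : ℕ) then
      -Real.sqrt (((i : ℕ) + 1) * ((N : ℝ) - (i : ℕ)))
    else if (j : ℕ) + 1 = (i : ℕ) then
      -Real.sqrt (((j : ℕ) + 1) * ((N : ℝ) - (j : ℕ)))
    else 0

theorem hj_row (N : ℕ) (w g : ℕ → ℝ) (i : ℕ) (hi : i < N + 1) :
    (hypJ N w).mulVec (fun j => g (j : ℕ)) ⟨i, hi⟩ =
      ((N : ℝ) + w i) * g i - Real.sqrt (((i : ℝ) + 1) * ((N : ℝ) - i)) * g (i + 1)
        - Real.sqrt ((i : ℝ) * ((N : ℝ) + 1 - i)) * g (i - 1) := by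
  have key : ∀ j : Fin (N + 1), hypJ N w ⟨i, hi⟩ j * g (j : ℕ) =
      (fun k : ℕ => (if k = i then ((N : ℝ) + w i) * g i else 0) +
        (if k = i + 1 then -(Real.sqrt (((i : ℝ) + 1) * ((N : ℝ) - i)) * g (i + 1)) else 0) +
        (if k + 1 = i then -(Real.sqrt ((i : ℝ) * ((N : ℝ) + 1 - i)) * g (i - 1)) else 0)) (j : ℕ) := by
    intro j
    obtain ⟨j, hj⟩ := j
    simp only [hypJ, Matrix.of_apply, Fin.mk.injEq]
    by_cases h1 : i = j
    · subst h1; simp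
    · by_cases h2 : i + 1 = j
      · subst h2
        have : ¬ (i + 1 + 1 = i) := by omega
        simp [this]
      · by_cases h3 : j + 1 = i
        · subst h3
          have : ¬ (j = j + 1 + 1) := by omega
          have h2' : ¬ (j + 1 + 1 = j) := by omega
          simp [this, h2']
        · have h1' : ¬ (j = i) := fun h => h1 h.symm
          have h2' : ¬ (j = i + 1) := fun h => h2 h.symm
          simp [h1, h2, h3, h1', h2']
  simp only [Matrix.mulVec, dotProduct]
  rw [Finset.sum_congr rfl (fun j _ => key j)]
  rw [← Finset.sum_range (fun k : ℕ => (if k = i then ((N : ℝ) + w i) * g i else 0) +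
        (if k = i + 1 then -(Real.sqrt (((i : ℝ) + 1) * ((N : ℝ) - i)) * g (i + 1)) else 0) +
        (if k + 1 = i then -(Real.sqrt ((i : ℝ) * ((N : ℝ) + 1 - i)) * g (i - 1)) else 0))]
  rw [Finset.sum_add_distrib, Finset.sum_add_distrib, Finset.sum_ite_eq', Finset.sum_ite_eq']
  have e1 : (if i ∈ Finset.range (N + 1) then ((N : ℝ) + w i) * g i else 0) =
      ((N : ℝ) + w i) * g i := by simp; omega
  have e2 : (if i + 1 ∈ Finset.range (N + 1) then
      -(Real.sqrt (((i : ℝ) + 1) * ((N : ℝ) - i)) * g (i + 1)) else 0) =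
      -(Real.sqrt (((i : ℝ) + 1) * ((N : ℝ) - i)) * g (i + 1)) := by
    split_ifs with h
    · rfl
    · have : i = N := by simp at h; omega
      subst this; simp
  have e3 : (∑ k ∈ Finset.range (N + 1), if k + 1 = i then
      -(Real.sqrt ((i : ℝ) * ((N : ℝ) + 1 - i)) * g (i - 1)) else 0) =
      -(Real.sqrt ((i : ℝ) * ((N : ℝ) + 1 - i)) * g (i - 1)) := by
    rcases i with _ | i
    · simp
    · have : ∀ k, (k + 1 = i + 1) = (k = i) := by intro k; simp
      simp only [this]
      rw [Finset.sum_ite_eq', if_pos (by simp; omega)]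
  rw [e1, e2, e3]
  ring

theorem hj_symm (N : ℕ) (w : ℕ → ℝ) : (hypJ N w).IsHermitian := by
  ext i j
  simp only [Matrix.conjTranspose_apply, hypJ, Matrix.of_apply, star_trivial]
  by_cases h1 : i = j
  · subst h1; simp
  · have h1' : ¬ (j = i) := fun h => h1 h.symm
    simp only [h1, h1', if_false]
    by_cases h2 : (i : ℕ) + 1 = j
    · have : ¬ ((j : ℕ) + 1 = i) := by omega
      simp [h2, this]
    · simp [h2]

theorem hj_off (N : ℕ) (w : ℕ → ℝ) (i j : Fin (N + 1)) (h : i ≠ j) : hypJ N w i j ≤ 0 := by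
  simp only [hypJ, Matrix.of_apply, h, if_false]
  split_ifs <;> simp

theorem abs_ground {n : ℕ} (A : Matrix (Fin n) (Fin n) ℝ) (hA : A.IsHermitian)
    (hoff : ∀ i j, i ≠ j → A i j ≤ 0) (l : ℝ) (hl : ∀ μ, IsEigen A μ → l ≤ μ)
    (v : Fin n → ℝ) (hv : A.mulVec v = l • v) :
    A.mulVec (fun i => |v i|) = l • (fun i => |v i|) := by
  set B : Matrix (Fin n) (Fin n) ℝ := A - l • (1 : Matrix (Fin n) (Fin n) ℝ) with hB
  have hBm : ∀ x, B.mulVec x = A.mulVec x - l • x := by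
    intro x; rw [hB, Matrix.sub_mulVec, Matrix.smul_mulVec, Matrix.one_mulVec]
  have hBh : B.IsHermitian := by
    apply hA.sub
    ext i j
    simp [Matrix.one_apply, eq_comm]
  have hps : B.PosSemidef := by
    rw [hBh.posSemidef_iff_eigenvalues_nonneg]
    intro i
    have h1 := hBh.mulVec_eigenvectorBasis i
    rw [hBm] at h1
    have h2 := hl (l + hBh.eigenvalues i) ⟨_, ?_, by
      rw [add_smul, ← sub_eq_iff_eq_add']; exact h1⟩
    · simpa using h2
    · have := hBh.eigenvectorBasis.orthonormal.ne_zero i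
      intro h0
      apply this
      ext k
      exact congrFun h0 k
  have hz : B.mulVec v = 0 := by rw [hBm, hv, sub_self]
  have hq : ∀ x : Fin n → ℝ, star x ⬝ᵥ B.mulVec x = ∑ i, ∑ j, B i j * (x i * x j) := by
    intro x
    simp only [dotProduct, Matrix.mulVec, Finset.mul_sum, star_trivial]
    refine Finset.sum_congr rfl fun i _ => Finset.sum_congr rfl fun j _ => by
      ring
  have h0 : star (fun i => |v i|) ⬝ᵥ B.mulVec (fun i => |v i|) = 0 := by
    apply le_antisymm
    · have h3 : star v ⬝ᵥ B.mulVec v = 0 := by rw [hz]; simp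
      rw [← h3, hq, hq]
      refine Finset.sum_le_sum fun i _ => Finset.sum_le_sum fun j _ => ?_
      by_cases hij : i = j
      · subst hij
        simp
      · have : B i j ≤ 0 := by
          simp [hB, Matrix.one_apply, hij]; exact hoff i j hij
        rw [← abs_mul]
        exact mul_le_mul_of_nonpos_left (le_abs_self _) this
    · exact hps.dotProduct_mulVec_nonneg _
  rw [hps.dotProduct_mulVec_zero_iff] at h0
  rw [hBm] at h0
  exact sub_eq_zero.mp h0

/-- the eigenvalue equation after conjugation by `√C(N,m)` -/
def HypEq (N : ℕ) (w : ℕ → ℝ) (μ : ℝ) (f : ℕ → ℝ) : Prop :=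
  ∀ m, m ≤ N → ((N : ℝ) + w m) * f m - ((N : ℝ) - m) * f (m + 1) - (m : ℝ) * f (m - 1) = μ * f m

theorem choose_up (N m : ℕ) (hm : m ≤ N) :
    Real.sqrt (((m : ℝ) + 1) * ((N : ℝ) - m)) * Real.sqrt (N.choose (m + 1)) =
      ((N : ℝ) - m) * Real.sqrt (N.choose m) := by
  have hnn : (0 : ℝ) ≤ (N : ℝ) - m := by
    have : (m : ℝ) ≤ N := by exact_mod_cast hm
    linarith
  rw [← Real.sqrt_mul (by positivity)]
  have h := Nat.choose_succ_right_eq N m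
  have h' : (N.choose (m + 1) : ℝ) * (m + 1) = N.choose m * ((N : ℝ) - m) := by
    rw [← Nat.cast_sub hm]; exact_mod_cast h
  have : ((m : ℝ) + 1) * ((N : ℝ) - m) * (N.choose (m + 1)) = ((N : ℝ) - m) ^ 2 * N.choose m := by
    linear_combination ((N : ℝ) - m) * h'
  rw [this, Real.sqrt_mul (by positivity), Real.sqrt_sq hnn]

theorem choose_dn (N m : ℕ) (hm : m ≤ N) :
    Real.sqrt ((m : ℝ) * ((N : ℝ) + 1 - m)) * Real.sqrt (N.choose (m - 1)) =
      (m : ℝ) * Real.sqrt (N.choose m) := by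
  rcases m with _ | m
  · simp
  have hnn : (0 : ℝ) ≤ (N : ℝ) - m := by
    have : ((m + 1 : ℕ) : ℝ) ≤ N := by exact_mod_cast hm
    push_cast at this
    linarith
  simp only [Nat.add_sub_cancel]
  push_cast
  rw [← Real.sqrt_mul (by apply mul_nonneg <;> linarith [(Nat.cast_nonneg m : (0:ℝ) ≤ m)])]
  have h := Nat.choose_succ_right_eq N m
  have h' : (N.choose (m + 1) : ℝ) * (m + 1) = N.choose m * ((N : ℝ) - m) := by
    rw [← Nat.cast_sub (by omega)]; exact_mod_cast h
  have : ((m : ℝ) + 1) * ((N : ℝ) + 1 - (m + 1)) * (N.choose m) =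
      ((m : ℝ) + 1) ^ 2 * N.choose (m + 1) := by
    linear_combination - ((m : ℝ) + 1) * h'
  rw [this, Real.sqrt_mul (by positivity), Real.sqrt_sq (by positivity)]

theorem hj_row_conj (N : ℕ) (w f : ℕ → ℝ) (m : ℕ) (hm : m < N + 1) :
    (hypJ N w).mulVec (fun j => Real.sqrt (N.choose (j : ℕ)) * f (j : ℕ)) ⟨m, hm⟩ =
      Real.sqrt (N.choose m) *
      (((N : ℝ) + w m) * f m - ((N : ℝ) - m) * f (m + 1) - (m : ℝ) * f (m - 1)) := by
  have := hj_row N w (fun j => Real.sqrt (N.choose j) * f j) m hm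
  rw [this]
  linear_combination - f (m + 1) * choose_up N m (by omega) - f (m - 1) * choose_dn N m (by omega)

theorem sqrt_choose_pos (N m : ℕ) (hm : m ≤ N) : 0 < Real.sqrt (N.choose m) := by
  apply Real.sqrt_pos.mpr
  exact_mod_cast Nat.choose_pos hm

theorem isEigen_of_heq (N : ℕ) (w f : ℕ → ℝ) (μ : ℝ) (hf : HypEq N w μ f) (m : ℕ) (hm : m ≤ N)
    (h0 : f m ≠ 0) : IsEigen (hypJ N w) μ := by
  refine ⟨fun j => Real.sqrt (N.choose (j : ℕ)) * f (j : ℕ), ?_, ?_⟩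
  · intro h
    have := congrFun h ⟨m, by omega⟩
    simp only [Pi.zero_apply] at this
    exact (mul_ne_zero (sqrt_choose_pos N m hm).ne' h0) this
  · ext ⟨i, hi⟩
    rw [hj_row_conj, hf i (by omega)]
    simp only [Pi.smul_apply, smul_eq_mul]
    ring

theorem heq_of_vec (N : ℕ) (w : ℕ → ℝ) (μ : ℝ) (v : Fin (N + 1) → ℝ)
    (hv : (hypJ N w).mulVec v = μ • v) :
    ∃ f : ℕ → ℝ, HypEq N w μ f ∧
      ∀ (m : ℕ) (hm : m < N + 1), v ⟨m, hm⟩ = Real.sqrt (N.choose m) * f m := by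
  let f : ℕ → ℝ := fun m => if hm : m < N + 1 then v ⟨m, hm⟩ / Real.sqrt (N.choose m) else 0
  have hfv : ∀ (m : ℕ) (hm : m < N + 1), v ⟨m, hm⟩ = Real.sqrt (N.choose m) * f m := by
    intro m hm
    have := sqrt_choose_pos N m (by omega)
    simp only [f, hm, dif_pos]
    field_simp
  refine ⟨f, ?_, hfv⟩
  have hve : v = fun j : Fin (N + 1) => Real.sqrt (N.choose (j : ℕ)) * f (j : ℕ) := by
    ext ⟨j, hj⟩; exact hfv j hj
  intro m hm
  have h1 := congrFun hv ⟨m, by omega⟩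
  rw [hve, hj_row_conj] at h1
  simp only [Pi.smul_apply, smul_eq_mul] at h1
  have := sqrt_choose_pos N m hm
  apply mul_left_cancel₀ this.ne'
  rw [h1]; ring

theorem heq_pos (N : ℕ) (w : ℕ → ℝ) (μ : ℝ) (f : ℕ → ℝ) (hf : HypEq N w μ f)
    (hnn : ∀ m ≤ N, 0 ≤ f m) (k : ℕ) (hk : k ≤ N) (hk0 : f k ≠ 0) : ∀ m ≤ N, 0 < f m := by
  have nb : ∀ m ≤ N, f m = 0 → ((m + 1 ≤ N → f (m + 1) = 0) ∧ (f (m - 1) = 0)) := by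
    intro m hm h0
    have h := hf m hm
    rw [h0] at h
    have hmN : (m : ℝ) ≤ N := by exact_mod_cast hm
    have hp : 0 ≤ ((N : ℝ) - m) * f (m + 1) := by
      rcases Nat.lt_or_ge m N with h1 | h1
      · exact mul_nonneg (by linarith) (hnn _ h1)
      · have : m = N := le_antisymm hm h1
        subst this; simp
    have hq : 0 ≤ (m : ℝ) * f (m - 1) := mul_nonneg (by positivity) (hnn _ (by omega))
    constructor
    · intro h1
      have h2 : ((N : ℝ) - m) * f (m + 1) = 0 := by linarith
      have h3 : (m : ℝ) + 1 ≤ N := by exact_mod_cast h1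
      rcases mul_eq_zero.mp h2 with h4 | h4
      · linarith
      · exact h4
    · have h2 : (m : ℝ) * f (m - 1) = 0 := by linarith
      rcases mul_eq_zero.mp h2 with h4 | h4
      · have : m = 0 := by exact_mod_cast h4
        subst this; exact h0
      · exact h4
  intro m hm
  refine lt_of_le_of_ne (hnn m hm) fun h0 => hk0 ?_
  have down : ∀ j, f (m - j) = 0 := by
    intro j
    induction j with
    | zero => exact h0.symm
    | succ j ih => exact (nb _ (by omega) ih).2
  have hz : f 0 = 0 := by simpa using down m
  have up : ∀ j, j ≤ N → f j = 0 := by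
    intro j
    induction j with
    | zero => intro _; exact hz
    | succ j ih => intro h; exact (nb j (by omega) (ih (by omega))).1 h
  exact up k hk

theorem ground_pos (N : ℕ) (w : ℕ → ℝ) (l : ℝ) (he : IsEigen (hypJ N w) l)
    (hl : ∀ μ, IsEigen (hypJ N w) μ → l ≤ μ) :
    ∃ f : ℕ → ℝ, HypEq N w l f ∧ ∀ m ≤ N, 0 < f m := by
  obtain ⟨v, hv0, hv⟩ := he
  have ha := abs_ground _ (hj_symm N w) (hj_off N w) l hl v hv
  obtain ⟨f, hf, hfv⟩ := heq_of_vec N w l _ ha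
  refine ⟨f, hf, ?_⟩
  obtain ⟨⟨k, hk⟩, hkv⟩ := Function.ne_iff.mp hv0
  refine heq_pos N w l f hf ?_ k (by omega) ?_
  · intro m hm
    have h1 := hfv m (by omega)
    have h2 := sqrt_choose_pos N m hm
    by_contra h3
    push Not at h3
    have := mul_neg_of_pos_of_neg h2 h3
    have h5 := abs_nonneg (v ⟨m, by omega⟩)
    linarith
  · intro h0
    have h1 := hfv k hk
    rw [h0, mul_zero] at h1
    exact hkv (abs_eq_zero.mp h1)

/-- monotonicity of the ratios of the ground state -/
theorem ratio_anti (N : ℕ) (E s : ℕ → ℝ)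
    (hE : ∀ m : ℕ, m + 2 ≤ N → E (m + 1) - E m ≤ E (m + 2) - E (m + 1))
    (hs : ∀ m, m < N → 0 < s m)
    (hrec : ∀ m, m ≤ N → ((N : ℝ) - m) * s m + (m : ℝ) / s (m - 1) = E m) :
    ∀ m, m + 2 ≤ N → s (m + 1) ≤ s m := by
  by_contra hcon
  push Not at hcon
  classical
  have hk := Nat.find_spec hcon
  set k := Nat.find hcon with hkdef
  obtain ⟨hkN, hkt⟩ := hk
  have hmin : ∀ j, j < k → s (j + 1) ≤ s j := by
    intro j hj
    have := Nat.find_min hcon hj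
    push Not at this
    exact this (by omega)
  have hinv : ∀ x y : ℝ, 0 < x → x ≤ y → 1 / y ≤ 1 / x := fun x y hx hxy =>
    one_div_le_one_div_of_le hx hxy
  -- the quantity `A_m - B_m`
  let Q : ℕ → ℝ := fun m => ((N : ℝ) - m - 1) * (s (m + 1) - s m)
    - (m : ℝ) * (1 / s (m - 1) - 1 / s m)
  have hD : ∀ m, m + 1 ≤ N → E (m + 1) - E m = 1 / s m - s m + Q m := by
    intro m hm
    have h1 := hrec m (by omega)
    have h2 := hrec (m + 1) hm
    simp only [Nat.add_sub_cancel] at h2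
    push_cast at h2
    simp only [Q]
    rw [← h1, ← h2]
    ring
  have hQk : 0 < Q k := by
    have hkN' : (k : ℝ) + 2 ≤ N := by exact_mod_cast hkN
    have h1 : 0 < ((N : ℝ) - k - 1) * (s (k + 1) - s k) :=
      mul_pos (by linarith) (by linarith)
    have h2 : (k : ℝ) * (1 / s (k - 1) - 1 / s k) ≤ 0 := by
      rcases Nat.eq_zero_or_pos k with h0 | h0
      · simp [h0]
      · have h3 := hmin (k - 1) (by omega)
        rw [Nat.sub_add_cancel h0] at h3
        have h4 := hinv _ _ (hs k (by omega)) h3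
        exact mul_nonpos_of_nonneg_of_nonpos (by positivity) (by linarith)
    simp only [Q]; linarith
  have hind : ∀ j, k + j + 2 ≤ N → s (k + j) < s (k + j + 1) ∧ 0 < Q (k + j) ∧
      0 < Q (k + j + 1) := by
    have step : ∀ m, m + 2 ≤ N → s m < s (m + 1) → 0 < Q m → 0 < Q (m + 1) := by
      intro m hm h1 h2
      have h3 := hE m hm
      have h4 := hD m (by omega)
      have h5 := hD (m + 1) hm
      have h6 := hinv _ _ (hs m (by omega)) h1.le
      have h7 : E (m + 2) - E (m + 1) = 1 / s (m + 1) - s (m + 1) + Q (m + 1) := h5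
      linarith
    intro j
    induction j with
    | zero => intro h; exact ⟨hkt, hQk, step k hkN hkt hQk⟩
    | succ j ih =>
      intro h
      obtain ⟨i1, i2, i3⟩ := ih (by omega)
      have hlt : s (k + j + 1) < s (k + j + 1 + 1) := by
        have h6 := hinv _ _ (hs (k + j) (by omega)) i1.le
        have h7 : 0 ≤ ((k + j + 1 : ℕ) : ℝ) * (1 / s (k + j) - 1 / s (k + j + 1)) :=
          mul_nonneg (by positivity) (by linarith)
        simp only [Q, Nat.add_sub_cancel] at i3
        have h8 : (0 : ℝ) < (N : ℝ) - ((k + j + 1 : ℕ) : ℝ) - 1 := by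
          have : ((k + j + 1 + 2 : ℕ) : ℝ) ≤ N := by exact_mod_cast (by omega)
          push_cast at this ⊢; linarith
        by_contra hc
        push Not at hc
        have h9 := mul_nonpos_of_nonneg_of_nonpos h8.le
          (by linarith : s (k + j + 1 + 1) - s (k + j + 1) ≤ 0)
        linarith
      exact ⟨hlt, i3, step _ (by omega) hlt i3⟩
  obtain ⟨i1, i2, i3⟩ := hind (N - 2 - k) (by omega)
  have e : k + (N - 2 - k) = N - 2 := by omega
  rw [e] at i1 i3
  have h6 := hinv _ _ (hs (N - 2) (by omega)) i1.le
  simp only [Q, Nat.add_sub_cancel] at i3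
  have h7 : 0 ≤ ((N - 2 + 1 : ℕ) : ℝ) * (1 / s (N - 2) - 1 / s (N - 2 + 1)) :=
    mul_nonneg (by positivity) (by linarith)
  have h8 : (N : ℝ) - ((N - 2 + 1 : ℕ) : ℝ) - 1 = 0 := by
    have : ((N - 2 + 1 + 1 : ℕ) : ℝ) = N := by congr 1; omega
    push_cast at this ⊢; linarith
  rw [h8] at i3
  linarith

/-- maximum principle for differences -/
theorem gap_of_ratio (N : ℕ) (s F : ℕ → ℝ) (γ : ℝ) (hγ : 0 < γ)
    (hs : ∀ m, m < N → 0 < s m)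
    (hanti : ∀ m, m + 2 ≤ N → s (m + 1) ≤ s m)
    (hF : ∀ m, m ≤ N → ((N : ℝ) - m) * s m * (F (m + 1) - F m)
      - (m : ℝ) / s (m - 1) * (F m - F (m - 1)) = - γ * F m)
    (k : ℕ) (hk : k ≤ N) (hk0 : F k ≠ 0) : 2 ≤ γ := by
  have hN : 0 < N := by
    rcases Nat.eq_zero_or_pos N with h | h
    · subst h
      obtain rfl : k = 0 := by omega
      have := hF 0 le_rfl
      simp at this
      rcases this with h | h
      · linarith
      · exact absurd h hk0
    · exact h
  let d : ℕ → ℝ := fun m => F (m + 1) - F m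
  obtain ⟨m, hmr, hmax⟩ := Finset.exists_max_image (Finset.range N) (fun m => |d m|)
    ⟨0, by simpa using hN⟩
  have hmN : m < N := by simpa using hmr
  have hmax' : ∀ j, j < N → |d j| ≤ |d m| := fun j hj => hmax j (by simpa using hj)
  have hd0 : 0 < |d m| := by
    rcases (abs_nonneg (d m)).lt_or_eq with h | h
    · exact h
    · exfalso
      have hz : ∀ j, j < N → d j = 0 := by
        intro j hj
        have := hmax' j hj
        rw [← h] at this
        exact abs_eq_zero.mp (le_antisymm this (abs_nonneg _))
      have h1 := hF k hk
      have h2 : ((N : ℝ) - k) * s k * (F (k + 1) - F k) = 0 := by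
        rcases Nat.lt_or_ge k N with h3 | h3
        · have : F (k + 1) - F k = 0 := hz k h3
          rw [this]; ring
        · have : k = N := le_antisymm hk h3
          rw [this]; ring
      have h3 : (k : ℝ) / s (k - 1) * (F k - F (k - 1)) = 0 := by
        rcases Nat.eq_zero_or_pos k with h3 | h3
        · simp [h3]
        · have := hz (k - 1) (by omega)
          simp only [d, Nat.sub_add_cancel h3] at this
          rw [this]; ring
      rw [h2, h3] at h1
      have : γ * F k = 0 := by linarith
      rcases mul_eq_zero.mp this with h | h
      · linarith
      · exact hk0 h
  have hmR : (m : ℝ) + 1 ≤ N := by exact_mod_cast hmN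
  have h1 := hF m hmN.le
  have h2 := hF (m + 1) hmN
  simp only [Nat.add_sub_cancel] at h2
  push_cast at h2
  have hsm := hs m hmN
  -- the identity for differences
  have hid : (((m : ℝ) + 1) / s m + ((N : ℝ) - m) * s m - γ) * d m =
      ((N : ℝ) - (m + 1)) * s (m + 1) * d (m + 1) + (m : ℝ) / s (m - 1) * (F m - F (m - 1)) := by
    simp only [d]
    linear_combination h1 - h2
  have hP : ((N : ℝ) - (m + 1)) * s (m + 1) * (d (m + 1) * d m) ≤
      ((N : ℝ) - (m + 1)) * s m * (d m) ^ 2 := by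
    rcases Nat.lt_or_ge (m + 1) N with h3 | h3
    · have ha := hanti m h3
      have hb : d (m + 1) * d m ≤ (d m) ^ 2 := by
        calc d (m + 1) * d m ≤ |d (m + 1) * d m| := le_abs_self _
          _ = |d (m + 1)| * |d m| := abs_mul _ _
          _ ≤ |d m| * |d m| := mul_le_mul_of_nonneg_right (hmax' _ h3) (abs_nonneg _)
          _ = (d m) ^ 2 := by rw [← sq, sq_abs]
      have hc := hs (m + 1) h3
      have h5 : (0 : ℝ) ≤ (N : ℝ) - (m + 1) := by linarith
      calc _ ≤ ((N : ℝ) - (m + 1)) * s (m + 1) * (d m) ^ 2 :=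
            mul_le_mul_of_nonneg_left hb (mul_nonneg h5 hc.le)
        _ ≤ _ := mul_le_mul_of_nonneg_right (mul_le_mul_of_nonneg_left ha h5) (sq_nonneg _)
    · have : m + 1 = N := by omega
      have : (N : ℝ) - (m + 1) = 0 := by rw [← this]; push_cast; ring
      rw [this]; simp
  have hQ : (m : ℝ) / s (m - 1) * ((F m - F (m - 1)) * d m) ≤ (m : ℝ) / s m * (d m) ^ 2 := by
    rcases Nat.eq_zero_or_pos m with h3 | h3
    · simp [h3]
    · have ha := hanti (m - 1) (by omega)
      rw [Nat.sub_add_cancel h3] at ha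
      have hdd : d (m - 1) = F m - F (m - 1) := by simp only [d, Nat.sub_add_cancel h3]
      rw [← hdd]
      have hb : d (m - 1) * d m ≤ (d m) ^ 2 := by
        calc d (m - 1) * d m ≤ |d (m - 1) * d m| := le_abs_self _
          _ = |d (m - 1)| * |d m| := abs_mul _ _
          _ ≤ |d m| * |d m| := mul_le_mul_of_nonneg_right (hmax' _ (by omega)) (abs_nonneg _)
          _ = (d m) ^ 2 := by rw [← sq, sq_abs]
      have hc := hs (m - 1) (by omega)
      calc _ ≤ (m : ℝ) / s (m - 1) * (d m) ^ 2 :=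
            mul_le_mul_of_nonneg_left hb (by positivity)
        _ ≤ _ := mul_le_mul_of_nonneg_right
            (div_le_div_of_nonneg_left (by positivity) hsm ha) (sq_nonneg _)
  have hd2 : 0 < (d m) ^ 2 := by rw [← sq_abs]; positivity
  have hfin : (1 / s m + s m - γ) * (d m) ^ 2 ≤ 0 := by
    have : (((m : ℝ) + 1) / s m + ((N : ℝ) - m) * s m - γ) * (d m) ^ 2 ≤
        ((N : ℝ) - (m + 1)) * s m * (d m) ^ 2 + (m : ℝ) / s m * (d m) ^ 2 := by
      calc _ = ((((m : ℝ) + 1) / s m + ((N : ℝ) - m) * s m - γ) * d m) * d m := by ring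
        _ = ((N : ℝ) - (m + 1)) * s (m + 1) * (d (m + 1) * d m) +
            (m : ℝ) / s (m - 1) * ((F m - F (m - 1)) * d m) := by rw [hid]; ring
        _ ≤ _ := add_le_add hP hQ
    have e : (1 / s m + s m - γ) * (d m) ^ 2 =
      (((m : ℝ) + 1) / s m + ((N : ℝ) - m) * s m - γ) * (d m) ^ 2 -
        (((N : ℝ) - (m + 1)) * s m * (d m) ^ 2 + (m : ℝ) / s m * (d m) ^ 2) := by ring
    linarith
  have h9 : 1 / s m + s m - γ ≤ 0 := by
    by_contra hc
    push Not at hc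
    have := mul_pos hc hd2
    linarith
  have h10 : 2 ≤ 1 / s m + s m := by
    have : 1 / s m + s m - 2 = (s m - 1) ^ 2 / s m := by field_simp; ring
    have h11 : 0 ≤ (s m - 1) ^ 2 / s m := by positivity
    linarith
  linarith

theorem gap_ge_two (N : ℕ) (w : ℕ → ℝ)
    (hw : ∀ m : ℕ, 1 ≤ m → m < N → 0 ≤ w (m - 1) - 2 * w m + w (m + 1))
    (l1 l2 : ℝ) (h : TwoSmallest (hypJ N w) l1 l2) : 2 ≤ l2 - l1 := by
  obtain ⟨he1, ⟨v, hv0, hv⟩, hlt, hmin⟩ := h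
  obtain ⟨u, hu, hupos⟩ := ground_pos N w l1 he1 (fun μ hμ => (hmin μ hμ).1)
  obtain ⟨f, hf, hfv⟩ := heq_of_vec N w l2 v hv
  obtain ⟨⟨k, hk⟩, hkv⟩ := Function.ne_iff.mp hv0
  have hfk : f k ≠ 0 := by
    intro h0
    apply hkv
    rw [hfv k hk, h0]; simp
  have hspos : ∀ m, m < N → 0 < u (m + 1) / u m := fun m hm =>
    div_pos (hupos _ hm) (hupos _ hm.le)
  have hrec : ∀ m, m ≤ N → ((N : ℝ) - m) * (u (m + 1) / u m) +
      (m : ℝ) / (u (m - 1 + 1) / u (m - 1)) = (N : ℝ) + w m - l1 := by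
    intro m hm
    have h1 := hu m hm
    have h2 := hupos m hm
    have h3 : (m : ℝ) / (u (m - 1 + 1) / u (m - 1)) = m * u (m - 1) / u m := by
      rcases Nat.eq_zero_or_pos m with h | h
      · simp [h]
      · rw [Nat.sub_add_cancel h, div_div_eq_mul_div]
    rw [h3]
    field_simp
    linarith
  refine gap_of_ratio N (fun m => u (m + 1) / u m) (fun m => f m / u m) (l2 - l1)
    (by linarith) hspos ?_ ?_ k (by omega) (div_ne_zero hfk (hupos k (by omega)).ne')
  · refine ratio_anti N (fun m => (N : ℝ) + w m - l1) _ ?_ hspos hrec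
    intro m hm
    have := hw (m + 1) (by omega) (by omega)
    simp only [Nat.add_sub_cancel] at this
    have e : w (m + 1 + 1) = w (m + 2) := rfl
    rw [e] at this
    linarith
  · intro m hm
    have h2 := hupos m hm
    have hf1 := hf m hm
    have hu1 := hu m hm
    have a1 : ((N : ℝ) - m) * (u (m + 1) / u m) * (f (m + 1) / u (m + 1) - f m / u m) =
        ((N : ℝ) - m) * (f (m + 1) / u m - u (m + 1) * f m / (u m) ^ 2) := by
      rcases Nat.lt_or_ge m N with h3 | h3
      · have h4 := hupos (m + 1) h3
        field_simp
      · have : m = N := le_antisymm hm h3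
        rw [this]; ring
    have a2 : (m : ℝ) / (u (m - 1 + 1) / u (m - 1)) * (f m / u m - f (m - 1) / u (m - 1)) =
        (m : ℝ) * (f m * u (m - 1) / (u m) ^ 2 - f (m - 1) / u m) := by
      rcases Nat.eq_zero_or_pos m with h3 | h3
      · simp [h3]
      · rw [Nat.sub_add_cancel h3]
        have h4 := hupos (m - 1) (by omega)
        field_simp
    rw [a1, a2]
    field_simp
    linear_combination f m * hu1 - u m * hf1

theorem free_gap (N : ℕ) (hN : 1 ≤ N) (m1 m2 : ℝ)
    (h : TwoSmallest (hypJ N (fun _ => 0)) m1 m2) : m2 - m1 ≤ 2 := by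
  obtain ⟨he1, -, hlt, hmin⟩ := h
  obtain ⟨u, hu, hupos⟩ := ground_pos N _ m1 he1 (fun μ hμ => (hmin μ hμ).1)
  have e0 : IsEigen (hypJ N (fun _ => 0)) 0 := by
    refine isEigen_of_heq N _ (fun _ => 1) 0 ?_ 0 (Nat.zero_le _) one_ne_zero
    intro m hm; simp
  have e2 : IsEigen (hypJ N (fun _ => 0)) 2 := by
    refine isEigen_of_heq N _ (fun m => (N : ℝ) - 2 * m) 2 ?_ 0 (Nat.zero_le _) ?_
    · intro m hm
      rcases m with _ | m
      · simp; ring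
      · simp only [Nat.add_sub_cancel]; push_cast; ring
    · simp; omega
  have hle : m1 ≤ 0 := (hmin 0 e0).1
  have hge : 0 ≤ m1 := by
    obtain ⟨m, hmr, hmax⟩ := Finset.exists_max_image (Finset.range (N + 1)) u ⟨0, by simp⟩
    have hm : m ≤ N := by simp at hmr; omega
    have h1 := hu m hm
    have hmR : (m : ℝ) ≤ N := by exact_mod_cast hm
    have h2 : 0 ≤ ((N : ℝ) - m) * (u m - u (m + 1)) := by
      rcases Nat.lt_or_ge m N with h3 | h3
      · have := hmax (m + 1) (by simp; omega)
        exact mul_nonneg (by linarith) (by linarith)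
      · have : m = N := le_antisymm hm h3
        rw [this]; simp
    have h3 : 0 ≤ (m : ℝ) * (u m - u (m - 1)) := by
      have := hmax (m - 1) (by simp; omega)
      exact mul_nonneg (by positivity) (by linarith)
    have h4 : 0 ≤ m1 * u m := by rw [← h1]; linarith
    exact nonneg_of_mul_nonneg_left h4 (hupos m hm)
  have hz : m1 = 0 := le_antisymm hle hge
  have := (hmin 2 e2).2 (by rw [hz]; norm_num)
  linarith

/-- for every convex `w` on `{0,…,N}` there is a linear potential
`w' m = a * m + b` with `Γ(J_w) ≥ Γ(J_{w'})`. -/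
theorem hypercube_convex_ge_linear (N : ℕ) (hN : 1 ≤ N) (w : ℕ → ℝ)
    (hw : ∀ m : ℕ, 1 ≤ m → m < N → 0 ≤ w (m - 1) - 2 * w m + w (m + 1))
    (l1 l2 : ℝ) (h : TwoSmallest (hypJ N w) l1 l2) :
    ∃ a b : ℝ, ∀ m1 m2 : ℝ,
      TwoSmallest (hypJ N (fun m => a * (m : ℝ) + b)) m1 m2 →
      l2 - l1 ≥ m2 - m1 := by
  refine ⟨0, 0, fun m1 m2 hm => ?_⟩
  have h1 := gap_ge_two N w hw l1 l2 h
  have e : (fun m : ℕ => (0 : ℝ) * (m : ℝ) + 0) = fun _ => 0 := by ext m; simp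
  rw [e] at hm
  have h2 := free_gap N hN m1 m2 hm
  linarith
end
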